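/- arXiv:1809.04888 — 2 statements merged into one kernel-verified Lean document; each statement's English description precedes it below -/
import Mathlib

section
/- Let A be a subset of the prime numbers whose natural density in the primes exists and equals θ ∈ (0,1]. Then the limit as N → ∞ of the ratio (∑_{n ≥ 1 : every prime factor of n is ≤ N and lies in A} 1/n) / (∑_{1 ≤ n ≤ N : every prime factor of n lies in A} 1/n) equals e^{γθ} · Γ(θ+1). -/
open Filter
open scoped Classical

/-- The sum of `1/n` over positive integers `n` all of whose prime factors lie in the
set described by the predicate `P`. -/
noncomputable def harmSum (P : ℕ → Prop) : ℝ :=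
  ∑' n : {n : ℕ // 0 < n ∧ ∀ p : ℕ, p.Prime → p ∣ n → P p}, (1 : ℝ) / ((n : ℕ) : ℝ)

/-!
Write `R_A(x) = ∑ 1/p` over the `p ∈ A` with `log p ≤ x`. By Mertens' estimate for all primes and
partial summation, density `θ` gives `R_A(v * x) - R_A(x) → θ * log v`. Let `L(x)` be the Dirichlet
series `∑ n ^ (-(1 + 1 / x))` over the integers with all prime factors in `A`; by the Euler product
`log L(x)` is, up to a convergent remainder, the smoothed sum `∫ exp (-v) * R_A(v * x) dv`.

* Since `∫ exp (-v) * log v dv = -γ`, the smoothed sum is `R_A(x) - γ * θ + o(1)`. The finite Euler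
  product up to `N` has the sharp cutoff `R_A(log N)` and the same remainder, so its quotient by
  `L(log N)` tends to `exp (γ * θ)`.
* The same asymptotics show `L(v * x) / L(x) → v ^ θ`, so by Karamata's Tauberian theorem the
  partial sum up to `N`, divided by `L(log N)`, tends to `1 / Γ(θ + 1)`.

Karamata's theorem is proved by weak convergence: tilting the measure with Laplace transform `L` by
`exp (-(t / x))` and pushing it forward under `t ↦ exp (-(t / x))` gives laws on `[0, 1]` whose
`k`-th moments `L(x / (k + 1)) / L(x)` converge.
-/

section RegularVariation

/-- The function `f` is regularly varying at infinity with index `θ`, in the sense of Karamata. -/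
def IsRegularlyVarying (f : ℝ → ℝ) (θ : ℝ) : Prop :=
  ∀ v, 0 < v → Tendsto (fun x => f (v * x) / f x) atTop (nhds (v ^ θ))

/-- The function `g` is in de Haan's class `Π` with auxiliary function `1` and index `θ`: this is
regular variation of `exp ∘ g` with index `θ`, stated additively. -/
def IsDeHaan (g : ℝ → ℝ) (θ : ℝ) : Prop :=
  ∀ v, 0 < v → Tendsto (fun x => g (v * x) - g x) atTop (nhds (θ * Real.log v))

theorem IsDeHaan.nonneg {g : ℝ → ℝ} {θ : ℝ} (h : IsDeHaan g θ) (hg : Monotone g) : 0 ≤ θ := by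
  refine nonneg_of_mul_nonneg_left (ge_of_tendsto (h 2 two_pos) ?_) (Real.log_pos one_lt_two)
  filter_upwards [eventually_ge_atTop 0] with x hx
  exact sub_nonneg.2 (hg (by linarith))

end RegularVariation

section WeakConvergence

open MeasureTheory

variable {ι : Type*} {l : Filter ι}

theorem integrable_of_ae_mem_Icc {ρ : Measure ℝ} [IsFiniteMeasure ρ]
    {a b : ℝ} (hρ : ∀ᵐ y ∂ρ, y ∈ Set.Icc a b) {f : ℝ → ℝ} (hf : Continuous f) :
    Integrable f ρ := by
  obtain ⟨C, hC⟩ := isCompact_Icc.exists_bound_of_continuousOn (s := Set.Icc a b) hf.continuousOn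
  exact .of_bound hf.aestronglyMeasurable C (hρ.mono hC)

theorem tendsto_integral_polynomial {ρ : ι → Measure ℝ}
    {ρ₀ : Measure ℝ} (hρ : ∀ i k, Integrable (· ^ k) (ρ i))
    (hρ₀ : ∀ k, Integrable (· ^ k) ρ₀)
    (hmoment : ∀ k : ℕ, Tendsto (fun i => ∫ y, y ^ k ∂ρ i) l (nhds (∫ y, y ^ k ∂ρ₀)))
    (q : Polynomial ℝ) :
    Tendsto (fun i => ∫ y, q.eval y ∂ρ i) l (nhds (∫ y, q.eval y ∂ρ₀)) := by
  have hval : ∀ κ : Measure ℝ, (∀ k, Integrable (· ^ k) κ) →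
      ∫ y, q.eval y ∂κ = ∑ k ∈ Finset.range (q.natDegree + 1), q.coeff k * ∫ y, y ^ k ∂κ := by
    intro κ hκ
    simp_rw [Polynomial.eval_eq_sum_range]
    rw [integral_finsetSum _ fun k _ => (hκ k).const_mul _]
    simp_rw [integral_const_mul]
  simp_rw [hval _ (hρ _), hval _ hρ₀]
  exact tendsto_finsetSum _ fun k _ => (hmoment k).const_mul _

theorem tendsto_integral_of_tendsto_moments {ρ : ι → Measure ℝ}
    {ρ₀ : Measure ℝ} [∀ i, IsProbabilityMeasure (ρ i)]
    [IsProbabilityMeasure ρ₀] {a b : ℝ} (hρ : ∀ i, ∀ᵐ y ∂ρ i, y ∈ Set.Icc a b)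
    (hρ₀ : ∀ᵐ y ∂ρ₀, y ∈ Set.Icc a b)
    (hmoment : ∀ k : ℕ, Tendsto (fun i => ∫ y, y ^ k ∂ρ i) l (nhds (∫ y, y ^ k ∂ρ₀)))
    {f : ℝ → ℝ} (hf : Continuous f) :
    Tendsto (fun i => ∫ y, f y ∂ρ i) l (nhds (∫ y, f y ∂ρ₀)) := by
  rw [Metric.tendsto_nhds]
  intro ε hε
  obtain ⟨q, hq⟩ := exists_polynomial_near_of_continuousOn a b f hf.continuousOn (ε / 3)
    (by positivity)
  have hclose : ∀ κ : Measure ℝ, IsProbabilityMeasure κ →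
      (∀ᵐ y ∂κ, y ∈ Set.Icc a b) → |∫ y, q.eval y ∂κ - ∫ y, f y ∂κ| ≤ ε / 3 := by
    intro κ _ hκ
    rw [← integral_sub (integrable_of_ae_mem_Icc hκ q.continuous)
      (integrable_of_ae_mem_Icc hκ hf)]
    simpa using norm_integral_le_of_norm_le_const (μ := κ)
      (f := fun y => q.eval y - f y) (hκ.mono fun y hy => (hq y hy).le)
  have hpoly := tendsto_integral_polynomial
    (fun i k => integrable_of_ae_mem_Icc (hρ i) (continuous_pow k))
    (fun k => integrable_of_ae_mem_Icc hρ₀ (continuous_pow k)) hmoment q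
  filter_upwards [Metric.tendsto_nhds.1 hpoly (ε / 3) (by positivity)] with i hi
  rw [Real.dist_eq, abs_lt] at hi ⊢
  have hleft := abs_le.1 (hclose (ρ i) inferInstance (hρ i))
  have hright := abs_le.1 (hclose ρ₀ inferInstance hρ₀)
  constructor <;> linarith

variable {X : Type*} [TopologicalSpace X] [HasOuterApproxClosed X] [MeasurableSpace X]
  [BorelSpace X] {ρ : ι → Measure X} {ρ₀ : Measure X}
  [∀ i, IsFiniteMeasure (ρ i)] [IsFiniteMeasure ρ₀]
  {E : Set X}

theorem eventually_setIntegral_lt_of_isClosed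
    (hρ : ∀ f : BoundedContinuousFunction X NNReal,
      Tendsto (fun i => ∫ y, (f y : ℝ) ∂ρ i) l (nhds (∫ y, (f y : ℝ) ∂ρ₀)))
    (h : BoundedContinuousFunction X NNReal) (hE : IsClosed E) {c : ℝ}
    (hc : ∫ y in E, (h y : ℝ) ∂ρ₀ < c) :
    ∀ᶠ i in l, ∫ y in E, (h y : ℝ) ∂ρ i < c := by
  have happrox : Tendsto (fun n => ∫ y, ((h * hE.apprSeq n) y : ℝ) ∂ρ₀) atTop
      (nhds (∫ y in E, (h y : ℝ) ∂ρ₀)) := by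
    rw [← integral_indicator hE.measurableSet]
    refine tendsto_integral_of_dominated_convergence (fun y => (h y : ℝ))
      (fun n => by fun_prop) (h.integrable_of_nnreal ρ₀) (fun n => .of_forall fun y => ?_)
      (.of_forall fun y => ?_)
    · simpa using mul_le_of_le_one_right (h y).2
        (by exact_mod_cast HasOuterApproxClosed.apprSeq_apply_le_one hE n y)
    · have hy := tendsto_pi_nhds.1 (HasOuterApproxClosed.tendsto_apprSeq hE) y
      have := (NNReal.tendsto_coe.2 (hy.const_mul (h y)))
      by_cases hyE : y ∈ E <;> simpa [hyE] using this
  obtain ⟨n, hn⟩ := (happrox.eventually_lt_const hc).exists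
  filter_upwards [(hρ (h * hE.apprSeq n)).eventually_lt_const hn] with i hi
  refine lt_of_le_of_lt ?_ hi
  rw [← integral_indicator hE.measurableSet]
  refine integral_mono ((h.integrable_of_nnreal (ρ i)).indicator hE.measurableSet)
    ((h * hE.apprSeq n).integrable_of_nnreal (ρ i)) fun y => ?_
  by_cases hyE : y ∈ E
  · simp [hyE, HasOuterApproxClosed.apprSeq_apply_eq_one hE n hyE]
  · simpa [hyE] using mul_nonneg (h y).2 (hE.apprSeq n y).2

theorem tendsto_setIntegral_of_measure_frontier_eq_zero
    (hρ : ∀ f : BoundedContinuousFunction X NNReal,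
      Tendsto (fun i => ∫ y, (f y : ℝ) ∂ρ i) l (nhds (∫ y, (f y : ℝ) ∂ρ₀)))
    (h : BoundedContinuousFunction X NNReal) (hE : IsClosed E) (hfrontier : ρ₀ (frontier E) = 0) :
    Tendsto (fun i => ∫ y in E, (h y : ℝ) ∂ρ i) l (nhds (∫ y in E, (h y : ℝ) ∂ρ₀)) := by
  have hint (κ : Measure X) [IsFiniteMeasure κ] :
      Integrable (fun y => (h y : ℝ)) κ := h.integrable_of_nnreal κ
  have hcompl : ∫ y in closure Eᶜ, (h y : ℝ) ∂ρ₀ = ∫ y in Eᶜ, (h y : ℝ) ∂ρ₀ := by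
    refine setIntegral_congr_set (closure_ae_eq_of_null_frontier ?_)
    rwa [frontier_compl]
  rw [tendsto_order]
  refine ⟨fun c hc => ?_, fun c hc => eventually_setIntegral_lt_of_isClosed hρ h hE hc⟩
  obtain ⟨d, hcd, hd⟩ := exists_between hc
  have hupper := eventually_setIntegral_lt_of_isClosed hρ h (isClosed_closure (s := Eᶜ))
    (c := ∫ y, (h y : ℝ) ∂ρ₀ - d) (by
      rw [hcompl, ← integral_add_compl hE.measurableSet (hint ρ₀)]; linarith)
  filter_upwards [hupper, (hρ h).eventually_const_lt (sub_lt_self _ (sub_pos.2 hcd))] with i hi hti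
  have hmono : ∫ y in Eᶜ, (h y : ℝ) ∂ρ i ≤ ∫ y in closure Eᶜ, (h y : ℝ) ∂ρ i :=
    setIntegral_mono_set (hint _).integrableOn (.of_forall fun y => (h y).2)
      (.of_forall subset_closure)
  rw [← integral_add_compl hE.measurableSet (hint (ρ i))] at hti
  linarith

end WeakConvergence

section Karamata

open MeasureTheory

variable {μ μ₀ : Measure ℝ} {x : ℝ}

/-- The Laplace transform of the measure `μ`, evaluated at `1 / x`. -/
noncomputable def measureLaplace (μ : Measure ℝ) (x : ℝ) : ℝ :=
  ∫ t, Real.exp (-(t / x)) ∂μ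

/-- The law of `exp (-(t / x))` when `t` is distributed according to `μ` with density proportional
to `exp (-(t / x))`. Its moments are ratios of values of the Laplace transform of `μ`. -/
noncomputable def expTiltLaw (μ : Measure ℝ) (x : ℝ) : Measure ℝ :=
  (μ.tilted fun t => -(t / x)).map fun t => Real.exp (-(t / x))

theorem aemeasurable_exp_neg_div (μ : Measure ℝ) (x : ℝ) :
    AEMeasurable (fun t => Real.exp (-(t / x))) μ := by
  fun_prop

theorem isProbabilityMeasure_expTiltLaw [NeZero μ]
    (hint : Integrable (fun t => Real.exp (-(t / x))) μ) :
    IsProbabilityMeasure (expTiltLaw μ x) :=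
  have := isProbabilityMeasure_tilted hint
  Measure.isProbabilityMeasure_map (aemeasurable_exp_neg_div _ x)

theorem ae_expTiltLaw_mem_Icc (hμ : ∀ᵐ t ∂μ, 0 ≤ t) (hx : 0 ≤ x) :
    ∀ᵐ y ∂expTiltLaw μ x, y ∈ Set.Icc (0 : ℝ) 1 := by
  refine (ae_map_iff (aemeasurable_exp_neg_div _ x) measurableSet_Icc).2 ?_
  filter_upwards [(tilted_absolutelyContinuous μ _).ae_le hμ] with t ht
  exact ⟨(Real.exp_pos _).le, Real.exp_le_one_iff.2 (neg_nonpos.2 (div_nonneg ht hx))⟩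

theorem integral_pow_expTiltLaw (μ : Measure ℝ) (x : ℝ) (k : ℕ) :
    ∫ y, y ^ k ∂expTiltLaw μ x = measureLaplace μ (x / (k + 1)) / measureLaplace μ x := by
  rw [expTiltLaw, integral_map (aemeasurable_exp_neg_div _ x) (by fun_prop),
    integral_tilted, measureLaplace, measureLaplace, ← integral_div]
  congr with t
  rw [smul_eq_mul, div_mul_eq_mul_div, ← Real.exp_nat_mul, ← Real.exp_add, div_div_eq_mul_div]
  ring_nf

theorem setIntegral_Ici_expTiltLaw (μ : Measure ℝ) (hx : 0 < x) :
    ∫ y in Set.Ici (Real.exp (-1)), (max y (Real.exp (-1)))⁻¹ ∂expTiltLaw μ x =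
      μ.real (Set.Iic x) / measureLaplace μ x := by
  have hpre : (fun t => Real.exp (-(t / x))) ⁻¹' Set.Ici (Real.exp (-1)) = Set.Iic x := by
    ext t
    rw [Set.mem_preimage, Set.mem_Ici, Real.exp_le_exp, neg_le_neg_iff, div_le_one hx, Set.mem_Iic]
  have hconst : ∀ t ∈ Set.Iic x, (Real.exp (-(t / x)) / measureLaplace μ x) •
      (max (Real.exp (-(t / x))) (Real.exp (-1)))⁻¹ = (measureLaplace μ x)⁻¹ := by
    intro t ht
    rw [max_eq_left (Real.exp_le_exp.2 (neg_le_neg ((div_le_one hx).2 ht))), smul_eq_mul,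
      div_mul_eq_mul_div, mul_inv_cancel₀ (Real.exp_pos _).ne', one_div]
  rw [expTiltLaw, setIntegral_map measurableSet_Ici (by fun_prop)
    (aemeasurable_exp_neg_div _ x), hpre, setIntegral_tilted' _ _ measurableSet_Iic,
    ← measureLaplace, setIntegral_congr_fun measurableSet_Iic hconst,
    setIntegral_const, smul_eq_mul, div_eq_mul_inv]

theorem expTiltLaw_singleton_eq_zero (hμ : μ {x} = 0) (hx : 0 < x) :
    expTiltLaw μ x {Real.exp (-1)} = 0 := by
  have hpre : (fun t => Real.exp (-(t / x))) ⁻¹' {Real.exp (-1)} = {x} := by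
    ext t
    simp [div_eq_one_iff_eq hx.ne']
  rw [expTiltLaw, Measure.map_apply_of_aemeasurable (aemeasurable_exp_neg_div _ x)
    (measurableSet_singleton _), hpre]
  exact tilted_absolutelyContinuous μ _ hμ

theorem exists_boundedContinuous_eq_max_inv {a : ℝ} (ha : 0 < a) :
    ∃ h : BoundedContinuousFunction ℝ NNReal, ∀ y, (h y : ℝ) = (max y a)⁻¹ := by
  have hpos : ∀ y, 0 < max y a := fun y => lt_max_of_lt_right ha
  have hcont : Continuous fun y => (max y a)⁻¹ :=
    (continuous_id.max continuous_const).inv₀ fun y => (hpos y).ne'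
  have hbound : ∀ y, ‖(max y a)⁻¹‖ ≤ a⁻¹ := fun y => by
    rw [Real.norm_of_nonneg (inv_pos.2 (hpos y)).le]
    exact inv_anti₀ ha (le_max_right y a)
  exact ⟨(BoundedContinuousFunction.ofNormedAddCommGroup _ hcont _ hbound).nnrealPart, fun y =>
    Real.coe_toNNReal _ (inv_pos.2 (hpos y)).le⟩

theorem tendsto_measureReal_Iic_div_measureLaplace [NeZero μ] [NeZero μ₀]
    (hμ : ∀ᵐ t ∂μ, 0 ≤ t) (hμ₀ : ∀ᵐ t ∂μ₀, 0 ≤ t)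
    (hint : ∀ x, 0 < x → Integrable (fun t => Real.exp (-(t / x))) μ)
    (hint₀ : Integrable (fun t => Real.exp (-(t / 1))) μ₀)
    (hratio : ∀ k : ℕ, Tendsto (fun x => measureLaplace μ (x / (k + 1)) / measureLaplace μ x) atTop
      (nhds (measureLaplace μ₀ (1 / (k + 1)) / measureLaplace μ₀ 1)))
    (hone : μ₀ {1} = 0) :
    Tendsto (fun x => μ.real (Set.Iic x) / measureLaplace μ x) atTop
      (nhds (μ₀.real (Set.Iic 1) / measureLaplace μ₀ 1)) := by
  have hprob : ∀ x : Set.Ioi (0 : ℝ), IsProbabilityMeasure (expTiltLaw μ x) :=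
    fun x => isProbabilityMeasure_expTiltLaw (hint x x.2)
  have hprob₀ : IsProbabilityMeasure (expTiltLaw μ₀ 1) :=
    isProbabilityMeasure_expTiltLaw hint₀
  obtain ⟨h, hh⟩ := exists_boundedContinuous_eq_max_inv (Real.exp_pos (-1))
  have hweak (f : BoundedContinuousFunction ℝ NNReal) :
      Tendsto (fun x : Set.Ioi (0 : ℝ) => ∫ y, (f y : ℝ) ∂expTiltLaw μ x) atTop
        (nhds (∫ y, (f y : ℝ) ∂expTiltLaw μ₀ 1)) := by
    refine tendsto_integral_of_tendsto_moments (fun x => ae_expTiltLaw_mem_Icc hμ (le_of_lt x.2))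
      (ae_expTiltLaw_mem_Icc hμ₀ zero_le_one) (fun k => ?_) (by fun_prop)
    simp_rw [integral_pow_expTiltLaw]
    exact tendsto_comp_val_Ioi_atTop.2 (hratio k)
  have hlim := tendsto_setIntegral_of_measure_frontier_eq_zero hweak h
    (isClosed_Ici (a := Real.exp (-1))) (by
      rw [frontier_Ici]
      exact expTiltLaw_singleton_eq_zero hone one_pos)
  simp_rw [hh] at hlim
  rw [setIntegral_Ici_expTiltLaw μ₀ one_pos] at hlim
  exact tendsto_comp_val_Ioi_atTop.1 (hlim.congr fun x => setIntegral_Ici_expTiltLaw μ x.2)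

end Karamata

section PowerMeasure

open MeasureTheory

variable {θ x : ℝ}

/-- The measure on `[0, ∞)` with distribution function `t ^ θ`, the limit law in Karamata's theorem.
For `θ = 0` it is the unit mass at `0`, which has no density. -/
noncomputable def powerMeasure (θ : ℝ) : Measure ℝ :=
  if θ = 0 then Measure.dirac 0
  else (volume.restrict (Set.Ioi 0)).withDensity
    fun t => ENNReal.ofReal (θ * t ^ (θ - 1))

theorem powerMeasure_zero : powerMeasure 0 = Measure.dirac 0 :=
  if_pos rfl

theorem powerMeasure_absolutelyContinuous (hθ : θ ≠ 0) :
    (powerMeasure θ).AbsolutelyContinuous (volume.restrict (Set.Ioi 0)) := by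
  rw [powerMeasure, if_neg hθ]
  exact withDensity_absolutelyContinuous _ _

theorem integral_powerMeasure (hθ : 0 < θ) (g : ℝ → ℝ) :
    ∫ t, g t ∂powerMeasure θ = ∫ t in Set.Ioi 0, θ * t ^ (θ - 1) * g t := by
  rw [powerMeasure, if_neg hθ.ne', integral_withDensity_eq_integral_toReal_smul (by fun_prop)
    (.of_forall fun _ => ENNReal.ofReal_lt_top)]
  refine setIntegral_congr_fun measurableSet_Ioi fun t ht => ?_
  rw [ENNReal.toReal_ofReal (mul_nonneg hθ.le (Real.rpow_nonneg (le_of_lt ht) _)), smul_eq_mul]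

theorem ae_powerMeasure_nonneg (θ : ℝ) : ∀ᵐ t ∂powerMeasure θ, 0 ≤ t := by
  rcases eq_or_ne θ 0 with rfl | hθ
  · rw [powerMeasure_zero, ae_dirac_eq]
    exact (le_rfl : (0 : ℝ) ≤ 0)
  · exact (powerMeasure_absolutelyContinuous hθ).ae_le
      ((ae_restrict_mem measurableSet_Ioi).mono fun _ ht => le_of_lt ht)

theorem powerMeasure_singleton (hx : x ≠ 0) : powerMeasure θ {x} = 0 := by
  rcases eq_or_ne θ 0 with rfl | hθ
  · simp [powerMeasure_zero, hx.symm]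
  · exact powerMeasure_absolutelyContinuous hθ (measure_singleton x)

theorem powerMeasure_real_Iic_one (hθ : 0 ≤ θ) : (powerMeasure θ).real (Set.Iic 1) = 1 := by
  rcases hθ.eq_or_lt with rfl | hθ
  · simp [powerMeasure_zero, measureReal_def]
  · have hind (t : ℝ) : θ * t ^ (θ - 1) * (Set.Iic 1).indicator 1 t =
        (Set.Iic 1).indicator (fun t => θ * t ^ (θ - 1)) t := by
      simp [Set.indicator_apply]
    rw [← integral_indicator_one measurableSet_Iic, integral_powerMeasure hθ]
    simp_rw [hind]
    rw [setIntegral_indicator measurableSet_Iic, Set.Ioi_inter_Iic,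
      ← intervalIntegral.integral_of_le zero_le_one, intervalIntegral.integral_const_mul,
      integral_rpow (Or.inl (by linarith)), sub_add_cancel, Real.one_rpow,
      Real.zero_rpow hθ.ne', sub_zero, mul_one_div_cancel hθ.ne']

theorem measureLaplace_powerMeasure (hθ : 0 ≤ θ) (hx : 0 < x) :
    measureLaplace (powerMeasure θ) x = Real.Gamma (θ + 1) * x ^ θ := by
  rw [measureLaplace]
  rcases hθ.eq_or_lt with rfl | hθ
  · simp [powerMeasure_zero]
  · rw [integral_powerMeasure hθ, Real.Gamma_add_one hθ.ne']
    simp_rw [div_eq_inv_mul, mul_assoc]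
    rw [integral_const_mul,
      Real.integral_rpow_mul_exp_neg_mul_Ioi hθ (inv_pos.2 hx), one_div, inv_inv,
      mul_comm (x ^ θ)]

theorem integrable_exp_neg_div_powerMeasure (hθ : 0 ≤ θ) (hx : 0 < x) :
    Integrable (fun t => Real.exp (-(t / x))) (powerMeasure θ) := by
  refine .of_integral_ne_zero ?_
  rw [← measureLaplace, measureLaplace_powerMeasure hθ hx]
  exact (mul_pos (Real.Gamma_pos_of_pos (by linarith)) (Real.rpow_pos_of_pos hx θ)).ne'

theorem powerMeasure_ne_zero (hθ : 0 ≤ θ) : powerMeasure θ ≠ 0 := fun h => by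
  simpa [h] using powerMeasure_real_Iic_one hθ

end PowerMeasure

/-- The sum `f 0 + ∑_{1 ≤ n, log n ≤ x} f n`: partial sums are indexed by the logarithm of their
endpoint, the scale on which sums of reciprocals vary regularly. -/
noncomputable def logPartialSum (f : ℕ → ℝ) (x : ℝ) : ℝ :=
  ∑ n ∈ Finset.Icc 0 ⌊Real.exp x⌋₊, f n

section LogPartialSum

open MeasureTheory

variable {f g : ℕ → ℝ} {x y : ℝ}

theorem floor_exp_mono (hxy : x ≤ y) : ⌊Real.exp x⌋₊ ≤ ⌊Real.exp y⌋₊ :=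
  Nat.floor_mono (Real.exp_le_exp.2 hxy)

theorem le_floor_exp_iff {n : ℕ} (hn : n ≠ 0) : n ≤ ⌊Real.exp x⌋₊ ↔ Real.log n ≤ x := by
  rw [Nat.le_floor_iff (Real.exp_pos x).le, Real.log_le_iff_le_exp (by positivity)]

theorem logPartialSum_log_natCast {N : ℕ} (hN : N ≠ 0) :
    logPartialSum f (Real.log N) = ∑ n ∈ Finset.Icc 0 N, f n := by
  rw [logPartialSum, Real.exp_log (by positivity), Nat.floor_natCast]

theorem logPartialSum_sub_logPartialSum (hxy : x ≤ y) :
    logPartialSum f y - logPartialSum f x =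
      ∑ n ∈ Finset.Ioc ⌊Real.exp x⌋₊ ⌊Real.exp y⌋₊, f n := by
  simp only [logPartialSum, ← Nat.range_succ_eq_Icc_zero]
  rw [← Finset.sum_Ico_eq_sub _ (Nat.succ_le_succ (floor_exp_mono hxy))]
  exact Finset.sum_congr (by ext; simp) fun _ _ => rfl

theorem measurable_logPartialSum (f : ℕ → ℝ) : Measurable (logPartialSum f) :=
  (measurable_from_nat (f := fun N => ∑ n ∈ Finset.Icc 0 N, f n)).comp
    (Nat.measurable_floor.comp Real.measurable_exp)

theorem logPartialSum_mono (hf : 0 ≤ f) : Monotone (logPartialSum f) := fun _ _ hxy =>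
  Finset.sum_le_sum_of_subset_of_nonneg (Finset.Icc_subset_Icc_right (floor_exp_mono hxy))
    fun n _ _ => hf n

theorem logPartialSum_sub_mono (hfg : f ≤ g) (hxy : x ≤ y) :
    logPartialSum f y - logPartialSum f x ≤ logPartialSum g y - logPartialSum g x := by
  rw [logPartialSum_sub_logPartialSum hxy, logPartialSum_sub_logPartialSum hxy]
  exact Finset.sum_le_sum fun n _ => hfg n

theorem logPartialSum_sub_eq_sum_indicator {u : ℝ} (hu : u ∈ Set.Icc x y) :
    logPartialSum f u - logPartialSum f x =
      ∑ n ∈ Finset.Ioc ⌊Real.exp x⌋₊ ⌊Real.exp y⌋₊,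
        (Set.Ici (Real.log n)).indicator (fun _ => f n) u := by
  rw [logPartialSum_sub_logPartialSum hu.1]
  have hsub : Finset.Ioc ⌊Real.exp x⌋₊ ⌊Real.exp u⌋₊ ⊆ Finset.Ioc ⌊Real.exp x⌋₊ ⌊Real.exp y⌋₊ :=
    Finset.Ioc_subset_Ioc_right (floor_exp_mono hu.2)
  refine Finset.sum_subset_zero_on_sdiff hsub (fun n hn => ?_) fun n hn => ?_
  · have hnu : ¬ Real.log n ≤ u := by
      simp only [Finset.mem_sdiff, Finset.mem_Ioc, not_and] at hn
      rw [← le_floor_exp_iff (by omega)]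
      exact hn.2 hn.1.1
    simp [hnu]
  · have hnu : Real.log n ≤ u := by
      rw [Finset.mem_Ioc] at hn
      exact (le_floor_exp_iff (by omega)).1 hn.2
    simp [hnu]

theorem integral_inv_sq {a b : ℝ} (ha : 0 < a) (hab : a ≤ b) :
    ∫ u in a..b, (u ^ 2)⁻¹ = a⁻¹ - b⁻¹ := by
  have h0 : (0 : ℝ) ∉ Set.uIcc a b := by rw [Set.uIcc_of_le hab]; exact fun h => ha.not_ge h.1
  have := integral_zpow (n := -2) (Or.inr ⟨by norm_num, h0⟩)
  norm_num [zpow_neg] at this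
  convert! this using 1
  ring

theorem intervalIntegrable_inv_sq {a b : ℝ} (ha : 0 < a) (hab : a ≤ b) :
    IntervalIntegrable (fun u => (u ^ 2)⁻¹) volume a b :=
  ContinuousOn.intervalIntegrable <| by
    rw [Set.uIcc_of_le hab]
    exact (continuousOn_pow 2).inv₀ fun u hu => pow_ne_zero 2 (ha.trans_le hu.1).ne'

theorem integral_sub_mul_inv_sq {a b : ℝ} (ha : 0 < a) (hab : a ≤ b) :
    ∫ u in a..b, (u - a) * (u ^ 2)⁻¹ = Real.log (b / a) - (b - a) / b := by
  have hb : 0 < b := ha.trans_le hab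
  have h0 : (0 : ℝ) ∉ Set.uIcc a b := by rw [Set.uIcc_of_le hab]; exact fun h => ha.not_ge h.1
  have hsub : ∀ u ∈ Set.uIcc a b, (u - a) * (u ^ 2)⁻¹ = u⁻¹ - a * (u ^ 2)⁻¹ := fun u hu => by
    have hu0 : u ≠ 0 := fun h => h0 (h ▸ hu)
    field_simp
  rw [intervalIntegral.integral_congr hsub, intervalIntegral.integral_sub
      (intervalIntegral.intervalIntegrable_inv (fun u hu h => h0 (h ▸ hu)) continuousOn_id)
      ((intervalIntegrable_inv_sq ha hab).const_mul a),
    integral_inv h0, intervalIntegral.integral_const_mul, integral_inv_sq ha hab]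
  field_simp

theorem inv_eq_inv_add_integral_indicator {l : ℝ} (hx : 0 < x) (hl : l ∈ Set.Ioc x y) :
    l⁻¹ = y⁻¹ + ∫ u in x..y, (Set.Ici l).indicator (fun u => (u ^ 2)⁻¹) u := by
  have hinter : Set.Ioc x y ∩ Set.Ici l = Set.Icc l y := by
    ext u
    simp only [Set.mem_inter_iff, Set.mem_Ioc, Set.mem_Ici, Set.mem_Icc]
    exact ⟨fun h => ⟨h.2, h.1.2⟩, fun h => ⟨⟨hl.1.trans_le h.1, h.2⟩, h.1⟩⟩
  rw [intervalIntegral.integral_of_le (hl.1.le.trans hl.2),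
    setIntegral_indicator measurableSet_Ici, hinter,
    integral_Icc_eq_integral_Ioc, ← intervalIntegral.integral_of_le hl.2,
    integral_inv_sq (hx.trans hl.1) hl.2]
  ring

theorem logPartialSum_div_log_sub (f : ℕ → ℝ) (hx : 0 < x) (hxy : x ≤ y) :
    logPartialSum (fun n => f n / Real.log n) y - logPartialSum (fun n => f n / Real.log n) x =
      (logPartialSum f y - logPartialSum f x) / y +
        ∫ u in x..y, (logPartialSum f u - logPartialSum f x) * (u ^ 2)⁻¹ := by
  have hint : ∀ l : ℝ, IntervalIntegrable (fun u => (Set.Ici l).indicator (fun u => (u ^ 2)⁻¹) u)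
      volume x y := fun l => by
    rw [intervalIntegrable_iff]
    exact (intervalIntegrable_iff.1 (intervalIntegrable_inv_sq hx hxy)).indicator measurableSet_Ici
  have hsum : ∫ u in x..y, (logPartialSum f u - logPartialSum f x) * (u ^ 2)⁻¹ =
      ∑ n ∈ Finset.Ioc ⌊Real.exp x⌋₊ ⌊Real.exp y⌋₊,
        f n * ∫ u in x..y, (Set.Ici (Real.log n)).indicator (fun u => (u ^ 2)⁻¹) u := by
    simp_rw [← intervalIntegral.integral_const_mul]
    rw [← intervalIntegral.integral_finsetSum fun n _ => (hint _).const_mul _]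
    refine intervalIntegral.integral_congr fun u hu => ?_
    rw [Set.uIcc_of_le hxy] at hu
    simp only [logPartialSum_sub_eq_sum_indicator hu, Finset.sum_mul, Set.indicator_apply, ite_mul,
      mul_ite, mul_zero, zero_mul]
  rw [logPartialSum_sub_logPartialSum hxy, logPartialSum_sub_logPartialSum hxy, hsum,
    Finset.sum_div, ← Finset.sum_add_distrib]
  refine Finset.sum_congr rfl fun n hn => ?_
  rw [Finset.mem_Ioc] at hn
  have hlog : Real.log n ∈ Set.Ioc x y := by
    rw [Set.mem_Ioc, ← not_le, ← le_floor_exp_iff (by omega), ← le_floor_exp_iff (by omega)]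
    omega
  rw [div_eq_mul_inv, inv_eq_inv_add_integral_indicator hx hlog]
  ring

theorem abs_logPartialSum_div_log_sub_sub_log_le {C : ℝ}
    (hf : ∀ x, 0 ≤ x → |logPartialSum f x - x| ≤ C) (hx : 0 < x) (hxy : x ≤ y) :
    |logPartialSum (fun n => f n / Real.log n) y - logPartialSum (fun n => f n / Real.log n) x
      - Real.log (y / x)| ≤ 2 * C / x := by
  have hy : 0 < y := hx.trans_le hxy
  set E : ℝ → ℝ := fun u => logPartialSum f u - logPartialSum f x - (u - x) with hE
  have hEle : ∀ u, x ≤ u → |E u| ≤ 2 * C := fun u hu => by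
    have h₁ := abs_le.1 (hf u (hx.le.trans hu))
    have h₂ := abs_le.1 (hf x hx.le)
    rw [abs_le]
    constructor <;> simp only [hE] <;> linarith [h₁.1, h₁.2, h₂.1, h₂.2]
  have hinvsq := intervalIntegrable_inv_sq hx hxy
  have hmain : IntervalIntegrable (fun u => (u - x) * (u ^ 2)⁻¹) volume x y :=
    hinvsq.continuousOn_mul (by fun_prop)
  have hmain_eq : ∫ u in x..y, (u - x) * (u ^ 2)⁻¹ = Real.log (y / x) - (y - x) / y :=
    integral_sub_mul_inv_sq hx hxy
  have hE_bound : ∀ u ∈ Set.uIoc x y, ‖E u * (u ^ 2)⁻¹‖ ≤ 2 * C * (u ^ 2)⁻¹ := fun u hu => by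
    rw [Set.uIoc_of_le hxy] at hu
    rw [Real.norm_eq_abs, abs_mul, abs_of_nonneg (a := (u ^ 2)⁻¹) (by positivity)]
    exact mul_le_mul_of_nonneg_right (hEle u hu.1.le) (by positivity)
  have hE_int : IntervalIntegrable (fun u => E u * (u ^ 2)⁻¹) volume x y := by
    have hmeas := measurable_logPartialSum f
    exact (hinvsq.const_mul (2 * C)).mono_fun' (by fun_prop)
      (ae_restrict_of_forall_mem measurableSet_uIoc hE_bound)
  have herr : |∫ u in x..y, E u * (u ^ 2)⁻¹| ≤ 2 * C * (x⁻¹ - y⁻¹) := by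
    rw [← integral_inv_sq hx hxy, ← intervalIntegral.integral_const_mul]
    exact intervalIntegral.norm_integral_le_of_norm_le hxy
      (.of_forall fun u hu => hE_bound u (Set.uIoc_of_le hxy ▸ hu)) (hinvsq.const_mul _)
  have hsplit : logPartialSum (fun n => f n / Real.log n) y
      - logPartialSum (fun n => f n / Real.log n) x - Real.log (y / x) =
        E y / y + ∫ u in x..y, E u * (u ^ 2)⁻¹ := by
    have hadd := intervalIntegral.integral_add hE_int hmain
    simp only [hE, ← add_mul, sub_add_cancel] at hadd
    rw [logPartialSum_div_log_sub f hx hxy, hadd, hmain_eq]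
    ring
  calc _ ≤ |E y / y| + |∫ u in x..y, E u * (u ^ 2)⁻¹| := hsplit ▸ abs_add_le _ _
    _ ≤ 2 * C / y + 2 * C * (x⁻¹ - y⁻¹) := by
      rw [abs_div, abs_of_pos hy]
      gcongr
      exact hEle y hxy
    _ = 2 * C / x := by ring

end LogPartialSum

section Mertens

open ArithmeticFunction (vonMangoldt)

theorem log_factorial_eq_sum_vonMangoldt (N : ℕ) :
    Real.log N.factorial = ∑ d ∈ Finset.Ioc 0 N, vonMangoldt d * ((N / d : ℕ) : ℝ) := by
  rw [← ArithmeticFunction.sum_Ioc_mul_zeta_eq_sum, ArithmeticFunction.vonMangoldt_mul_zeta,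
    ← Finset.prod_Ico_id_eq_factorial]
  push_cast
  rw [Real.log_prod fun n hn => by have := (Finset.mem_Ico.1 hn).1; positivity]
  exact Finset.sum_congr (by ext; simp [Nat.succ_le_iff]) fun _ _ => rfl

theorem abs_log_factorial_sub_mul_log_le {N : ℕ} (hN : N ≠ 0) :
    |Real.log N.factorial - N * Real.log N| ≤ N := by
  have hlow := Stirling.le_log_factorial_stirling hN
  have hlogN : 0 ≤ Real.log N := Real.log_natCast_nonneg N
  have hlog2pi : 0 ≤ Real.log (2 * Real.pi) := Real.log_nonneg (by linarith [Real.pi_gt_three])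
  have hupp : Real.log N.factorial ≤ N * Real.log N := by
    rw [← Real.log_pow]
    exact Real.log_le_log (by positivity) (by exact_mod_cast Nat.factorial_le_pow N)
  rw [abs_le]
  constructor <;> linarith [N.cast_nonneg (α := ℝ)]

theorem sum_vonMangoldt_le (N : ℕ) :
    ∑ d ∈ Finset.Ioc 0 N, vonMangoldt d ≤ (Real.log 4 + 4) * N := by
  simpa [Chebyshev.psi] using Chebyshev.psi_le_const_mul_self (x := (N : ℝ)) N.cast_nonneg

theorem abs_mul_sum_vonMangoldt_div_sub_log_factorial_le (N : ℕ) :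
    |N * ∑ d ∈ Finset.Ioc 0 N, vonMangoldt d / d - Real.log N.factorial| ≤
      (Real.log 4 + 4) * N := by
  have hterm : ∀ d : ℕ, 0 ≤ vonMangoldt d * ((N : ℝ) / d - (N / d : ℕ)) ∧
      vonMangoldt d * ((N : ℝ) / d - (N / d : ℕ)) ≤ vonMangoldt d := fun d => by
    have hΛ : 0 ≤ vonMangoldt d := ArithmeticFunction.vonMangoldt_nonneg
    have hlow : ((N / d : ℕ) : ℝ) ≤ N / d := Nat.cast_div_le
    have hupp : (N : ℝ) / d < (N / d : ℕ) + 1 := by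
      rw [← Nat.floor_div_eq_div (K := ℝ)]
      exact Nat.lt_floor_add_one _
    exact ⟨mul_nonneg hΛ (by linarith), mul_le_of_le_one_right hΛ (by linarith)⟩
  have heq : N * ∑ d ∈ Finset.Ioc 0 N, vonMangoldt d / d - Real.log N.factorial =
      ∑ d ∈ Finset.Ioc 0 N, vonMangoldt d * ((N : ℝ) / d - (N / d : ℕ)) := by
    rw [log_factorial_eq_sum_vonMangoldt, Finset.mul_sum, ← Finset.sum_sub_distrib]
    exact Finset.sum_congr rfl fun d _ => by ring
  rw [heq, abs_of_nonneg (Finset.sum_nonneg fun d _ => (hterm d).1)]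
  exact (Finset.sum_le_sum fun d _ => (hterm d).2).trans (sum_vonMangoldt_le N)

theorem abs_sum_vonMangoldt_div_sub_log_le {N : ℕ} (hN : N ≠ 0) :
    |∑ d ∈ Finset.Ioc 0 N, vonMangoldt d / d - Real.log N| ≤ Real.log 4 + 5 := by
  have hN' : (0 : ℝ) < N := by positivity
  refine le_of_mul_le_mul_left ?_ hN'
  calc _ = |N * ∑ d ∈ Finset.Ioc 0 N, vonMangoldt d / d - N * Real.log N| := by
        rw [← abs_of_pos hN', ← abs_mul, mul_sub, abs_of_pos hN']
    _ ≤ (Real.log 4 + 4) * N + N := (abs_sub_le _ _ _).trans <| add_le_add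
        (abs_mul_sum_vonMangoldt_div_sub_log_factorial_le N) (abs_log_factorial_sub_mul_log_le hN)
    _ = _ := by ring

theorem exists_abs_sum_log_prime_div_sub_log_le : ∃ C : ℝ, ∀ N : ℕ, N ≠ 0 →
    |∑ n ∈ Finset.Icc 0 N, {p : ℕ | p.Prime}.indicator (fun n => Real.log n / n) n
      - Real.log N| ≤ C := by
  set R : ℕ → ℝ := fun n => (if n.Prime then 0 else vonMangoldt n) / n with hR
  have hR_nonneg : ∀ n, 0 ≤ R n := fun n => by
    simp only [hR]
    split_ifs <;> simp [div_nonneg, ArithmeticFunction.vonMangoldt_nonneg]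
  have hR_summable : Summable R := by
    have hres : ∀ n : ℕ, ArithmeticFunction.vonMangoldt.residueClass (0 : ZMod 1) n =
        vonMangoldt n := fun n => by
      simp [ArithmeticFunction.vonMangoldt.residueClass, Subsingleton.elim (n : ZMod 1) 0]
    simpa only [hres] using
      ArithmeticFunction.vonMangoldt.summable_residueClass_non_primes_div (q := 1) 0
  have hsplit : ∀ N : ℕ, ∑ d ∈ Finset.Ioc 0 N, vonMangoldt d / d =
      ∑ n ∈ Finset.Icc 0 N, {p : ℕ | p.Prime}.indicator (fun n => Real.log n / n) n +
      ∑ n ∈ Finset.Icc 0 N, R n := fun N => by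
    rw [← Finset.sum_add_distrib, ← Finset.add_sum_Ioc_eq_sum_Icc (Nat.zero_le N)]
    simp only [hR, Set.indicator_apply, Set.mem_ofPred_eq, Nat.cast_zero, div_zero, ite_self,
      zero_add]
    refine Finset.sum_congr rfl fun n _ => ?_
    split_ifs with hn
    · rw [ArithmeticFunction.vonMangoldt_apply_prime hn, zero_div, add_zero]
    · rw [zero_add]
  refine ⟨Real.log 4 + 5 + ∑' n, R n, fun N hN => ?_⟩
  have hle := hR_summable.sum_le_tsum (Finset.Icc 0 N) fun n _ => hR_nonneg n
  have hR_sum := Finset.sum_nonneg fun n (_ : n ∈ Finset.Icc 0 N) => hR_nonneg n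
  have hΛ := abs_le.1 (hsplit N ▸ abs_sum_vonMangoldt_div_sub_log_le hN)
  rw [abs_le]
  constructor <;> linarith [hΛ.1, hΛ.2]

theorem exists_abs_logPartialSum_log_prime_div_sub_le : ∃ C : ℝ, ∀ x : ℝ, 0 ≤ x →
    |logPartialSum ({p : ℕ | p.Prime}.indicator fun n => Real.log n / n) x - x| ≤ C := by
  obtain ⟨C, hC⟩ := exists_abs_sum_log_prime_div_sub_log_le
  refine ⟨C + Real.log 2, fun x hx => ?_⟩
  have hfloor : 1 ≤ ⌊Real.exp x⌋₊ := (Nat.one_le_floor_iff _).2 (Real.one_le_exp hx)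
  have hfloor_pos : (0 : ℝ) < ⌊Real.exp x⌋₊ := by exact_mod_cast hfloor
  have hlow : Real.log ⌊Real.exp x⌋₊ ≤ x := (le_floor_exp_iff (by omega)).1 le_rfl
  have hupp : x ≤ Real.log 2 + Real.log ⌊Real.exp x⌋₊ := by
    rw [← Real.log_mul two_ne_zero hfloor_pos.ne', Real.le_log_iff_exp_le (by positivity)]
    have : (1 : ℝ) ≤ ⌊Real.exp x⌋₊ := by exact_mod_cast hfloor
    linarith [Nat.lt_floor_add_one (Real.exp x)]
  calc _ ≤ |logPartialSum _ x - Real.log ⌊Real.exp x⌋₊| + |Real.log ⌊Real.exp x⌋₊ - x| :=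
        abs_sub_le _ _ _
    _ ≤ C + Real.log 2 := by
        refine add_le_add (hC _ (by omega)) ?_
        rw [abs_le]
        constructor <;> linarith [Real.log_nonneg one_le_two]

/-- The sum `∑ 1/n` over the `n ∈ A` with `log n ≤ x`, where `n = 0` contributes the junk value
`1/0 = 0`. -/
noncomputable def recipSum (A : Set ℕ) (x : ℝ) : ℝ :=
  logPartialSum (A.indicator fun n => (n : ℝ)⁻¹) x

theorem exists_abs_recipSum_prime_sub_sub_log_le : ∃ C : ℝ, ∀ x y : ℝ, 0 < x → x ≤ y →
    |recipSum {p | p.Prime} y - recipSum {p | p.Prime} x - Real.log (y / x)| ≤ C / x := by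
  obtain ⟨C, hC⟩ := exists_abs_logPartialSum_log_prime_div_sub_le
  refine ⟨2 * C, fun x y hx hxy => ?_⟩
  have hweight : (fun n : ℕ => {p : ℕ | p.Prime}.indicator (fun n => Real.log n / n) n
      / Real.log n) = {p : ℕ | p.Prime}.indicator fun n => (n : ℝ)⁻¹ := by
    funext n
    simp only [Set.indicator_apply, Set.mem_ofPred_eq]
    split_ifs with hn
    · have : Real.log n ≠ 0 := (Real.log_pos (by exact_mod_cast hn.one_lt)).ne'
      field_simp
    · exact zero_div _
  simpa only [recipSum, ← hweight] using abs_logPartialSum_div_log_sub_sub_log_le hC hx hxy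

end Mertens

section RecipSum

variable {A B : Set ℕ}

theorem recip_indicator_nonneg (A : Set ℕ) : (0 : ℕ → ℝ) ≤ A.indicator fun n => (n : ℝ)⁻¹ :=
  Set.indicator_nonneg fun n _ => inv_nonneg.2 n.cast_nonneg

theorem recip_indicator_mono (hAB : A ⊆ B) :
    (A.indicator fun n : ℕ => (n : ℝ)⁻¹) ≤ B.indicator fun n : ℕ => (n : ℝ)⁻¹ :=
  fun n => Set.indicator_le_indicator_of_subset hAB (fun n => by positivity) n

theorem recipSum_mono (A : Set ℕ) : Monotone (recipSum A) :=
  logPartialSum_mono (recip_indicator_nonneg A)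

theorem recipSum_prime_eq_zero {x : ℝ} (hx : x ≤ 1 / 2) : recipSum {p | p.Prime} x = 0 := by
  rw [recipSum, logPartialSum]
  refine Finset.sum_eq_zero fun n hn => Set.indicator_of_notMem (fun hp : n.Prime => ?_) _
  have hlog : Real.log n ≤ x :=
    (le_floor_exp_iff hp.ne_zero).1 (Finset.mem_Icc.1 hn).2
  have hlog2 : Real.log 2 ≤ Real.log n :=
    Real.log_le_log two_pos (by exact_mod_cast hp.two_le)
  linarith [Real.log_two_gt_d9]

theorem exists_recipSum_prime_sub_le : ∃ C : ℝ, ∀ x y : ℝ, 0 < x → x ≤ y → 1 ≤ y →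
    recipSum {p | p.Prime} y - recipSum {p | p.Prime} x ≤ C + Real.log (y / x) := by
  obtain ⟨C, hC⟩ := exists_abs_recipSum_prime_sub_sub_log_le
  have hC0 : 0 ≤ C := by simpa using (abs_nonneg _).trans (hC 1 1 one_pos le_rfl)
  refine ⟨2 * C, fun x y hx hxy hy => ?_⟩
  set x' := max x (1 / 2) with hx'
  have hx'2 : 1 / 2 ≤ x' := le_max_right _ _
  have hrecip : recipSum {p | p.Prime} x = recipSum {p | p.Prime} x' := by
    rcases le_total x (1 / 2) with h | h
    · rw [hx', max_eq_right h, recipSum_prime_eq_zero h, recipSum_prime_eq_zero le_rfl]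
    · rw [hx', max_eq_left h]
  have hbound := (abs_le.1 (hC x' y (by positivity) (max_le hxy (by linarith)))).2
  have hCx' : C / x' ≤ 2 * C := by
    rw [div_le_iff₀ (by positivity)]
    nlinarith
  have hlog : Real.log (y / x') ≤ Real.log (y / x) :=
    Real.log_le_log (by positivity) (by gcongr; exact le_max_left _ _)
  rw [hrecip]
  linarith

theorem exists_abs_recipSum_mul_sub_le : ∃ C : ℝ, ∀ A : Set ℕ, (∀ p ∈ A, p.Prime) →
    ∀ x v : ℝ, 1 ≤ x → 0 < v → |recipSum A (v * x) - recipSum A x| ≤ C + |Real.log v| := by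
  obtain ⟨C, hC⟩ := exists_recipSum_prime_sub_le
  refine ⟨C, fun A hA x v hx hv => ?_⟩
  have hx0 : 0 < x := by linarith
  have hbound : ∀ y z, 0 < y → y ≤ z → 1 ≤ z → recipSum A z - recipSum A y ≤ C + Real.log (z / y) :=
    fun y z hy hyz hz => (logPartialSum_sub_mono (recip_indicator_mono hA) hyz).trans
      (hC y z hy hyz hz)
  rcases le_total x (v * x) with h | h
  · rw [abs_of_nonneg (sub_nonneg.2 (recipSum_mono A h))]
    refine (hbound x (v * x) hx0 h (hx.trans h)).trans ?_
    rw [mul_div_cancel_right₀ _ hx0.ne']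
    gcongr
    exact le_abs_self _
  · rw [abs_sub_comm, abs_of_nonneg (sub_nonneg.2 (recipSum_mono A h))]
    refine (hbound (v * x) x (by positivity) h hx).trans ?_
    rw [div_mul_cancel_right₀ hx0.ne', Real.log_inv]
    gcongr
    exact neg_le_abs _

theorem tendsto_recipSum_prime_mul_sub {v : ℝ} (hv : 1 ≤ v) :
    Tendsto (fun x => recipSum {p | p.Prime} (v * x) - recipSum {p | p.Prime} x) atTop
      (nhds (Real.log v)) := by
  obtain ⟨C, hC⟩ := exists_abs_recipSum_prime_sub_sub_log_le
  rw [tendsto_iff_norm_sub_tendsto_zero]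
  refine squeeze_zero' (.of_forall fun _ => norm_nonneg _) ?_
    (tendsto_const_nhds (x := C).div_atTop tendsto_id)
  filter_upwards [eventually_gt_atTop 0] with x hx
  have h := hC x (v * x) hx (le_mul_of_one_le_left hx.le hv)
  rwa [mul_div_cancel_right₀ _ hx.ne'] at h

end RecipSum

section Density

variable {A B : Set ℕ} {θ : ℝ}

theorem abs_sum_Ioc_mul_le_of_abs_sum_le {c d w : ℕ → ℝ} {ε : ℝ} {a b : ℕ} (hab : a ≤ b)
    (hw : AntitoneOn w (Set.Ioi a)) (hw0 : ∀ n, 0 ≤ w n)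
    (h : ∀ n, a ≤ n → |∑ k ∈ Finset.Icc 0 n, c k| ≤ ε * ∑ k ∈ Finset.Icc 0 n, d k) :
    |∑ k ∈ Finset.Ioc a b, c k * w k| ≤
      ε * (∑ k ∈ Finset.Ioc a b, d k * w k + 2 * (∑ k ∈ Finset.Icc 0 a, d k) * w (a + 1)) := by
  set S : (ℕ → ℝ) → ℕ → ℝ := fun e n => ∑ k ∈ Finset.Icc 0 n, e k with hS
  set T : (ℕ → ℝ) → ℕ → ℝ := fun e b =>
    ∑ k ∈ Finset.Ioc a b, e k * w k - S e b * w (b + 1) + S e a * w (a + 1) with hT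
  have hT_succ : ∀ e b, a ≤ b → T e (b + 1) = T e b + S e (b + 1) * (w (b + 1) - w (b + 2)) :=
    fun e b hab => by
      simp only [hT, hS, Finset.sum_Ioc_succ_top hab, Finset.sum_Icc_succ_top (Nat.zero_le (b + 1))]
      ring
  have hT_le : |T c b| ≤ ε * T d b := by
    induction b, hab using Nat.le_induction with
    | base => simp [hT]
    | succ b hab ih =>
      have hw_sub : 0 ≤ w (b + 1) - w (b + 2) := sub_nonneg.2 <|
        hw (Set.mem_Ioi.2 (by omega)) (Set.mem_Ioi.2 (by omega)) (by omega)
      rw [hT_succ c b hab, hT_succ d b hab, mul_add, ← mul_assoc]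
      refine (abs_add_le _ _).trans (add_le_add ih ?_)
      rw [abs_mul, abs_of_nonneg hw_sub]
      exact mul_le_mul_of_nonneg_right (h _ (by omega)) hw_sub
  have hboundary : ∀ n, a ≤ n → |S c n * w (n + 1)| ≤ ε * S d n * w (n + 1) := fun n hn => by
    rw [abs_mul, abs_of_nonneg (hw0 _)]
    exact mul_le_mul_of_nonneg_right (h n hn) (hw0 _)
  calc |∑ k ∈ Finset.Ioc a b, c k * w k|
      = |T c b + S c b * w (b + 1) - S c a * w (a + 1)| := by simp only [hT]; ring_nf
    _ ≤ |T c b| + |S c b * w (b + 1)| + |S c a * w (a + 1)| :=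
      (abs_sub _ _).trans (add_le_add_left (abs_add_le _ _) _)
    _ ≤ ε * T d b + ε * S d b * w (b + 1) + ε * S d a * w (a + 1) :=
      add_le_add (add_le_add hT_le (hboundary b hab)) (hboundary a le_rfl)
    _ = _ := by simp only [hT]; ring

theorem ncard_inter_Icc_eq_sum_indicator (hA : 0 ∉ A) (N : ℕ) :
    ((A ∩ Set.Icc 1 N).ncard : ℝ) = ∑ k ∈ Finset.Icc 0 N, A.indicator 1 k := by
  have hset : A ∩ Set.Icc 1 N = ↑{k ∈ Finset.Icc 0 N | k ∈ A} := by
    ext k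
    have : k ∈ A → k ≠ 0 := fun hk h => hA (h ▸ hk)
    simp only [Set.mem_inter_iff, Set.mem_Icc, Finset.coe_filter, Set.mem_ofPred_eq,
      Finset.mem_Icc, Nat.one_le_iff_ne_zero, Nat.zero_le, true_and]
    tauto
  simp only [hset, Set.ncard_coe_finset, Finset.card_filter, Set.indicator_apply, Pi.one_apply,
    Nat.cast_sum, Nat.cast_ite, Nat.cast_one, Nat.cast_zero]

theorem eventually_abs_sum_indicator_sub_le (hAB : A ⊆ B) (hB : 0 ∉ B)
    (hdens : Tendsto (fun N : ℕ => ((A ∩ Set.Icc 1 N).ncard : ℝ) / ((B ∩ Set.Icc 1 N).ncard : ℝ))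
      atTop (nhds θ)) {ε : ℝ} (hε : 0 < ε) :
    ∀ᶠ N : ℕ in atTop, |∑ k ∈ Finset.Icc 0 N, (A.indicator 1 k - θ * B.indicator 1 k)| ≤
      ε * ∑ k ∈ Finset.Icc 0 N, B.indicator 1 k := by
  filter_upwards [Metric.tendsto_nhds.1 hdens ε hε] with N hN
  have hncard : (A ∩ Set.Icc 1 N).ncard ≤ (B ∩ Set.Icc 1 N).ncard :=
    Set.ncard_le_ncard (Set.inter_subset_inter_left _ hAB)
  rw [Finset.sum_sub_distrib, ← Finset.mul_sum, ← ncard_inter_Icc_eq_sum_indicator hB,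
    ← ncard_inter_Icc_eq_sum_indicator fun h => hB (hAB h)]
  rcases Nat.eq_zero_or_pos (B ∩ Set.Icc 1 N).ncard with h0 | hpos
  · simp [h0, Nat.le_zero.1 (h0 ▸ hncard)]
  · have hpos' : (0 : ℝ) < (B ∩ Set.Icc 1 N).ncard := by exact_mod_cast hpos
    rw [Real.dist_eq, div_sub' hpos'.ne', abs_div, abs_of_pos hpos', div_lt_iff₀ hpos'] at hN
    rw [mul_comm θ]
    exact hN.le

theorem eventually_abs_recipSum_sub_sub_le (hAB : A ⊆ B) (hB : 0 ∉ B)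
    (hdens : Tendsto (fun N : ℕ => ((A ∩ Set.Icc 1 N).ncard : ℝ) / ((B ∩ Set.Icc 1 N).ncard : ℝ))
      atTop (nhds θ)) {ε : ℝ} (hε : 0 < ε) :
    ∀ᶠ x in atTop, ∀ y, x ≤ y →
      |recipSum A y - recipSum A x - θ * (recipSum B y - recipSum B x)| ≤
        ε * (recipSum B y - recipSum B x + 2) := by
  have hfloor : Tendsto (fun x : ℝ => ⌊Real.exp x⌋₊) atTop atTop :=
    tendsto_nat_floor_atTop.comp Real.tendsto_exp_atTop
  filter_upwards [hfloor.eventually_forall_ge_atTop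
    (eventually_abs_sum_indicator_sub_le hAB hB hdens hε)] with x hx y hxy
  have hmul : ∀ (S : Set ℕ) (k : ℕ), S.indicator 1 k * (k : ℝ)⁻¹ =
      S.indicator (fun n : ℕ => (n : ℝ)⁻¹) k := fun S k => by simp [Set.indicator_apply]
  have hanti : AntitoneOn (fun n : ℕ => (n : ℝ)⁻¹) (Set.Ioi ⌊Real.exp x⌋₊) := fun m hm n _ hmn => by
    have : (0 : ℝ) < m := by exact_mod_cast (Nat.zero_le _).trans_lt hm
    exact inv_anti₀ this (by exact_mod_cast hmn)
  have habel := abs_sum_Ioc_mul_le_of_abs_sum_le (floor_exp_mono hxy) hanti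
    (fun n => by positivity) hx
  simp only [sub_mul, mul_assoc θ, hmul, Finset.sum_sub_distrib, ← Finset.mul_sum] at habel
  simp only [← logPartialSum_sub_logPartialSum hxy] at habel
  have hboundary : (∑ k ∈ Finset.Icc 0 ⌊Real.exp x⌋₊, B.indicator 1 k) *
      ((⌊Real.exp x⌋₊ + 1 : ℕ) : ℝ)⁻¹ ≤ 1 := by
    rw [← div_eq_mul_inv, div_le_one (by positivity)]
    simpa using Finset.sum_le_card_nsmul (Finset.Icc 0 ⌊Real.exp x⌋₊) (B.indicator 1) (1 : ℝ)
      fun k _ => Set.indicator_le_self' (by simp) k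
  exact habel.trans (mul_le_mul_of_nonneg_left (by simp only [recipSum]; linarith) hε.le)

theorem tendsto_recipSum_mul_sub_of_density_of_one_le (hA : ∀ p ∈ A, p.Prime)
    (hdens : Tendsto (fun N : ℕ => ((A ∩ Set.Icc 1 N).ncard : ℝ) /
      (({p : ℕ | p.Prime} ∩ Set.Icc 1 N).ncard : ℝ)) atTop (nhds θ)) {v : ℝ} (hv : 1 ≤ v) :
    Tendsto (fun x => recipSum A (v * x) - recipSum A x) atTop (nhds (θ * Real.log v)) := by
  have hprime := tendsto_recipSum_prime_mul_sub hv
  have hlog : 0 ≤ Real.log v := Real.log_nonneg hv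
  suffices hdiff : Tendsto (fun x => recipSum A (v * x) - recipSum A x -
      θ * (recipSum {p | p.Prime} (v * x) - recipSum {p | p.Prime} x)) atTop (nhds 0) by
    simpa using hdiff.add (hprime.const_mul θ)
  rw [Metric.tendsto_nhds]
  intro η hη
  have hε : 0 < η / (Real.log v + 4) := by positivity
  filter_upwards [eventually_abs_recipSum_sub_sub_le (B := {p | p.Prime}) hA Nat.not_prime_zero
      hdens hε, hprime.eventually_lt_const (lt_add_one _), eventually_ge_atTop 0]
    with x hx hx_prime hx0
  calc _ ≤ η / (Real.log v + 4) * _ := by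
        rw [Real.dist_0_eq_abs]
        exact hx (v * x) (le_mul_of_one_le_left hx0 hv)
    _ < η / (Real.log v + 4) * (Real.log v + 4) :=
        mul_lt_mul_of_pos_left (by linarith) hε
    _ = η := div_mul_cancel₀ _ (by positivity)

theorem isDeHaan_recipSum_of_density (hA : ∀ p ∈ A, p.Prime)
    (hdens : Tendsto (fun N : ℕ => ((A ∩ Set.Icc 1 N).ncard : ℝ) /
      (({p : ℕ | p.Prime} ∩ Set.Icc 1 N).ncard : ℝ)) atTop (nhds θ)) :
    IsDeHaan (recipSum A) θ := by
  intro v hv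
  rcases le_total 1 v with h | h
  · exact tendsto_recipSum_mul_sub_of_density_of_one_le hA hdens h
  · have hinv := (tendsto_recipSum_mul_sub_of_density_of_one_le hA hdens
      ((one_le_inv₀ hv).2 h)).comp (tendsto_id.const_mul_atTop hv)
    simpa only [Function.comp_def, id, inv_mul_cancel_left₀ hv.ne', neg_sub, Real.log_inv,
      mul_neg, neg_neg] using hinv.neg

end Density

section LogLaplace

open MeasureTheory

variable {f : ℕ → ℝ} {A : Set ℕ} {θ x : ℝ}

/-- The Dirichlet series `∑ f n * n ^ (-s)` at `s = 1 / x`, that is, the Laplace transform at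
`1 / x` of the measure with mass `f n` at `log n`. As `log 0 = 0` in Lean, `f 0` counts like
`f 1`. -/
noncomputable def logLaplace (f : ℕ → ℝ) (x : ℝ) : ℝ :=
  ∑' n, f n * Real.exp (-(Real.log n / x))

/-- The terms `n ^ (-(1 + 1 / x))`, for `n ∈ A`, of the Dirichlet series `recipLaplace A x`. -/
noncomputable def recipWeight (A : Set ℕ) (x : ℝ) (n : ℕ) : ℝ :=
  A.indicator (fun n => (n : ℝ)⁻¹) n * Real.exp (-(Real.log n / x))

/-- The Dirichlet series of the set `A` at `1 + 1 / x`, the smooth counterpart of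
`recipSum A x`. -/
noncomputable def recipLaplace (A : Set ℕ) (x : ℝ) : ℝ :=
  logLaplace (A.indicator fun n => (n : ℝ)⁻¹) x

theorem setIntegral_Ici_indicator_mul_exp_neg {a : ℝ} (ha : 0 ≤ a) (c : ℝ) :
    ∫ v in Set.Ici 0, (Set.Ici a).indicator (fun v => c * Real.exp (-v)) v =
      c * Real.exp (-a) := by
  rw [setIntegral_indicator measurableSet_Ici, Set.Ici_inter_Ici, sup_eq_right.2 ha,
    integral_const_mul, integral_Ici_eq_integral_Ioi,
    integral_exp_neg_Ioi]

theorem tsum_indicator_mul_exp_neg_eq (f : ℕ → ℝ) (hx : 0 < x) {v : ℝ} (hv : 0 ≤ v) :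
    ∑' n : ℕ, (Set.Ici (Real.log n / x)).indicator (fun v => f n * Real.exp (-v)) v =
      Real.exp (-v) * logPartialSum f (v * x) := by
  have hmem : ∀ n : ℕ, v ∈ Set.Ici (Real.log n / x) ↔ n ≤ ⌊Real.exp (v * x)⌋₊ := fun n => by
    rcases eq_or_ne n 0 with rfl | hn
    · simp [hv]
    · rw [Set.mem_Ici, div_le_iff₀ hx, le_floor_exp_iff hn]
  rw [tsum_eq_sum (s := Finset.Icc 0 ⌊Real.exp (v * x)⌋₊), logPartialSum, Finset.mul_sum]
  · refine Finset.sum_congr rfl fun n hn => ?_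
    rw [Set.indicator_of_mem ((hmem n).2 (Finset.mem_Icc.1 hn).2), mul_comm]
  · exact fun n hn => Set.indicator_of_notMem
      (fun h => hn (Finset.mem_Icc.2 ⟨n.zero_le, (hmem n).1 h⟩)) _

theorem logLaplace_eq_integral (hx : 0 < x)
    (hf : Summable fun n : ℕ => f n * Real.exp (-(Real.log n / x))) :
    logLaplace f x = ∫ v in Set.Ioi 0, Real.exp (-v) * logPartialSum f (v * x) := by
  set F : ℕ → ℝ → ℝ := fun n =>
    (Set.Ici (Real.log n / x)).indicator fun v => f n * Real.exp (-v) with hF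
  have hlog : ∀ n : ℕ, 0 ≤ Real.log n / x := fun n => div_nonneg (Real.log_natCast_nonneg n) hx.le
  have hint : ∀ n, IntegrableOn (F n) (Set.Ici 0) := fun n =>
    ((integrable_indicator_iff measurableSet_Ici).2
      (((integrableOn_exp_neg_Ioi _).congr_set_ae Ioi_ae_eq_Ici.symm).const_mul
        (f n))).integrableOn
  have hnorm : ∀ n, ∫ v in Set.Ici 0, ‖F n v‖ = ‖f n * Real.exp (-(Real.log n / x))‖ := fun n => by
    simp only [hF, norm_indicator_eq_indicator_norm, norm_mul, Real.norm_eq_abs, Real.abs_exp]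
    exact setIntegral_Ici_indicator_mul_exp_neg (hlog n) _
  have hsum := hasSum_integral_of_summable_integral_norm hint
    (by simpa only [hnorm] using hf.norm)
  simp only [hF, setIntegral_Ici_indicator_mul_exp_neg (hlog _)] at hsum
  rw [logLaplace, hsum.tsum_eq, ← integral_Ici_eq_integral_Ioi]
  exact setIntegral_congr_fun measurableSet_Ici fun v hv =>
    tsum_indicator_mul_exp_neg_eq f hx hv

theorem recipWeight_nonneg (A : Set ℕ) (x : ℝ) (n : ℕ) : 0 ≤ recipWeight A x n :=
  mul_nonneg (recip_indicator_nonneg A n) (Real.exp_pos _).le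

theorem recipWeight_le (A : Set ℕ) (hx : 0 ≤ x) (n : ℕ) :
    recipWeight A x n ≤ A.indicator (fun n => (n : ℝ)⁻¹) n :=
  mul_le_of_le_one_right (recip_indicator_nonneg A n) <|
    Real.exp_le_one_iff.2 <| neg_nonpos.2 <| div_nonneg (Real.log_natCast_nonneg n) hx

theorem summable_recipWeight (A : Set ℕ) (hx : 0 < x) : Summable (recipWeight A x) := by
  refine Summable.of_nonneg_of_le (recipWeight_nonneg A x) (fun n => ?_)
    (Real.summable_nat_rpow.2 (by linarith [inv_pos.2 hx] : -(1 + x⁻¹) < -1))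
  refine (mul_le_mul_of_nonneg_right (recip_indicator_mono A.subset_univ n)
    (Real.exp_pos _).le).trans ?_
  rcases n.eq_zero_or_pos with rfl | hn
  · simpa using Real.rpow_nonneg le_rfl _
  · have hn' : (0 : ℝ) < n := by exact_mod_cast hn
    rw [Set.indicator_univ, neg_add, Real.rpow_add hn', Real.rpow_neg_one, Real.rpow_def_of_pos hn',
      mul_neg, div_eq_mul_inv]

theorem integral_log_mul_exp_neg :
    ∫ v in Set.Ioi (0 : ℝ), Real.log v * Real.exp (-v) = -Real.eulerMascheroniConstant := by
  have hderiv := Complex.hasDerivAt_GammaIntegral (s := 1) (by simp)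
  have hGamma : Complex.GammaIntegral =ᶠ[nhds 1] Complex.Gamma := by
    filter_upwards [(Complex.continuous_re.tendsto 1).eventually_const_lt
      (by simp : (0 : ℝ) < (1 : ℂ).re)] with s hs using (Complex.Gamma_eq_integral hs).symm
  have hval := hderiv.unique (Complex.hasDerivAt_Gamma_one.congr_of_eventuallyEq hGamma)
  have hcast : (∫ t : ℝ in Set.Ioi 0, (t : ℂ) ^ ((1 : ℂ) - 1) * (Real.log t * Real.exp (-t))) =
      ((∫ v in Set.Ioi (0 : ℝ), Real.log v * Real.exp (-v) : ℝ) : ℂ) := by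
    rw [← integral_complex_ofReal]
    simp
  rw [hcast] at hval
  exact_mod_cast hval

theorem integrableOn_log_mul_exp_neg :
    IntegrableOn (fun v => Real.log v * Real.exp (-v)) (Set.Ioi 0) := by
  by_contra h
  have hval := integral_log_mul_exp_neg
  rw [integral_undef h] at hval
  linarith [Real.one_half_lt_eulerMascheroniConstant]

theorem integral_exp_neg_mul_sub {c : ℝ} {g : ℝ → ℝ}
    (hg : IntegrableOn (fun v => Real.exp (-v) * (g v - c)) (Set.Ioi 0)) :
    ∫ v in Set.Ioi 0, Real.exp (-v) * (g v - c) = (∫ v in Set.Ioi 0, Real.exp (-v) * g v) - c := by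
  have hc : IntegrableOn (fun v => Real.exp (-v) * c) (Set.Ioi 0) :=
    (integrableOn_exp_neg_Ioi 0).mul_const _
  have hadd := integral_add hg hc
  simp only [← mul_add, sub_add_cancel, integral_mul_const,
    integral_exp_neg_Ioi_zero, one_mul] at hadd
  exact eq_sub_of_add_eq hadd.symm

theorem tendsto_recipLaplace_sub_recipSum (hA : ∀ p ∈ A, p.Prime)
    (hlog : IsDeHaan (recipSum A) θ) :
    Tendsto (fun x => recipLaplace A x - recipSum A x) atTop
      (nhds (-(Real.eulerMascheroniConstant * θ))) := by
  obtain ⟨C, hC⟩ := exists_abs_recipSum_mul_sub_le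
  have hmeas : ∀ x, AEStronglyMeasurable
      (fun v => Real.exp (-v) * (recipSum A (v * x) - recipSum A x))
      (volume.restrict (Set.Ioi 0)) := fun x => by
    have : Measurable (recipSum A) := measurable_logPartialSum _
    exact Measurable.aestronglyMeasurable (by fun_prop)
  have hdom : IntegrableOn (fun v : ℝ => C * Real.exp (-v) +
      |Real.log v * Real.exp (-v)|) (Set.Ioi 0) :=
    ((integrableOn_exp_neg_Ioi 0).const_mul C).add integrableOn_log_mul_exp_neg.abs
  have hbound : ∀ x, 1 ≤ x → ∀ᵐ v ∂(volume.restrict (Set.Ioi (0 : ℝ))),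
      ‖Real.exp (-v) * (recipSum A (v * x) - recipSum A x)‖ ≤
        C * Real.exp (-v) + |Real.log v * Real.exp (-v)| := fun x hx => by
    filter_upwards [ae_restrict_mem measurableSet_Ioi] with v hv
    rw [norm_mul, Real.norm_eq_abs, Real.norm_eq_abs, abs_mul, Real.abs_exp, ← add_mul, mul_comm]
    gcongr
    exact hC A hA x v hx hv
  have hlim := tendsto_integral_filter_of_dominated_convergence _
    (.of_forall hmeas) ((eventually_ge_atTop 1).mono hbound) hdom
    ((ae_restrict_mem measurableSet_Ioi).mono
      fun v hv => (hlog v hv).const_mul (Real.exp (-v)))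
  have hval : ∫ v in Set.Ioi 0, Real.exp (-v) * (θ * Real.log v) =
      -(Real.eulerMascheroniConstant * θ) := by
    rw [← neg_mul, ← integral_log_mul_exp_neg, ← integral_mul_const]
    congr 1 with v
    ring
  rw [hval] at hlim
  refine hlim.congr' ?_
  filter_upwards [eventually_ge_atTop 1] with x hx
  have hx0 : 0 < x := by linarith
  rw [integral_exp_neg_mul_sub (hdom.mono' (hmeas x) (hbound x hx)), recipLaplace,
    logLaplace_eq_integral hx0 (summable_recipWeight A hx0)]
  rfl

end LogLaplace

section LogMeasure

open MeasureTheory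

variable {f : ℕ → ℝ} {θ x : ℝ}

/-- The measure with mass `f n` at `log n`, whose distribution function is `logPartialSum f` and
whose Laplace transform is `logLaplace f`. Negative values of `f` are replaced by `0`. -/
noncomputable def logMeasure (f : ℕ → ℝ) : Measure ℝ :=
  .sum fun n => ENNReal.ofReal (f n) • .dirac (Real.log n)

theorem ae_logMeasure_nonneg (f : ℕ → ℝ) : ∀ᵐ t ∂logMeasure f, 0 ≤ t := by
  refine Measure.ae_sum_iff.2 fun n => Measure.ae_smul_measure ?_ _
  rw [ae_dirac_eq]
  exact Real.log_natCast_nonneg n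

theorem logMeasure_ne_zero {n : ℕ} (hn : 0 < f n) : logMeasure f ≠ 0 := by
  rw [logMeasure, Ne, Measure.sum_eq_zero]
  intro h
  exact hn.not_ge (by simpa using h n)

theorem summable_norm_exp_neg_div (hf : 0 ≤ f)
    (hsum : Summable fun n : ℕ => f n * Real.exp (-(Real.log n / x))) :
    Summable fun n : ℕ => (ENNReal.ofReal (f n)).toReal * ‖Real.exp (-(Real.log n / x))‖ := by
  simpa only [ENNReal.toReal_ofReal (hf _), Real.norm_eq_abs, Real.abs_exp] using hsum

theorem integrable_exp_neg_div_logMeasure (hf : 0 ≤ f)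
    (hsum : Summable fun n : ℕ => f n * Real.exp (-(Real.log n / x))) :
    Integrable (fun t => Real.exp (-(t / x))) (logMeasure f) :=
  integrable_sum_dirac (fun _ => ENNReal.ofReal_ne_top)
    (summable_norm_exp_neg_div hf hsum)

theorem measureLaplace_logMeasure (hf : 0 ≤ f)
    (hsum : Summable fun n : ℕ => f n * Real.exp (-(Real.log n / x))) :
    measureLaplace (logMeasure f) x = logLaplace f x := by
  rw [measureLaplace, logMeasure, logLaplace,
    integral_sum_dirac_eq_tsum (f := fun t => Real.exp (-(t / x)))
      (fun _ => ENNReal.ofReal_ne_top) (summable_norm_exp_neg_div hf hsum)]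
  simp_rw [ENNReal.toReal_ofReal (hf _), smul_eq_mul]

theorem logMeasure_real_Iic (hf : 0 ≤ f) (hx : 0 ≤ x) :
    (logMeasure f).real (Set.Iic x) = logPartialSum f x := by
  have hmem (n : ℕ) : Real.log n ∈ Set.Iic x ↔ n ∈ Finset.Icc 0 ⌊Real.exp x⌋₊ := by
    rw [Finset.mem_Icc, and_iff_right n.zero_le]
    rcases eq_or_ne n 0 with rfl | hn
    · simp [hx]
    · exact (le_floor_exp_iff hn).symm
  have hterm (n : ℕ) : (ENNReal.ofReal (f n) • Measure.dirac (Real.log n))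
      (Set.Iic x) = if n ∈ Finset.Icc 0 ⌊Real.exp x⌋₊ then ENNReal.ofReal (f n) else 0 := by
    rw [Measure.smul_apply, Measure.dirac_apply, Set.indicator_apply,
      smul_eq_mul, Pi.one_apply, mul_ite, mul_one, mul_zero]
    simp only [hmem]
  rw [measureReal_def, logMeasure,
    Measure.sum_apply _ measurableSet_Iic, logPartialSum]
  simp_rw [hterm]
  rw [tsum_eq_sum (s := Finset.Icc 0 ⌊Real.exp x⌋₊) fun n hn => if_neg hn,
    Finset.sum_ite_mem, Finset.inter_self, ← ENNReal.ofReal_sum_of_nonneg fun n _ => hf n,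
    ENNReal.toReal_ofReal (Finset.sum_nonneg fun n _ => hf n)]

theorem tendsto_logPartialSum_div_logLaplace (hθ : 0 ≤ θ) (hf : 0 ≤ f) {n : ℕ} (hn : 0 < f n)
    (hsum : ∀ x, 0 < x → Summable fun n : ℕ => f n * Real.exp (-(Real.log n / x)))
    (hvar : IsRegularlyVarying (logLaplace f) θ) :
    Tendsto (fun x => logPartialSum f x / logLaplace f x) atTop
      (nhds (Real.Gamma (θ + 1))⁻¹) := by
  have : NeZero (logMeasure f) := ⟨logMeasure_ne_zero hn⟩
  have : NeZero (powerMeasure θ) := ⟨powerMeasure_ne_zero hθ⟩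
  have hGamma : Real.Gamma (θ + 1) ≠ 0 := (Real.Gamma_pos_of_pos (by linarith)).ne'
  have hLaplace {x : ℝ} (hx : 0 < x) : measureLaplace (logMeasure f) x = logLaplace f x :=
    measureLaplace_logMeasure hf (hsum x hx)
  have hratio (k : ℕ) : Tendsto (fun x =>
      measureLaplace (logMeasure f) (x / (k + 1)) / measureLaplace (logMeasure f) x) atTop
      (nhds (measureLaplace (powerMeasure θ) (1 / (k + 1)) /
        measureLaplace (powerMeasure θ) 1)) := by
    rw [measureLaplace_powerMeasure hθ (by positivity), measureLaplace_powerMeasure hθ one_pos,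
      Real.one_rpow, mul_one, mul_div_cancel_left₀ _ hGamma]
    refine (hvar _ (by positivity)).congr' ?_
    filter_upwards [eventually_gt_atTop 0] with x hx
    rw [hLaplace hx, hLaplace (by positivity), one_div_mul_eq_div]
  have hlim := tendsto_measureReal_Iic_div_measureLaplace (ae_logMeasure_nonneg f)
    (ae_powerMeasure_nonneg θ) (fun x hx => integrable_exp_neg_div_logMeasure hf (hsum x hx))
    (integrable_exp_neg_div_powerMeasure hθ one_pos) hratio (powerMeasure_singleton one_ne_zero)
  rw [powerMeasure_real_Iic_one hθ, measureLaplace_powerMeasure hθ one_pos, Real.one_rpow, mul_one,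
    one_div] at hlim
  refine hlim.congr' ?_
  filter_upwards [eventually_gt_atTop 0] with x hx
  rw [logMeasure_real_Iic hf hx.le, hLaplace hx]

end LogMeasure

section EulerProduct

variable {A : Set ℕ} {x : ℝ} {m n p : ℕ}

/-- The positive integers all of whose prime factors lie in `A`; if `A` consists of primes, this
is the multiplicative monoid generated by `A`. -/
def primeSupported (A : Set ℕ) : Set ℕ :=
  {n | n ≠ 0 ∧ ∀ p : ℕ, p.Prime → p ∣ n → p ∈ A}

theorem one_mem_primeSupported (A : Set ℕ) : 1 ∈ primeSupported A :=
  ⟨one_ne_zero, fun _ hp h => absurd (Nat.dvd_one.1 h) hp.ne_one⟩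

theorem mul_mem_primeSupported_iff :
    m * n ∈ primeSupported A ↔ m ∈ primeSupported A ∧ n ∈ primeSupported A := by
  refine ⟨fun ⟨h0, h⟩ => ⟨⟨left_ne_zero_of_mul h0, fun p hp hd => h p hp (hd.mul_right n)⟩,
    right_ne_zero_of_mul h0, fun p hp hd => h p hp (hd.mul_left m)⟩, ?_⟩
  rintro ⟨⟨hm0, hm⟩, hn0, hn⟩
  exact ⟨mul_ne_zero hm0 hn0, fun p hp hd => (hp.dvd_mul.1 hd).elim (hm p hp) (hn p hp)⟩

theorem prime_mem_primeSupported_iff (hp : p.Prime) : p ∈ primeSupported A ↔ p ∈ A :=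
  ⟨fun h => h.2 p hp dvd_rfl, fun h => ⟨hp.ne_zero, fun _ hq hd =>
    (Nat.prime_dvd_prime_iff_eq hq hp).1 hd ▸ h⟩⟩

theorem recipWeight_mul (A : Set ℕ) (x : ℝ) (m n : ℕ) :
    recipWeight (primeSupported A) x (m * n) =
      recipWeight (primeSupported A) x m * recipWeight (primeSupported A) x n := by
  simp only [recipWeight, Set.indicator_apply, mul_mem_primeSupported_iff]
  by_cases hm : m ∈ primeSupported A <;> by_cases hn : n ∈ primeSupported A
  · rw [if_pos ⟨hm, hn⟩, if_pos hm, if_pos hn, Nat.cast_mul, mul_inv,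
      Real.log_mul (Nat.cast_ne_zero.2 hm.1) (Nat.cast_ne_zero.2 hn.1), add_div, neg_add,
      Real.exp_add, mul_mul_mul_comm]
  all_goals simp [hm, hn]

theorem recipWeight_primeSupported_one (A : Set ℕ) (x : ℝ) :
    recipWeight (primeSupported A) x 1 = 1 := by
  simp [recipWeight, one_mem_primeSupported]

theorem recipWeight_primeSupported_prime (hp : p.Prime) :
    recipWeight (primeSupported A) x p = recipWeight A x p := by
  simp only [recipWeight, Set.indicator_apply, prime_mem_primeSupported_iff hp]

theorem one_le_recipLaplace_primeSupported (A : Set ℕ) (hx : 0 < x) :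
    1 ≤ recipLaplace (primeSupported A) x := by
  have h := (summable_recipWeight (primeSupported A) hx).sum_le_tsum {1}
    fun n _ => recipWeight_nonneg _ _ n
  rwa [Finset.sum_singleton, recipWeight_primeSupported_one] at h

theorem recipLaplace_primeSupported_pos (A : Set ℕ) (hx : 0 < x) :
    0 < recipLaplace (primeSupported A) x :=
  one_pos.trans_le (one_le_recipLaplace_primeSupported A hx)

theorem tendsto_prod_primesBelow_recipWeight (A : Set ℕ) (hx : 0 < x) :
    Tendsto (fun n : ℕ => ∏ p ∈ n.primesBelow, (1 - recipWeight A x p)⁻¹) atTop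
      (nhds (recipLaplace (primeSupported A) x)) := by
  let f : ℕ →*₀ ℝ :=
    { toFun := recipWeight (primeSupported A) x
      map_zero' := by simp [recipWeight]
      map_one' := recipWeight_primeSupported_one A x
      map_mul' := recipWeight_mul A x }
  refine (EulerProduct.eulerProduct_completely_multiplicative (f := f)
    (summable_recipWeight (primeSupported A) hx).norm).congr fun n => ?_
  exact Finset.prod_congr rfl fun p hp => by
    rw [← recipWeight_primeSupported_prime (Nat.prime_of_mem_primesBelow hp)]
    rfl

theorem harmSum_mem_eq_prod (s : Finset ℕ) :
    harmSum (· ∈ s) = ∏ p ∈ s with p.Prime, (1 - (p : ℝ)⁻¹)⁻¹ := by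
  let f : ℕ →* ℝ := (invMonoidWithZeroHom.comp (Nat.castRingHom ℝ).toMonoidWithZeroHom)
  have hf : ∀ {p : ℕ}, p.Prime → ‖f p‖ < 1 := fun {p} hp => by
    change ‖(p : ℝ)⁻¹‖ < 1
    rw [norm_inv, Real.norm_natCast]
    exact inv_lt_one_of_one_lt₀ (by exact_mod_cast hp.one_lt)
  have hset : {n : ℕ | 0 < n ∧ ∀ p : ℕ, p.Prime → p ∣ n → p ∈ s} = Nat.factoredNumbers s := by
    ext n
    simp only [Set.mem_ofPred_eq, Nat.mem_factoredNumbers, Nat.mem_primeFactorsList',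
      Nat.pos_iff_ne_zero]
    exact and_congr_right fun h0 =>
      ⟨fun h p hp => h p hp.1 hp.2.1, fun h p hp hd => h p ⟨hp, hd, h0⟩⟩
  have hprod := (EulerProduct.summable_and_hasSum_factoredNumbers_prod_filter_prime_geometric hf
    s).2.tsum_eq
  rw [← hset] at hprod
  exact (tsum_congr fun n => one_div _).trans hprod

/-- The difference between `-log (1 - y)` and its linear part, by which the logarithm of an Euler
product differs from the corresponding sum over primes. -/
noncomputable def logRemainder (y : ℝ) : ℝ :=
  -Real.log (1 - y) - y

theorem abs_logRemainder_le {y : ℝ} (hy : |y| ≤ 1 / 2) : |logRemainder y| ≤ 2 * y ^ 2 := by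
  have h := Real.abs_log_sub_add_sum_range_le (hy.trans_lt one_half_lt_one) 1
  calc |logRemainder y| = |y + Real.log (1 - y)| := by
        rw [logRemainder, ← abs_neg]; ring_nf
    _ ≤ |y| ^ 2 / (1 - |y|) := by simpa using h
    _ ≤ |y| ^ 2 / (1 / 2) := by gcongr; linarith
    _ = 2 * y ^ 2 := by rw [sq_abs]; ring

theorem log_prod_inv_one_sub (s : Finset ℕ) {y : ℕ → ℝ} (hy : ∀ p ∈ s, y p < 1) :
    Real.log (∏ p ∈ s, (1 - y p)⁻¹) = ∑ p ∈ s, y p + ∑ p ∈ s, logRemainder (y p) := by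
  rw [Real.log_prod fun p hp => inv_ne_zero (sub_pos.2 (hy p hp)).ne', ← Finset.sum_add_distrib]
  exact Finset.sum_congr rfl fun p _ => by rw [Real.log_inv, logRemainder]; ring

theorem recip_indicator_le_half (hA : ∀ p ∈ A, p.Prime) (p : ℕ) :
    A.indicator (fun n : ℕ => (n : ℝ)⁻¹) p ≤ 1 / 2 := by
  refine Set.indicator_apply_le' (fun hp => ?_) fun _ => by norm_num
  rw [one_div]
  exact inv_anti₀ two_pos (by exact_mod_cast (hA p hp).two_le)

theorem abs_logRemainder_le_inv_sq (hA : ∀ p ∈ A, p.Prime) {y : ℝ} (hy0 : 0 ≤ y)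
    (hy : y ≤ A.indicator (fun n : ℕ => (n : ℝ)⁻¹) p) :
    |logRemainder y| ≤ 2 * ((p : ℝ) ^ 2)⁻¹ := by
  have hle : A.indicator (fun n : ℕ => (n : ℝ)⁻¹) p ≤ (p : ℝ)⁻¹ :=
    Set.indicator_le_self' (fun _ _ => by positivity) p
  refine (abs_logRemainder_le ?_).trans ?_
  · rw [abs_of_nonneg hy0]
    exact hy.trans (recip_indicator_le_half hA p)
  · rw [← inv_pow]
    gcongr
    exact hy.trans hle

theorem summable_two_mul_inv_sq : Summable fun p : ℕ => 2 * ((p : ℝ) ^ 2)⁻¹ :=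
  (Real.summable_nat_pow_inv.2 one_lt_two).mul_left 2

theorem summable_logRemainder (hA : ∀ p ∈ A, p.Prime) {y : ℕ → ℝ} (hy0 : ∀ p, 0 ≤ y p)
    (hy : ∀ p, y p ≤ A.indicator (fun n : ℕ => (n : ℝ)⁻¹) p) :
    Summable fun p => logRemainder (y p) :=
  .of_norm_bounded summable_two_mul_inv_sq fun p => abs_logRemainder_le_inv_sq hA (hy0 p) (hy p)

theorem log_recipLaplace_primeSupported (hA : ∀ p ∈ A, p.Prime) (hx : 0 < x) :
    Real.log (recipLaplace (primeSupported A) x) =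
      recipLaplace A x + ∑' p, logRemainder (recipWeight A x p) := by
  have hremainder := summable_logRemainder hA (recipWeight_nonneg A x) (recipWeight_le A hx.le)
  have hsum := (summable_recipWeight A hx).hasSum.tendsto_sum_nat.add
    hremainder.hasSum.tendsto_sum_nat
  refine tendsto_nhds_unique ((tendsto_prod_primesBelow_recipWeight A hx).log
    (recipLaplace_primeSupported_pos A hx).ne') (hsum.congr fun n => ?_)
  have hprime : ∀ p, (1 - recipWeight A x p)⁻¹ ≠ 1 → p.Prime := fun p hp => by
    by_contra h
    exact hp (by simp [recipWeight, Set.indicator_of_notMem fun hpA => h (hA p hpA)])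
  rw [Nat.primesBelow, Finset.prod_filter_of_ne fun p _ => hprime p, log_prod_inv_one_sub]
  exact fun p _ => ((recipWeight_le A hx.le p).trans (recip_indicator_le_half hA p)).trans_lt
    one_half_lt_one

theorem harmSum_eq_prod (hA : ∀ p ∈ A, p.Prime) (N : ℕ) :
    harmSum (fun p => p ≤ N ∧ p ∈ A) =
      ∏ p ∈ Finset.Icc 0 N, (1 - A.indicator (fun n : ℕ => (n : ℝ)⁻¹) p)⁻¹ := by
  have hmem : (fun p => p ≤ N ∧ p ∈ A) = (· ∈ ({p ∈ Finset.Icc 0 N | p ∈ A} : Finset ℕ)) := by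
    simp
  rw [hmem, harmSum_mem_eq_prod, Finset.filter_filter, Finset.prod_filter]
  refine Finset.prod_congr rfl fun p _ => ?_
  by_cases hp : p ∈ A
  · rw [if_pos ⟨hp, hA p hp⟩, Set.indicator_of_mem hp]
  · simp [hp]

theorem harmSum_pos (hA : ∀ p ∈ A, p.Prime) (N : ℕ) : 0 < harmSum fun p => p ≤ N ∧ p ∈ A := by
  rw [harmSum_eq_prod hA]
  exact Finset.prod_pos fun p _ => inv_pos.2 (by linarith [recip_indicator_le_half hA p])

theorem tendsto_recipWeight (A : Set ℕ) (n : ℕ) :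
    Tendsto (fun x => recipWeight A x n) atTop (nhds (A.indicator (fun n => (n : ℝ)⁻¹) n)) := by
  have hlog : Tendsto (fun x => Real.log n / x) atTop (nhds 0) :=
    tendsto_const_nhds.div_atTop tendsto_id
  simpa [recipWeight] using (hlog.neg.rexp.const_mul (A.indicator (fun n => (n : ℝ)⁻¹) n))

theorem tendsto_tsum_logRemainder (hA : ∀ p ∈ A, p.Prime) :
    Tendsto (fun x => ∑' p, logRemainder (recipWeight A x p)) atTop
      (nhds (∑' p, logRemainder (A.indicator (fun n : ℕ => (n : ℝ)⁻¹) p))) := by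
  refine tendsto_tsum_of_dominated_convergence summable_two_mul_inv_sq (fun p => ?_) ?_
  · have hp : 1 - A.indicator (fun n : ℕ => (n : ℝ)⁻¹) p ≠ 0 := by
      linarith [recip_indicator_le_half hA p]
    exact (((tendsto_recipWeight A p).const_sub 1).log hp).neg.sub (tendsto_recipWeight A p)
  · filter_upwards [eventually_ge_atTop 0] with x hx p
    exact abs_logRemainder_le_inv_sq hA (recipWeight_nonneg A x p) (recipWeight_le A hx p)

theorem tendsto_log_harmSum_sub_recipSum (hA : ∀ p ∈ A, p.Prime) :
    Tendsto (fun N : ℕ => Real.log (harmSum fun p => p ≤ N ∧ p ∈ A) - recipSum A (Real.log N))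
      atTop (nhds (∑' p, logRemainder (A.indicator (fun n : ℕ => (n : ℝ)⁻¹) p))) := by
  have hsum := (summable_logRemainder hA (recip_indicator_nonneg A) fun _ => le_rfl).hasSum
  refine (hsum.tendsto_sum_nat.comp (tendsto_add_atTop_nat 1)).congr' ?_
  filter_upwards [eventually_ne_atTop 0] with N hN
  rw [harmSum_eq_prod hA, recipSum, logPartialSum_log_natCast hN, log_prod_inv_one_sub _ fun p _ =>
    (recip_indicator_le_half hA p).trans_lt one_half_lt_one, add_sub_cancel_left,
    Function.comp_apply, Nat.range_succ_eq_Icc_zero]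

end EulerProduct

section LogVariation

variable {A : Set ℕ} {θ : ℝ}

theorem tendsto_log_recipLaplace_sub_recipSum (hA : ∀ p ∈ A, p.Prime)
    (hlog : IsDeHaan (recipSum A) θ) :
    Tendsto (fun x => Real.log (recipLaplace (primeSupported A) x) - recipSum A x) atTop
      (nhds (-(Real.eulerMascheroniConstant * θ) +
        ∑' p, logRemainder (A.indicator (fun n : ℕ => (n : ℝ)⁻¹) p))) := by
  refine ((tendsto_recipLaplace_sub_recipSum hA hlog).add (tendsto_tsum_logRemainder hA)).congr' ?_
  filter_upwards [eventually_gt_atTop 0] with x hx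
  rw [log_recipLaplace_primeSupported hA hx]
  ring

theorem isRegularlyVarying_recipLaplace_primeSupported (hA : ∀ p ∈ A, p.Prime)
    (hlog : IsDeHaan (recipSum A) θ) :
    IsRegularlyVarying (recipLaplace (primeSupported A)) θ := by
  intro v hv
  have hdiff := tendsto_log_recipLaplace_sub_recipSum hA hlog
  have hexp := (((hdiff.comp (tendsto_id.const_mul_atTop hv)).sub hdiff).add (hlog v hv)).rexp
  rw [sub_self, zero_add, mul_comm, ← Real.rpow_def_of_pos hv] at hexp
  refine hexp.congr' ?_
  filter_upwards [eventually_gt_atTop 0] with x hx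
  rw [← Real.exp_log (div_pos (recipLaplace_primeSupported_pos A (mul_pos hv hx))
    (recipLaplace_primeSupported_pos A hx)), Real.log_div
    (recipLaplace_primeSupported_pos A (mul_pos hv hx)).ne'
    (recipLaplace_primeSupported_pos A hx).ne']
  simp only [Function.comp_apply, id]
  ring_nf

theorem tendsto_harmSum_div_recipLaplace (hA : ∀ p ∈ A, p.Prime)
    (hlog : IsDeHaan (recipSum A) θ) :
    Tendsto (fun N : ℕ => harmSum (fun p => p ≤ N ∧ p ∈ A) /
      recipLaplace (primeSupported A) (Real.log N)) atTop
      (nhds (Real.exp (Real.eulerMascheroniConstant * θ))) := by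
  have hexp := ((tendsto_log_harmSum_sub_recipSum hA).sub
    ((tendsto_log_recipLaplace_sub_recipSum hA hlog).comp
      (Real.tendsto_log_atTop.comp tendsto_natCast_atTop_atTop))).rexp
  rw [sub_add_cancel_right, neg_neg] at hexp
  refine hexp.congr' ?_
  filter_upwards [eventually_gt_atTop 1] with N hN
  have hpos := recipLaplace_primeSupported_pos A (Real.log_pos (by exact_mod_cast hN : (1 : ℝ) < N))
  rw [← Real.exp_log (div_pos (harmSum_pos hA N) hpos),
    Real.log_div (harmSum_pos hA N).ne' hpos.ne']
  simp only [Function.comp_apply]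
  ring_nf

end LogVariation

theorem sum_Icc_one_eq_recipSum_primeSupported (A : Set ℕ) {N : ℕ} (hN : N ≠ 0) :
    ∑ n ∈ Finset.Icc 1 N, (if ∀ p : ℕ, p.Prime → p ∣ n → p ∈ A then (1 : ℝ) / (n : ℝ) else 0) =
      recipSum (primeSupported A) (Real.log N) := by
  rw [recipSum, logPartialSum_log_natCast hN, ← Finset.add_sum_Ioc_eq_sum_Icc N.zero_le,
    Set.indicator_of_notMem (fun h => h.1 rfl), zero_add]
  refine Finset.sum_congr rfl fun n hn => ?_
  have hn0 : n ≠ 0 := Nat.one_le_iff_ne_zero.1 (Finset.mem_Icc.1 hn).1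
  simp only [Set.indicator_apply, primeSupported, Set.mem_ofPred_eq, ne_eq, hn0, not_false_eq_true,
    true_and, one_div]

theorem tendsto_recipSum_div_recipLaplace_primeSupported {A : Set ℕ} {θ : ℝ}
    (hA : ∀ p ∈ A, p.Prime)
    (hlog : IsDeHaan (recipSum A) θ) :
    Tendsto (fun x => recipSum (primeSupported A) x / recipLaplace (primeSupported A) x) atTop
      (nhds (Real.Gamma (θ + 1))⁻¹) :=
  tendsto_logPartialSum_div_logLaplace (hlog.nonneg (recipSum_mono A))
    (recip_indicator_nonneg _) (n := 1) (by simp [one_mem_primeSupported])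
    (fun _ hx => summable_recipWeight _ hx)
    (isRegularlyVarying_recipLaplace_primeSupported hA hlog)

theorem generalized_mertens_i_general {A : Set ℕ} {θ : ℝ} (hA : ∀ p ∈ A, p.Prime)
    (hlog : IsDeHaan (recipSum A) θ) :
    Tendsto
      (fun N : ℕ =>
        harmSum (fun p => p ≤ N ∧ p ∈ A) /
        ∑ n ∈ Finset.Icc 1 N,
          if ∀ p : ℕ, p.Prime → p ∣ n → p ∈ A then (1 : ℝ) / (n : ℝ) else 0)
      atTop
      (nhds (Real.exp (Real.eulerMascheroniConstant * θ) * Real.Gamma (θ + 1))) := by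
  have hθ : 0 ≤ θ := hlog.nonneg (recipSum_mono A)
  have hGamma : (Real.Gamma (θ + 1))⁻¹ ≠ 0 := inv_ne_zero (Real.Gamma_pos_of_pos (by linarith)).ne'
  have hsum := (tendsto_recipSum_div_recipLaplace_primeSupported hA hlog).comp
    (Real.tendsto_log_atTop.comp tendsto_natCast_atTop_atTop)
  have hratio := (tendsto_harmSum_div_recipLaplace hA hlog).div hsum hGamma
  rw [div_inv_eq_mul] at hratio
  refine hratio.congr' ?_
  filter_upwards [eventually_gt_atTop 1] with N hN
  have hpos := recipLaplace_primeSupported_pos A (Real.log_pos (by exact_mod_cast hN : (1 : ℝ) < N))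
  rw [sum_Icc_one_eq_recipSum_primeSupported A (by omega)]
  exact div_div_div_cancel_right₀ hpos.ne' _ _

/-- **Generalized Mertens formula (Theorem 1, part (i)).**
If `A` is a set of primes with natural density `θ ∈ (0,1]` within the primes, then the ratio
of the harmonic sum over integers whose prime factors are `≤ N` and lie in `A` to the harmonic
sum over integers `n ≤ N` whose prime factors lie in `A` tends to `e^{γθ} Γ(θ+1)`. -/
theorem generalized_mertens_i
    (A : Set ℕ) (hA : ∀ p ∈ A, Nat.Prime p)
    (θ : ℝ) (hθ : θ ∈ Set.Ioc (0 : ℝ) 1)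
    (hdens : Tendsto
      (fun N : ℕ => ((A ∩ Set.Icc 1 N).ncard : ℝ) / (({p : ℕ | Nat.Prime p} ∩ Set.Icc 1 N).ncard : ℝ))
      atTop (nhds θ)) :
    Tendsto
      (fun N : ℕ =>
        harmSum (fun p => p ≤ N ∧ p ∈ A) /
        ∑ n ∈ Finset.Icc 1 N,
          if ∀ p : ℕ, p.Prime → p ∣ n → p ∈ A then (1 : ℝ) / (n : ℝ) else 0)
      atTop
      (nhds (Real.exp (Real.eulerMascheroniConstant * θ) * Real.Gamma (θ + 1))) :=
  generalized_mertens_i_general hA (isDeHaan_recipSum_of_density hA hdens)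
end

section
/- Let k ≥ 2 and let A be a subset of the prime numbers whose natural density in the primes exists and equals θ ∈ (0,1]. Then the limit as N → ∞ of the ratio (∑_{k-free n ≥ 1 : every prime factor of n is ≤ N and lies in A} 1/n) / (∑_{k-free n with 1 ≤ n ≤ N : every prime factor of n lies in A} 1/n) equals e^{γθ} · Γ(θ+1). -/
open Filter
open scoped Classical

/-- `n` is `k`-free: no `k`-th power of a prime divides `n`. -/
def KFree (k n : ℕ) : Prop := ∀ p : ℕ, p.Prime → ¬ p ^ k ∣ n

/-- The sum of `1/n` over `k`-free positive integers `n` all of whose prime factors lie in the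
set described by the predicate `P`. -/
noncomputable def kfreeHarmSum (k : ℕ) (P : ℕ → Prop) : ℝ :=
  ∑' n : {n : ℕ // 0 < n ∧ (∀ p : ℕ, p.Prime → p ∣ n → P p) ∧ KFree k n},
    (1 : ℝ) / ((n : ℕ) : ℝ)

/-!
Let `f` be the indicator function of the `k`-free integers with prime factors in `A`, `F` its
Dirichlet series, and `P(s) = ∑_{p ∈ A} p ^ (-s)`. Comparing `A` with the set of all primes by
partial summation, and using `(s - 1) ζ(s) → 1`, one finds `P(1 + aσ) - P(1 + bσ) → θ log (b / a)`
as `σ → 0⁺`. The Euler product reads `F = exp (P + R)` with `R` continuous on `[1, ∞)`, so that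
`F(1 + cσ) / F(1 + σ) → c ^ (-θ)`. At `s = 1 + 1 / log N`, Karamata's Tauberian theorem then gives
`∑_{n ≤ N} f(n) / n ∼ F(s) / Γ(θ + 1)`, and de Haan's gives
`∑_{p ≤ N, p ∈ A} 1 / p = P(s) + γ θ + o(1)`, whence the Euler product over `p ≤ N` is asymptotic
to `e ^ (γ θ) F(s)`. Both Tauberian theorems are instances of the method of moments: in the variable
`y = e ^ (-σ X)`, where `X = log n`, the hypotheses give the limits of all moments of a weighted
law on `[0, 1]`, and the conclusion is the limit of the integral of an almost everywhere continuous
test function.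
-/

section

open MeasureTheory Set
open scoped Topology NNReal BoundedContinuousFunction

section LipschitzEnvelope

variable {X : Type*} [PseudoMetricSpace X] {φ : X → ℝ} {C : ℝ}

/-- The Pasch–Hausdorff envelope of `φ`: the largest `m`-Lipschitz function below `φ`. -/
noncomputable def lipschitzEnvelope (φ : X → ℝ) (m : ℝ≥0) (x : X) : ℝ :=
  ⨅ y, φ y + m * dist x y

lemma neg_le_add_mul_dist (hφ : ∀ x, |φ x| ≤ C) (m : ℝ≥0) (x y : X) :
    -C ≤ φ y + m * dist x y :=
  (abs_le.1 (hφ y)).1.trans (le_add_of_nonneg_right (by positivity))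

lemma bddBelow_range_add_mul_dist (hφ : ∀ x, |φ x| ≤ C) (m : ℝ≥0) (x : X) :
    BddBelow (range fun y ↦ φ y + m * dist x y) :=
  ⟨-C, forall_mem_range.2 (neg_le_add_mul_dist hφ m x)⟩

lemma lipschitzEnvelope_le (hφ : ∀ x, |φ x| ≤ C) (m : ℝ≥0) (x : X) :
    lipschitzEnvelope φ m x ≤ φ x :=
  (ciInf_le (bddBelow_range_add_mul_dist hφ m x) x).trans (by simp)

lemma abs_lipschitzEnvelope_le (hφ : ∀ x, |φ x| ≤ C) (m : ℝ≥0) (x : X) :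
    |lipschitzEnvelope φ m x| ≤ C :=
  have : Nonempty X := ⟨x⟩
  abs_le.2 ⟨le_ciInf (neg_le_add_mul_dist hφ m x),
    (lipschitzEnvelope_le hφ m x).trans (abs_le.1 (hφ x)).2⟩

lemma lipschitzWith_lipschitzEnvelope (hφ : ∀ x, |φ x| ≤ C) (m : ℝ≥0) :
    LipschitzWith m (lipschitzEnvelope φ m) := by
  refine LipschitzWith.of_le_add_mul m fun x x' ↦ ?_
  have : Nonempty X := ⟨x⟩
  rw [← sub_le_iff_le_add]
  refine le_ciInf fun y ↦ ?_
  calc lipschitzEnvelope φ m x - m * dist x x'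
      ≤ φ y + m * dist x y - m * dist x x' := by
        gcongr; exact ciInf_le (bddBelow_range_add_mul_dist hφ m x) y
    _ ≤ φ y + m * dist x' y := by
        nlinarith [dist_triangle x x' y, m.coe_nonneg]

lemma tendsto_lipschitzEnvelope (hφ : ∀ x, |φ x| ≤ C) {x : X} (hx : ContinuousAt φ x) :
    Tendsto (fun m : ℕ ↦ lipschitzEnvelope φ m x) atTop (𝓝 (φ x)) := by
  have : Nonempty X := ⟨x⟩
  refine tendsto_order.2 ⟨fun c hc ↦ ?_, fun c hc ↦ .of_forall fun m ↦
    (lipschitzEnvelope_le hφ m x).trans_lt hc⟩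
  obtain ⟨c', hcc', hc'⟩ := exists_between hc
  obtain ⟨δ, hδ, hball⟩ := Metric.eventually_nhds_iff.1 (hx.eventually_const_lt hc')
  filter_upwards [(tendsto_natCast_atTop_atTop.atTop_mul_const hδ).eventually_ge_atTop (c' + C)]
    with m hm
  refine hcc'.trans_le (le_ciInf fun y ↦ ?_)
  rcases lt_or_ge (dist x y) δ with hy | hy
  · exact (hball (dist_comm x y ▸ hy)).le.trans (le_add_of_nonneg_right (by positivity))
  · have hfar : (m : ℝ) * δ ≤ m * dist x y := by gcongr
    have hbelow := (abs_le.1 (hφ y)).1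
    push_cast
    linarith

end LipschitzEnvelope

section WeakConvergence

variable {ι : Type*} {l : Filter ι}

section Metric

variable {X : Type*} [PseudoMetricSpace X] [MeasurableSpace X] [OpensMeasurableSpace X]
  {μ : ι → Measure X} {ν : Measure X} [IsFiniteMeasure ν] {φ : X → ℝ} {C : ℝ}

lemma eventually_lt_integral_of_ae_continuousAt (hμ : ∀ᶠ i in l, IsFiniteMeasure (μ i))
    (h : ∀ g : X →ᵇ ℝ, Tendsto (fun i ↦ ∫ x, g x ∂μ i) l (𝓝 (∫ x, g x ∂ν)))
    (hφm : Measurable φ) (hφ : ∀ x, |φ x| ≤ C) (hφc : ∀ᵐ x ∂ν, ContinuousAt φ x)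
    {c : ℝ} (hc : c < ∫ x, φ x ∂ν) : ∀ᶠ i in l, c < ∫ x, φ x ∂μ i := by
  let g (m : ℕ) : X →ᵇ ℝ := .ofNormedAddCommGroup (lipschitzEnvelope φ m)
    (lipschitzWith_lipschitzEnvelope hφ m).continuous C (abs_lipschitzEnvelope_le hφ m)
  have hlim : Tendsto (fun m ↦ ∫ x, g m x ∂ν) atTop (𝓝 (∫ x, φ x ∂ν)) :=
    tendsto_integral_of_dominated_convergence (fun _ ↦ C)
      (fun m ↦ (g m).continuous.measurable.aestronglyMeasurable) (integrable_const C)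
      (fun m ↦ .of_forall (abs_lipschitzEnvelope_le hφ m))
      (hφc.mono fun x hx ↦ tendsto_lipschitzEnvelope hφ hx)
  obtain ⟨m, hm⟩ := (hlim.eventually_const_lt hc).exists
  filter_upwards [hμ, (h (g m)).eventually_const_lt hm] with i _ hi
  exact hi.trans_le <| integral_mono ((g m).integrable _)
    (.of_bound hφm.aestronglyMeasurable C (.of_forall hφ)) (lipschitzEnvelope_le hφ m)

theorem tendsto_integral_of_ae_continuousAt (hμ : ∀ᶠ i in l, IsFiniteMeasure (μ i))
    (h : ∀ g : X →ᵇ ℝ, Tendsto (fun i ↦ ∫ x, g x ∂μ i) l (𝓝 (∫ x, g x ∂ν)))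
    (hφm : Measurable φ) (hφ : ∀ x, |φ x| ≤ C) (hφc : ∀ᵐ x ∂ν, ContinuousAt φ x) :
    Tendsto (fun i ↦ ∫ x, φ x ∂μ i) l (𝓝 (∫ x, φ x ∂ν)) := by
  refine tendsto_order.2 ⟨fun c ↦ eventually_lt_integral_of_ae_continuousAt hμ h hφm hφ hφc,
    fun c hc ↦ ?_⟩
  have hneg := eventually_lt_integral_of_ae_continuousAt (φ := -φ) (c := -c) hμ h hφm.neg
    (fun x ↦ (abs_neg (φ x)).trans_le (hφ x)) (hφc.mono fun x hx ↦ hx.neg)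
    (by simpa [integral_neg] using hc)
  simpa [integral_neg] using hneg

end Metric

section Moments

variable {μ : ι → Measure ℝ} {ν : Measure ℝ} [IsFiniteMeasure ν] {a b : ℝ}

lemma integrable_of_ae_mem_Icc_s1 (hν : ∀ᵐ y ∂ν, y ∈ Icc a b) {φ : ℝ → ℝ} (hφ : Continuous φ) :
    Integrable φ ν := by
  obtain ⟨C, hC⟩ := (isCompact_Icc (a := a) (b := b)).exists_bound_of_continuousOn hφ.continuousOn
  exact .of_bound hφ.aestronglyMeasurable C (hν.mono hC)

lemma integral_polynomial_eval (hν : ∀ᵐ y ∂ν, y ∈ Icc a b) (p : Polynomial ℝ) :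
    ∫ y, p.eval y ∂ν = ∑ j ∈ Finset.range (p.natDegree + 1), p.coeff j * ∫ y, y ^ j ∂ν := by
  simp_rw [Polynomial.eval_eq_sum_range, ← integral_const_mul]
  exact integral_finsetSum _ fun j _ ↦
    (integrable_of_ae_mem_Icc_s1 hν (continuous_pow j)).const_mul _

lemma abs_integral_sub_integral_le (hν : ∀ᵐ y ∂ν, y ∈ Icc a b) {φ ψ : ℝ → ℝ}
    (hφ : Continuous φ) (hψ : Continuous ψ) {δ : ℝ} (h : ∀ y ∈ Icc a b, |φ y - ψ y| ≤ δ) :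
    |∫ y, φ y ∂ν - ∫ y, ψ y ∂ν| ≤ δ * ν.real univ := by
  rw [← integral_sub (integrable_of_ae_mem_Icc_s1 hν hφ) (integrable_of_ae_mem_Icc_s1 hν hψ),
    ← Real.norm_eq_abs]
  exact norm_integral_le_of_norm_le_const (hν.mono h)

theorem tendsto_integral_of_tendsto_moments_s1
    (hμ : ∀ᶠ i in l, IsFiniteMeasure (μ i) ∧ ∀ᵐ y ∂μ i, y ∈ Icc a b)
    (hν : ∀ᵐ y ∂ν, y ∈ Icc a b)
    (h : ∀ j : ℕ, Tendsto (fun i ↦ ∫ y, y ^ j ∂μ i) l (𝓝 (∫ y, y ^ j ∂ν)))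
    {φ : ℝ → ℝ} (hφ : Continuous φ) :
    Tendsto (fun i ↦ ∫ y, φ y ∂μ i) l (𝓝 (∫ y, φ y ∂ν)) := by
  have hpoly (p : Polynomial ℝ) :
      Tendsto (fun i ↦ ∫ y, p.eval y ∂μ i) l (𝓝 (∫ y, p.eval y ∂ν)) := by
    rw [integral_polynomial_eval hν]
    refine (tendsto_finsetSum _ fun j _ ↦ (h j).const_mul (p.coeff j)).congr' ?_
    filter_upwards [hμ] with i ⟨_, hi⟩
    exact (integral_polynomial_eval hi p).symm
  have hmass : Tendsto (fun i ↦ (μ i).real univ) l (𝓝 (ν.real univ)) := by simpa using h 0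
  rw [Metric.tendsto_nhds]
  intro ε hε
  obtain ⟨δ, hδ, hδε⟩ : ∃ δ > 0, δ * (ν.real univ + 1) + δ + δ * ν.real univ = ε :=
    ⟨ε / (2 * ν.real univ + 2), by positivity, by field_simp; ring⟩
  obtain ⟨p, hp⟩ := exists_polynomial_near_of_continuousOn a b φ hφ.continuousOn δ hδ
  have hp' (y) (hy : y ∈ Icc a b) : |φ y - p.eval y| ≤ δ := abs_sub_comm _ (φ y) ▸ (hp y hy).le
  filter_upwards [hμ, hmass.eventually_lt_const (lt_add_one _),
    Metric.tendsto_nhds.1 (hpoly p) δ hδ] with i ⟨_, hi⟩ hmi hpi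
  calc dist (∫ y, φ y ∂μ i) (∫ y, φ y ∂ν)
      ≤ dist (∫ y, φ y ∂μ i) (∫ y, p.eval y ∂μ i) + dist (∫ y, p.eval y ∂μ i) (∫ y, p.eval y ∂ν)
        + dist (∫ y, p.eval y ∂ν) (∫ y, φ y ∂ν) := dist_triangle4 _ _ _ _
    _ < δ * (ν.real univ + 1) + δ + δ * ν.real univ := by
        refine add_lt_add_of_lt_of_le (add_lt_add_of_le_of_lt ?_ hpi) ?_
        · exact (abs_integral_sub_integral_le hi hφ p.continuous hp').trans (by gcongr)
        · exact abs_integral_sub_integral_le hν p.continuous hφ fun y hy ↦ (hp y hy).le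
    _ = ε := hδε

theorem tendsto_integral_of_tendsto_moments_of_ae_continuousAt
    (hμ : ∀ᶠ i in l, IsFiniteMeasure (μ i) ∧ ∀ᵐ y ∂μ i, y ∈ Icc a b)
    (hν : ∀ᵐ y ∂ν, y ∈ Icc a b)
    (h : ∀ j : ℕ, Tendsto (fun i ↦ ∫ y, y ^ j ∂μ i) l (𝓝 (∫ y, y ^ j ∂ν)))
    {φ : ℝ → ℝ} {C : ℝ} (hφm : Measurable φ) (hφ : ∀ y, |φ y| ≤ C)
    (hφc : ∀ᵐ y ∂ν, ContinuousAt φ y) :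
    Tendsto (fun i ↦ ∫ y, φ y ∂μ i) l (𝓝 (∫ y, φ y ∂ν)) :=
  tendsto_integral_of_ae_continuousAt (hμ.mono fun _ hi ↦ hi.1)
    (fun g ↦ tendsto_integral_of_tendsto_moments_s1 hμ hν h g.continuous) hφm hφ hφc

end Moments
end WeakConvergence

section EulerMascheroni

lemma integrableOn_indicator_Iic_one_mul_rpow {s : ℝ} (hs : 0 < s) :
    IntegrableOn (fun u : ℝ ↦ (Iic 1).indicator 1 u * u ^ (s - 1)) (Ioi 0) ∧
      ∫ u in Ioi (0 : ℝ), (Iic 1).indicator 1 u * u ^ (s - 1) = 1 / s := by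
  have hint : IntegrableOn (fun u : ℝ ↦ u ^ (s - 1)) (Ioc 0 1) :=
    (intervalIntegral.intervalIntegrable_rpow' (by linarith)).1
  have hind : (fun u : ℝ ↦ (Iic 1).indicator 1 u * u ^ (s - 1)) =
      (Iic 1).indicator fun u ↦ u ^ (s - 1) := by
    ext u
    simp only [indicator_apply, Pi.one_apply, ite_mul, one_mul, zero_mul]
  rw [hind, integrableOn_indicator_iff measurableSet_Iic, Iic_inter_Ioi,
    setIntegral_indicator measurableSet_Iic, Ioi_inter_Iic,
    ← intervalIntegral.integral_of_le zero_le_one, integral_rpow (.inl (by linarith))]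
  exact ⟨hint, by simp [Real.zero_rpow hs.ne']⟩

lemma integral_indicator_sub_exp_neg_mul_rpow {s : ℝ} (hs : 0 < s) :
    ∫ u in Ioi (0 : ℝ), ((Iic 1).indicator 1 u - Real.exp (-u)) * u ^ (s - 1) =
      -((Real.Gamma (1 + s) - Real.Gamma 1) / s) := by
  obtain ⟨hint, heq⟩ := integrableOn_indicator_Iic_one_mul_rpow hs
  simp_rw [sub_mul]
  rw [integral_sub hint (Real.GammaIntegral_convergent hs), heq, ← Real.Gamma_eq_integral hs,
    add_comm, Real.Gamma_add_one hs.ne', Real.Gamma_one]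
  field_simp
  ring

lemma abs_indicator_sub_exp_neg_mul_rpow_le {s u : ℝ} (hs : s ∈ Ioc 0 1) (hu : 0 < u) :
    |((Iic 1).indicator 1 u - Real.exp (-u)) * u ^ (s - 1)| ≤
      (Iic 1).indicator 1 u * u ^ ((1 : ℝ) - 1) + Real.exp (-u) := by
  have hexp := Real.exp_pos (-u)
  rw [abs_mul, abs_of_pos (Real.rpow_pos_of_pos hu _)]
  rcases le_or_gt u 1 with h | h
  · have hsub : |1 - Real.exp (-u)| ≤ u := by
      rw [abs_of_nonneg (sub_nonneg.2 (Real.exp_le_one_iff.2 (by linarith)))]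
      linarith [Real.add_one_le_exp (-u)]
    have hpow : u ^ (s - 1) ≤ u⁻¹ := by
      rw [← Real.rpow_neg_one]
      exact Real.rpow_le_rpow_of_exponent_ge hu h (by linarith [hs.1])
    calc |(Iic 1).indicator 1 u - Real.exp (-u)| * u ^ (s - 1)
        ≤ u * u⁻¹ := by
          rw [indicator_of_mem (mem_Iic.2 h), Pi.one_apply]
          exact mul_le_mul hsub hpow (by positivity) hu.le
      _ ≤ (Iic 1).indicator 1 u * u ^ ((1 : ℝ) - 1) + Real.exp (-u) := by
          simp [hu.ne', indicator_of_mem (mem_Iic.2 h), hexp.le]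
  · have hpow : u ^ (s - 1) ≤ 1 := Real.rpow_le_one_of_one_le_of_nonpos h.le (by linarith [hs.2])
    rw [indicator_of_notMem (notMem_Iic.2 h), zero_sub, abs_neg, abs_of_pos hexp, zero_mul,
      zero_add]
    exact mul_le_of_le_one_right hexp.le hpow

/-- Euler's constant enters as `-Γ'(1)`: the integral is the limit as `s → 0` of
`∫ (1_{u ≤ 1} - e^{-u}) u^{s-1} du = 1 / s - Γ(s) = -(Γ(1 + s) - Γ(1)) / s`. -/
theorem integral_indicator_sub_exp_neg_div :
    ∫ u in Ioi (0 : ℝ), ((Iic 1).indicator 1 u - Real.exp (-u)) / u =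
      Real.eulerMascheroniConstant := by
  have hslope : Tendsto
      (fun s : ℝ ↦ ∫ u in Ioi (0 : ℝ), ((Iic 1).indicator 1 u - Real.exp (-u)) * u ^ (s - 1))
      (𝓝[>] 0) (𝓝 Real.eulerMascheroniConstant) := by
    have h := Real.hasDerivAt_Gamma_one.tendsto_slope_zero_right.neg
    rw [neg_neg] at h
    refine h.congr' ?_
    filter_upwards [self_mem_nhdsWithin] with s hs
    rw [integral_indicator_sub_exp_neg_mul_rpow hs, smul_eq_mul, div_eq_inv_mul]
  refine tendsto_nhds_unique (tendsto_integral_filter_of_dominated_convergence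
    (fun u ↦ (Iic 1).indicator 1 u * u ^ ((1 : ℝ) - 1) + Real.exp (-u)) ?_ ?_ ?_ ?_) hslope
  · refine .of_forall fun s ↦ Measurable.aestronglyMeasurable ?_
    exact ((measurable_one.indicator measurableSet_Iic).sub (by fun_prop)).mul (by fun_prop)
  · filter_upwards [Ioc_mem_nhdsGT zero_lt_one] with s hs
    filter_upwards [ae_restrict_mem measurableSet_Ioi] with u hu
    exact abs_indicator_sub_exp_neg_mul_rpow_le hs hu
  · exact (integrableOn_indicator_Iic_one_mul_rpow one_pos).1.add (integrableOn_exp_neg_Ioi 0)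
  · filter_upwards [ae_restrict_mem measurableSet_Ioi] with u (hu : 0 < u)
    have hcont : ContinuousAt (fun s : ℝ ↦ u ^ (s - 1)) 0 :=
      (Real.continuousAt_const_rpow hu.ne').comp (by fun_prop)
    simpa only [zero_sub, Real.rpow_neg_one, ← div_eq_mul_inv] using
      (hcont.tendsto.const_mul ((Iic 1).indicator 1 u - Real.exp (-u))).mono_left nhdsWithin_le_nhds

end EulerMascheroni

section WeightedLaw

variable {Ω : Type*} [MeasurableSpace Ω] {μ : Measure Ω} {W Y : Ω → ℝ}

/-- The law of `Y` under the measure with density `W` with respect to `μ`. -/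
noncomputable def weightedLaw (μ : Measure Ω) (W Y : Ω → ℝ) : Measure ℝ :=
  (μ.withDensity fun ω ↦ ENNReal.ofReal (W ω)).map Y

lemma isFiniteMeasure_weightedLaw (hW : Integrable W μ) : IsFiniteMeasure (weightedLaw μ W Y) :=
  have := isFiniteMeasure_withDensity_ofReal hW.2
  Measure.isFiniteMeasure_map _ _

lemma ae_weightedLaw (hY : Measurable Y) {p : ℝ → Prop} (hp : MeasurableSet {y | p y})
    (h : ∀ᵐ ω ∂μ, p (Y ω)) : ∀ᵐ y ∂weightedLaw μ W Y, p y :=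
  (ae_map_iff hY.aemeasurable hp).2 (withDensity_absolutelyContinuous μ _ h)

lemma integral_weightedLaw (hW : Measurable W) (hW0 : 0 ≤ᵐ[μ] W) (hY : Measurable Y) {φ : ℝ → ℝ}
    (hφ : Measurable φ) : ∫ y, φ y ∂weightedLaw μ W Y = ∫ ω, W ω * φ (Y ω) ∂μ := by
  rw [weightedLaw, integral_map hY.aemeasurable hφ.aestronglyMeasurable,
    integral_withDensity_eq_integral_toReal_smul hW.ennreal_ofReal (by simp)]
  refine integral_congr_ae (hW0.mono fun ω hω ↦ ?_)
  simp only [ENNReal.toReal_ofReal hω, smul_eq_mul]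

theorem tendsto_integral_mul_comp_of_tendsto_moments {ι Ω' : Type*} {l : Filter ι}
    [MeasurableSpace Ω'] {ν : Measure Ω'} {W Y : ι → Ω → ℝ} {V Z : Ω' → ℝ} {a b : ℝ}
    (hWm : ∀ i, Measurable (W i)) (hYm : ∀ i, Measurable (Y i))
    (hW0 : ∀ᶠ i in l, 0 ≤ᵐ[μ] W i) (hWi : ∀ᶠ i in l, Integrable (W i) μ)
    (hY : ∀ᶠ i in l, ∀ᵐ ω ∂μ, Y i ω ∈ Icc a b)
    (hVm : Measurable V) (hZm : Measurable Z) (hV0 : 0 ≤ᵐ[ν] V) (hVi : Integrable V ν)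
    (hZ : ∀ᵐ ω ∂ν, Z ω ∈ Icc a b)
    (hmom : ∀ j : ℕ,
      Tendsto (fun i ↦ ∫ ω, W i ω * Y i ω ^ j ∂μ) l (𝓝 (∫ ω, V ω * Z ω ^ j ∂ν)))
    {φ : ℝ → ℝ} {C : ℝ} (hφm : Measurable φ) (hφ : ∀ y, |φ y| ≤ C)
    (hφc : ∀ᵐ ω ∂ν, ContinuousAt φ (Z ω)) :
    Tendsto (fun i ↦ ∫ ω, W i ω * φ (Y i ω) ∂μ) l (𝓝 (∫ ω, V ω * φ (Z ω) ∂ν)) := by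
  have := isFiniteMeasure_weightedLaw (Y := Z) hVi
  have hlim {ψ : ℝ → ℝ} (hψ : Measurable ψ) :
      Tendsto (fun i ↦ ∫ ω, W i ω * ψ (Y i ω) ∂μ) l (𝓝 (∫ ω, V ω * ψ (Z ω) ∂ν)) ↔
        Tendsto (fun i ↦ ∫ y, ψ y ∂weightedLaw μ (W i) (Y i)) l
          (𝓝 (∫ y, ψ y ∂weightedLaw ν V Z)) := by
    rw [integral_weightedLaw hVm hV0 hZm hψ]
    refine tendsto_congr' (hW0.mono fun i hi ↦ ?_)
    exact (integral_weightedLaw (hWm i) hi (hYm i) hψ).symm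
  refine (hlim hφm).2 (tendsto_integral_of_tendsto_moments_of_ae_continuousAt (a := a) (b := b)
    ?_ (ae_weightedLaw hZm measurableSet_Icc hZ)
    (fun j ↦ (hlim (measurable_id.pow_const j)).1 (hmom j)) hφm hφ
    (ae_weightedLaw hZm (measurableSet_of_continuousAt φ) hφc))
  filter_upwards [hWi, hY] with i hi hYi
  exact ⟨isFiniteMeasure_weightedLaw hi, ae_weightedLaw (hYm i) measurableSet_Icc hYi⟩

end WeightedLaw

section Tauberian

lemma continuousAt_ite_le {f g : ℝ → ℝ} {c y : ℝ} (hy : y ≠ c) (hf : ContinuousAt f y)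
    (hg : ContinuousAt g y) : ContinuousAt (fun x ↦ if c ≤ x then f x else g x) y := by
  rcases hy.lt_or_gt with h | h
  · exact hg.congr ((eventually_lt_nhds h).mono fun x hx ↦ (if_neg hx.not_ge).symm)
  · exact hf.congr ((eventually_gt_nhds h).mono fun x hx ↦ (if_pos hx.le).symm)

lemma exp_neg_mem_Icc {u : ℝ} (hu : 0 ≤ u) : Real.exp (-u) ∈ Icc (0 : ℝ) 1 :=
  ⟨(Real.exp_pos _).le, Real.exp_le_one_iff.2 (neg_nonpos.2 hu)⟩

lemma ae_restrict_Ioi_exp_neg_ne (c : ℝ) :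
    ∀ᵐ u : ℝ ∂volume.restrict (Ioi 0), Real.exp (-u) ≠ c := by
  refine ae_restrict_of_ae ((Measure.ae_ne volume (-Real.log c)).mono fun u hu h ↦ hu ?_)
  rw [← h, Real.log_exp, neg_neg]

variable {Ω : Type*} [MeasurableSpace Ω] {μ : Measure Ω} {X : Ω → ℝ} {θ : ℝ}

open ProbabilityTheory

/-- The test function with `e^{-u} * karamataTest (e^{-u}) = 1_{u ≤ 1}`, by which averages weighted
by `e^{-sX}` give `μ (X ≤ 1 / s)`. -/
noncomputable def karamataTest (y : ℝ) : ℝ := if Real.exp (-1) ≤ y then 1 / y else 0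

lemma measurable_karamataTest : Measurable karamataTest :=
  Measurable.ite measurableSet_Ici (by fun_prop) measurable_const

lemma abs_karamataTest_le (y : ℝ) : |karamataTest y| ≤ 1 / Real.exp (-1) := by
  unfold karamataTest
  split_ifs with h
  · rw [abs_of_pos (one_div_pos.2 ((Real.exp_pos _).trans_le h))]
    exact one_div_le_one_div_of_le (Real.exp_pos _) h
  · simpa using (Real.exp_pos _).le

lemma continuousAt_karamataTest {y : ℝ} (hy : y ≠ Real.exp (-1)) (hy0 : y ≠ 0) :
    ContinuousAt karamataTest y :=
  continuousAt_ite_le hy (by fun_prop (disch := assumption)) continuousAt_const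

lemma exp_neg_mul_karamataTest (u : ℝ) :
    Real.exp (-u) * karamataTest (Real.exp (-u)) = (Iic 1).indicator 1 u := by
  simp only [karamataTest, Real.exp_le_exp, neg_le_neg_iff, indicator_apply, mem_Iic, Pi.one_apply,
    mul_ite, mul_zero, mul_one_div_cancel (Real.exp_pos (-u)).ne']

lemma integral_indicator_Iic_one_mul (hX : Measurable X) {s : ℝ} (hs : 0 < s) :
    ∫ ω, (Iic (1 : ℝ)).indicator (1 : ℝ → ℝ) (s * X ω) ∂μ = μ.real {ω | X ω ≤ 1 / s} := by
  have hind : (fun ω ↦ (Iic (1 : ℝ)).indicator (1 : ℝ → ℝ) (s * X ω)) =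
      {ω | X ω ≤ 1 / s}.indicator 1 := by
    ext ω
    simp only [indicator_apply, mem_Iic, Set.mem_ofPred_eq, le_div_iff₀' hs, Pi.one_apply]
  rw [hind, integral_indicator_one (measurableSet_le hX measurable_const)]

lemma exp_neg_mul_mul_exp_neg_mul_pow (s x : ℝ) (j : ℕ) :
    Real.exp (-(s * x)) * Real.exp (-(s * x)) ^ j = Real.exp (-((j + 1) * s) * x) := by
  rw [← Real.exp_nat_mul, ← Real.exp_add]
  ring_nf

lemma tendsto_measureReal_div_mgf_of_limit_law (hX : Measurable X) (hX0 : 0 ≤ᵐ[μ] X)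
    (hint : ∀ s > 0, Integrable (fun ω ↦ Real.exp (-s * X ω)) μ)
    (hmgf : ∀ a > 0, Tendsto (fun s ↦ mgf X μ (-(a * s)) / mgf X μ (-s)) (𝓝[>] 0) (𝓝 (a ^ (-θ))))
    {Ω' : Type*} [MeasurableSpace Ω'] {ν : Measure Ω'} {V T : Ω' → ℝ}
    (hVm : Measurable V) (hV0 : 0 ≤ᵐ[ν] V) (hVi : Integrable V ν)
    (hTm : Measurable T) (hT0 : ∀ᵐ ω ∂ν, 0 ≤ T ω) (hT1 : ∀ᵐ ω ∂ν, T ω ≠ 1)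
    (hmom : ∀ j : ℕ, ∫ ω, V ω * Real.exp (-T ω) ^ j ∂ν = (j + 1 : ℝ) ^ (-θ)) :
    Tendsto (fun s ↦ μ.real {ω | X ω ≤ 1 / s} / mgf X μ (-s)) (𝓝[>] 0)
      (𝓝 (∫ ω, V ω * karamataTest (Real.exp (-T ω)) ∂ν)) := by
  have key := tendsto_integral_mul_comp_of_tendsto_moments (μ := μ) (ν := ν) (l := 𝓝[>] (0 : ℝ))
    (W := fun s ω ↦ Real.exp (-(s * X ω)) / mgf X μ (-s)) (Y := fun s ω ↦ Real.exp (-(s * X ω)))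
    (V := V) (Z := fun ω ↦ Real.exp (-T ω)) (a := 0) (b := 1) (fun s ↦ by fun_prop)
    (fun s ↦ by fun_prop) (.of_forall fun s ↦ .of_forall fun ω ↦ div_nonneg (Real.exp_pos _).le
      mgf_nonneg) ?_ ?_ hVm (by fun_prop) hV0 hVi (hT0.mono fun ω ↦ exp_neg_mem_Icc) ?_
    measurable_karamataTest abs_karamataTest_le
    (hT1.mono fun ω hω ↦ continuousAt_karamataTest (by simpa using hω) (Real.exp_pos _).ne')
  · refine key.congr' ?_
    filter_upwards [self_mem_nhdsWithin] with s hs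
    simp_rw [div_mul_eq_mul_div, exp_neg_mul_karamataTest]
    rw [integral_div, integral_indicator_Iic_one_mul hX hs]
  · filter_upwards [self_mem_nhdsWithin] with s hs
    simpa only [neg_mul] using (hint s hs).div_const _
  · filter_upwards [self_mem_nhdsWithin] with s hs
    filter_upwards [hX0] with ω hω
    exact exp_neg_mem_Icc (mul_nonneg (mem_Ioi.1 hs).le hω)
  · intro j
    rw [hmom j]
    refine (hmgf (j + 1) (by positivity)).congr fun s ↦ ?_
    simp_rw [div_mul_eq_mul_div, exp_neg_mul_mul_exp_neg_mul_pow]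
    rw [integral_div, mgf]

lemma integral_gammaDensity_mul_exp_neg_pow (hθ : 0 < θ) (j : ℕ) :
    ∫ u in Ioi (0 : ℝ), Real.exp (-u) * u ^ (θ - 1) / Real.Gamma θ * Real.exp (-u) ^ j =
      (j + 1 : ℝ) ^ (-θ) := by
  have hfun (u : ℝ) : Real.exp (-u) * u ^ (θ - 1) / Real.Gamma θ * Real.exp (-u) ^ j =
      u ^ (θ - 1) * Real.exp (-((j + 1 : ℝ) * u)) / Real.Gamma θ := by
    have h := exp_neg_mul_mul_exp_neg_mul_pow 1 u j
    rw [one_mul, mul_one, neg_mul] at h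
    rw [← h]
    ring
  simp_rw [hfun]
  rw [integral_div, Real.integral_rpow_mul_exp_neg_mul_Ioi hθ (by positivity),
    mul_div_cancel_right₀ _ (Real.Gamma_pos_of_pos hθ).ne', one_div,
    Real.inv_rpow (by positivity), Real.rpow_neg (by positivity)]

lemma integral_gammaDensity_mul_karamataTest (hθ : 0 < θ) :
    ∫ u in Ioi (0 : ℝ), Real.exp (-u) * u ^ (θ - 1) / Real.Gamma θ * karamataTest (Real.exp (-u)) =
      1 / Real.Gamma (θ + 1) := by
  have hfun (u : ℝ) :
      Real.exp (-u) * u ^ (θ - 1) / Real.Gamma θ * karamataTest (Real.exp (-u)) =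
        (Iic 1).indicator 1 u * u ^ (θ - 1) / Real.Gamma θ := by
    rw [← exp_neg_mul_karamataTest]
    ring
  simp_rw [hfun]
  rw [integral_div, (integrableOn_indicator_Iic_one_mul_rpow hθ).2, div_div,
    Real.Gamma_add_one hθ.ne']

theorem tendsto_measureReal_div_mgf (hθ : 0 ≤ θ) (hX : Measurable X) (hX0 : 0 ≤ᵐ[μ] X)
    (hint : ∀ s > 0, Integrable (fun ω ↦ Real.exp (-s * X ω)) μ)
    (hmgf : ∀ a > 0, Tendsto (fun s ↦ mgf X μ (-(a * s)) / mgf X μ (-s)) (𝓝[>] 0)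
      (𝓝 (a ^ (-θ)))) :
    Tendsto (fun s ↦ μ.real {ω | X ω ≤ 1 / s} / mgf X μ (-s)) (𝓝[>] 0)
      (𝓝 (1 / Real.Gamma (θ + 1))) := by
  rcases hθ.eq_or_lt with rfl | hθ
  · convert tendsto_measureReal_div_mgf_of_limit_law (ν := Measure.dirac (0 : ℝ)) (V := 1)
      (T := id) hX hX0 hint hmgf measurable_one (.of_forall fun _ ↦ zero_le_one)
      (integrable_const 1) measurable_id (by simp) (by simp) (by simp) using 2
    simp [karamataTest]
  · rw [← integral_gammaDensity_mul_karamataTest hθ]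
    have hpos : ∀ᵐ u : ℝ ∂volume.restrict (Ioi 0), 0 < u := ae_restrict_mem measurableSet_Ioi
    refine tendsto_measureReal_div_mgf_of_limit_law hX hX0 hint hmgf (by fun_prop)
      (hpos.mono fun u hu ↦ ?_) ((Real.GammaIntegral_convergent hθ).div_const _) measurable_id
      (hpos.mono fun u ↦ le_of_lt) (ae_restrict_of_ae (Measure.ae_ne volume 1))
      (integral_gammaDensity_mul_exp_neg_pow hθ)
    have := Real.Gamma_pos_of_pos hθ
    positivity

/-- The test function with `e^{-u} (1 - e^{-u}) * deHaanTest (e^{-u}) = 1_{u ≤ 1} - e^{-u}`. -/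
noncomputable def deHaanTest (y : ℝ) : ℝ := if Real.exp (-1) ≤ y then 1 / y else -(1 / (1 - y))

lemma measurable_deHaanTest : Measurable deHaanTest :=
  Measurable.ite measurableSet_Ici (by fun_prop) (by fun_prop)

lemma abs_deHaanTest_le (y : ℝ) :
    |deHaanTest y| ≤ 1 / Real.exp (-1) + 1 / (1 - Real.exp (-1)) := by
  have he : 0 < 1 - Real.exp (-1) := by simp
  have he' := Real.exp_pos (-1)
  unfold deHaanTest
  split_ifs with h
  · rw [abs_of_pos (one_div_pos.2 (he'.trans_le h))]
    exact (one_div_le_one_div_of_le he' h).trans (le_add_of_nonneg_right (by positivity))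
  · rw [abs_neg, abs_of_pos (one_div_pos.2 (by linarith))]
    exact (one_div_le_one_div_of_le he (by linarith)).trans (le_add_of_nonneg_left (by positivity))

lemma continuousAt_deHaanTest {y : ℝ} (hy : y ≠ Real.exp (-1)) (hy0 : y ≠ 0) (hy1 : y ≠ 1) :
    ContinuousAt deHaanTest y :=
  have := sub_ne_zero.2 hy1.symm
  continuousAt_ite_le hy (by fun_prop (disch := assumption)) (by fun_prop (disch := assumption))

lemma exp_neg_mul_one_sub_mul_deHaanTest (u : ℝ) :
    Real.exp (-u) * (1 - Real.exp (-u)) * deHaanTest (Real.exp (-u)) =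
      (Iic 1).indicator 1 u - Real.exp (-u) := by
  simp only [deHaanTest, Real.exp_le_exp, neg_le_neg_iff, indicator_apply, mem_Iic, Pi.one_apply]
  split_ifs with h
  · field_simp
  · have : 1 - Real.exp (-u) ≠ 0 := (sub_pos.2 (Real.exp_lt_one_iff.2 (by linarith))).ne'
    field_simp
    ring

/-- The limit density of the measures `e^{-u} (1 - e^{-u}) μ(du)` when the Laplace transform of `μ`
grows logarithmically: its moments are Frullani integrals. -/
noncomputable def frullaniDensity (u : ℝ) : ℝ := Real.exp (-u) * (1 - Real.exp (-u)) / u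

lemma measurable_frullaniDensity : Measurable frullaniDensity := by
  unfold frullaniDensity
  fun_prop

lemma frullaniDensity_nonneg {u : ℝ} (hu : 0 < u) : 0 ≤ frullaniDensity u :=
  div_nonneg (mul_nonneg (Real.exp_pos _).le (sub_nonneg.2 (exp_neg_mem_Icc hu.le).2)) hu.le

lemma integrableOn_frullaniDensity : IntegrableOn frullaniDensity (Ioi 0) := by
  refine Integrable.mono' (integrableOn_exp_neg_Ioi 0)
    measurable_frullaniDensity.aestronglyMeasurable ?_
  filter_upwards [ae_restrict_mem measurableSet_Ioi] with u (hu : 0 < u)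
  rw [Real.norm_of_nonneg (frullaniDensity_nonneg hu), frullaniDensity, mul_div_assoc]
  refine mul_le_of_le_one_right (Real.exp_pos _).le ((div_le_one hu).2 ?_)
  linarith [Real.add_one_le_exp (-u)]

lemma integral_frullaniDensity_mul_exp_neg_pow (j : ℕ) :
    ∫ u in Ioi (0 : ℝ), frullaniDensity u * Real.exp (-u) ^ j =
      Real.log ((j + 2 : ℝ) / (j + 1)) := by
  have hcont : Continuous fun v : ℝ ↦ Real.exp (-v) := by fun_prop
  have hfun : (fun u : ℝ ↦ frullaniDensity u * Real.exp (-u) ^ j) =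
      fun u ↦ u⁻¹ • (Real.exp (-((j + 1) * u)) - Real.exp (-((j + 2) * u))) := by
    ext u
    have h₁ := exp_neg_mul_mul_exp_neg_mul_pow 1 u j
    have h₂ := exp_neg_mul_mul_exp_neg_mul_pow 1 u (j + 1)
    rw [one_mul, mul_one, neg_mul] at h₁ h₂
    push_cast [add_assoc, one_add_one_eq_two] at h₂
    rw [frullaniDensity, ← h₁, ← h₂, smul_eq_mul]
    ring
  have hint : IntegrableOn
      (fun u : ℝ ↦ frullaniDensity u * Real.exp (-u) ^ j) (Ioi 0) := by
    refine integrableOn_frullaniDensity.mul_bdd (c := 1) (by fun_prop) ?_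
    filter_upwards [ae_restrict_mem measurableSet_Ioi] with u (hu : 0 < u)
    rw [norm_pow, Real.norm_of_nonneg (Real.exp_pos _).le]
    exact pow_le_one₀ (Real.exp_pos _).le (exp_neg_mem_Icc hu.le).2
  rw [hfun] at hint ⊢
  rw [Frullani.integral_Ioi_eq (f := fun v ↦ Real.exp (-v)) (L := 1)
    (hcont.locallyIntegrable.locallyIntegrableOn _) (by positivity) (by positivity)
    (by simpa using hcont.continuousWithinAt (x := 0).tendsto)
    Real.tendsto_exp_neg_atTop_nhds_zero hint, sub_zero, smul_eq_mul, mul_one]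

lemma integral_frullaniDensity_mul_deHaanTest :
    ∫ u in Ioi (0 : ℝ), frullaniDensity u * deHaanTest (Real.exp (-u)) =
      Real.eulerMascheroniConstant := by
  simp_rw [frullaniDensity, div_mul_eq_mul_div, exp_neg_mul_one_sub_mul_deHaanTest,
    integral_indicator_sub_exp_neg_div]

lemma integral_indicator_Iic_one_mul_sub_exp_neg (hX : Measurable X) {s : ℝ} (hs : 0 < s)
    (hint : Integrable (fun ω ↦ Real.exp (-(s * X ω))) μ) :
    ∫ ω, ((Iic (1 : ℝ)).indicator (1 : ℝ → ℝ) (s * X ω) - Real.exp (-(s * X ω))) ∂μ =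
      μ.real {ω | X ω ≤ 1 / s} - mgf X μ (-s) := by
  have hind : Integrable (fun ω ↦ (Iic (1 : ℝ)).indicator (1 : ℝ → ℝ) (s * X ω)) μ := by
    simp_rw [← exp_neg_mul_karamataTest]
    exact hint.mul_bdd (measurable_karamataTest.comp (by fun_prop)).aestronglyMeasurable
      (.of_forall fun ω ↦ abs_karamataTest_le _)
  rw [integral_sub hind hint, integral_indicator_Iic_one_mul hX hs]
  simp_rw [mgf, neg_mul]

lemma integral_exp_neg_mul_one_sub_mul_pow {s : ℝ} (hs : 0 < s)
    (hint : ∀ s > 0, Integrable (fun ω ↦ Real.exp (-s * X ω)) μ) (j : ℕ) :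
    ∫ ω, Real.exp (-(s * X ω)) * (1 - Real.exp (-(s * X ω))) * Real.exp (-(s * X ω)) ^ j ∂μ =
      mgf X μ (-((j + 1) * s)) - mgf X μ (-((j + 2) * s)) := by
  rw [mgf, mgf, ← integral_sub (hint _ (by positivity)) (hint _ (by positivity))]
  congr! 2 with ω
  have h₁ := exp_neg_mul_mul_exp_neg_mul_pow s (X ω) j
  have h₂ := exp_neg_mul_mul_exp_neg_mul_pow s (X ω) (j + 1)
  push_cast [add_assoc, one_add_one_eq_two] at h₂
  rw [← h₁, ← h₂]
  ring

theorem tendsto_measureReal_sub_mgf (hθ : 0 ≤ θ) (hX : Measurable X) (hX0 : 0 ≤ᵐ[μ] X)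
    (hint : ∀ s > 0, Integrable (fun ω ↦ Real.exp (-s * X ω)) μ)
    (hmgf : ∀ a > 0, ∀ b > 0, Tendsto (fun s ↦ mgf X μ (-(a * s)) - mgf X μ (-(b * s))) (𝓝[>] 0)
      (𝓝 (θ * Real.log (b / a)))) :
    Tendsto (fun s ↦ μ.real {ω | X ω ≤ 1 / s} - mgf X μ (-s)) (𝓝[>] 0)
      (𝓝 (θ * Real.eulerMascheroniConstant)) := by
  have hint' {s : ℝ} (hs : 0 < s) : Integrable (fun ω ↦ Real.exp (-(s * X ω))) μ := by
    simpa only [neg_mul] using hint s hs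
  have hY : ∀ᶠ s in 𝓝[>] 0, ∀ᵐ ω ∂μ, Real.exp (-(s * X ω)) ∈ Icc (0 : ℝ) 1 := by
    filter_upwards [self_mem_nhdsWithin] with s (hs : 0 < s)
    filter_upwards [hX0] with ω hω
    exact exp_neg_mem_Icc (mul_nonneg hs.le hω)
  have hpos : ∀ᵐ u : ℝ ∂volume.restrict (Ioi 0), 0 < u := ae_restrict_mem measurableSet_Ioi
  have key := tendsto_integral_mul_comp_of_tendsto_moments (μ := μ) (l := 𝓝[>] (0 : ℝ))
    (W := fun s ω ↦ Real.exp (-(s * X ω)) * (1 - Real.exp (-(s * X ω))))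
    (Y := fun s ω ↦ Real.exp (-(s * X ω))) (ν := volume.restrict (Ioi 0))
    (V := fun u ↦ θ * frullaniDensity u) (Z := fun u ↦ Real.exp (-u))
    (fun s ↦ by fun_prop) (fun s ↦ by fun_prop)
    (hY.mono fun s hs ↦ hs.mono fun ω hω ↦ mul_nonneg hω.1 (sub_nonneg.2 hω.2)) ?_ hY
    (measurable_frullaniDensity.const_mul θ) (by fun_prop) (hpos.mono fun u hu ↦ ?_)
    (integrableOn_frullaniDensity.const_mul θ) (hpos.mono fun u hu ↦ exp_neg_mem_Icc hu.le)
    ?_ measurable_deHaanTest abs_deHaanTest_le ?_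
  · simp_rw [mul_assoc θ, integral_const_mul, integral_frullaniDensity_mul_deHaanTest,
      exp_neg_mul_one_sub_mul_deHaanTest] at key
    refine key.congr' ?_
    filter_upwards [self_mem_nhdsWithin] with s (hs : 0 < s)
    exact integral_indicator_Iic_one_mul_sub_exp_neg hX hs (hint' hs)
  · filter_upwards [self_mem_nhdsWithin, hY] with s (hs : 0 < s) hYs
    refine (hint' hs).mul_bdd (c := 1) (by fun_prop) (hYs.mono fun ω hω ↦ ?_)
    rw [Real.norm_of_nonneg (sub_nonneg.2 hω.2)]
    exact sub_le_self 1 hω.1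
  · exact mul_nonneg hθ (frullaniDensity_nonneg hu)
  · intro j
    simp_rw [mul_assoc θ, integral_const_mul, integral_frullaniDensity_mul_exp_neg_pow]
    refine (hmgf (j + 1) (by positivity) (j + 2) (by positivity)).congr' ?_
    filter_upwards [self_mem_nhdsWithin] with s hs
    exact (integral_exp_neg_mul_one_sub_mul_pow hs hint j).symm
  · filter_upwards [hpos, ae_restrict_of_ae (Measure.ae_ne volume 1)] with u hu hu1
    exact continuousAt_deHaanTest (by simpa using hu1) (Real.exp_pos _).ne' (by simpa using hu.ne')

end Tauberian

section LocalFactor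

variable {c : ℕ → ℝ} {y : ℝ}

lemma mul_pow_mem_Icc (hc : ∀ e, c e ∈ Icc 0 1) (hy : y ∈ Icc 0 (1 / 2)) (e : ℕ) :
    c e * y ^ e ∈ Icc 0 ((1 / 2 : ℝ) ^ e) := by
  obtain ⟨hy0, hy1⟩ := hy
  exact ⟨mul_nonneg (hc e).1 (pow_nonneg hy0 e), (mul_le_of_le_one_left (pow_nonneg hy0 e)
    (hc e).2).trans (pow_le_pow_left₀ hy0 hy1 e)⟩

lemma norm_mul_pow_le (hc : ∀ e, c e ∈ Icc 0 1) (hy : y ∈ Icc 0 (1 / 2)) (e : ℕ) :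
    ‖c e * y ^ e‖ ≤ (1 / 2 : ℝ) ^ e := by
  rw [Real.norm_of_nonneg (mul_pow_mem_Icc hc hy e).1]
  exact (mul_pow_mem_Icc hc hy e).2

lemma summable_mul_pow (hc : ∀ e, c e ∈ Icc 0 1) (hy : y ∈ Icc 0 (1 / 2)) :
    Summable fun e ↦ c e * y ^ e :=
  .of_norm_bounded summable_geometric_two (norm_mul_pow_le hc hy)

lemma continuousOn_tsum_mul_pow (hc : ∀ e, c e ∈ Icc 0 1) :
    ContinuousOn (fun y ↦ ∑' e, c e * y ^ e) (Icc 0 (1 / 2)) :=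
  continuousOn_tsum (fun e ↦ by fun_prop) summable_geometric_two
    fun e _ hy ↦ norm_mul_pow_le hc hy e

lemma tsum_mul_pow_mem_Icc (hc : ∀ e, c e ∈ Icc 0 1) (h0 : c 0 = 1) (hy : y ∈ Icc 0 (1 / 2)) :
    ∑' e, c e * y ^ e ∈ Icc (1 + c 1 * y) (1 + c 1 * y + 2 * y ^ 2) := by
  have hs := summable_mul_pow hc hy
  have hs2 : Summable fun e ↦ c (e + 2) * y ^ e := summable_mul_pow (fun e ↦ hc (e + 2)) hy
  have htail : ∑' e, c (e + 2) * y ^ e ∈ Icc 0 2 :=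
    ⟨tsum_nonneg fun e ↦ (mul_pow_mem_Icc (fun e ↦ hc (e + 2)) hy e).1,
      tsum_geometric_two ▸ hs2.tsum_le_tsum
        (fun e ↦ (mul_pow_mem_Icc (fun e ↦ hc (e + 2)) hy e).2) summable_geometric_two⟩
  have hsplit : ∑' e, c e * y ^ e = 1 + c 1 * y + y ^ 2 * ∑' e, c (e + 2) * y ^ e := by
    rw [← hs.sum_add_tsum_nat_add 2, ← tsum_mul_left]
    simp only [Finset.sum_range_succ, Finset.sum_range_zero, h0, zero_add, pow_zero, pow_one,
      one_mul]
    exact congrArg _ (tsum_congr fun e ↦ by ring)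
  rw [hsplit]
  constructor <;> nlinarith [htail.1, htail.2, sq_nonneg y]

lemma abs_log_tsum_mul_pow_sub_le (hc : ∀ e, c e ∈ Icc 0 1) (h0 : c 0 = 1)
    (hy : y ∈ Icc 0 (1 / 2)) : |Real.log (∑' e, c e * y ^ e) - c 1 * y| ≤ 2 * y ^ 2 := by
  obtain ⟨hlower, hupper⟩ := tsum_mul_pow_mem_Icc hc h0 hy
  have ht : 0 ≤ c 1 * y := mul_nonneg (hc 1).1 hy.1
  have hty : c 1 * y ≤ y := mul_le_of_le_one_left hy.1 (hc 1).2
  refine abs_le.2 ⟨?_, ?_⟩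
  · have hinv : c 1 * y - (c 1 * y) ^ 2 ≤ 1 - (1 + c 1 * y)⁻¹ := by
      have : 1 - (1 + c 1 * y)⁻¹ - (c 1 * y - (c 1 * y) ^ 2) = (c 1 * y) ^ 3 / (1 + c 1 * y) := by
        field_simp
        ring
      rw [← sub_nonneg, this]
      positivity
    have hlog := (Real.one_sub_inv_le_log_of_pos (by linarith)).trans
      (Real.log_le_log (by linarith) hlower)
    nlinarith
  · linarith [Real.log_le_sub_one_of_pos (show 0 < ∑' e, c e * y ^ e by linarith)]

end LocalFactor

section EulerProduct

lemma prime_rpow_neg_mem_Icc {p : ℕ} (hp : p.Prime) {s : ℝ} (hs : 1 ≤ s) :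
    (p : ℝ) ^ (-s) ∈ Icc 0 (1 / 2) := by
  have h2 : (2 : ℝ) ≤ p := by exact_mod_cast hp.two_le
  refine ⟨by positivity, ?_⟩
  calc (p : ℝ) ^ (-s) ≤ (p : ℝ) ^ (-1 : ℝ) :=
        Real.rpow_le_rpow_of_exponent_le (by linarith) (by linarith)
    _ ≤ 1 / 2 := by
        rw [Real.rpow_neg_one, ← one_div]
        gcongr

/-- The Dirichlet series `∑ a n / n ^ s` at a real argument. -/
noncomputable def dirichletSeries (a : ℕ → ℝ) (s : ℝ) : ℝ := ∑' n : ℕ, a n * (n : ℝ) ^ (-s)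

/-- The restriction of `f` to the primes. -/
noncomputable def primePart (f : ℕ → ℝ) : ℕ → ℝ := {p : ℕ | p.Prime}.indicator f

/-- The error, at a prime `n`, of the approximation of the logarithm of the local Euler factor of
`∑ f n / n ^ s` by its first term `f n / n ^ s`; it is `0` when `n` is not a prime. -/
noncomputable def eulerRemainder (f : ℕ → ℝ) (s : ℝ) : ℕ → ℝ :=
  {p : ℕ | p.Prime}.indicator fun p ↦
    Real.log (∑' e, f (p ^ e) * ((p : ℝ) ^ (-s)) ^ e) - f p * (p : ℝ) ^ (-s)

lemma summable_mul_rpow_neg {a : ℕ → ℝ} {K : ℝ} (ha : ∀ n, |a n| ≤ K) {s : ℝ} (hs : 1 < s) :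
    Summable fun n : ℕ ↦ a n * (n : ℝ) ^ (-s) := by
  refine .of_norm_bounded ((Real.summable_nat_rpow.2 (neg_lt_neg hs)).mul_left K) fun n ↦ ?_
  rw [norm_mul, Real.norm_of_nonneg (by positivity : 0 ≤ (n : ℝ) ^ (-s))]
  exact mul_le_mul_of_nonneg_right (ha n) (by positivity)

lemma natCast_pow_rpow (n e : ℕ) (t : ℝ) : ((n ^ e : ℕ) : ℝ) ^ t = ((n : ℝ) ^ t) ^ e := by
  rw [Nat.cast_pow, Real.rpow_pow_comm (Nat.cast_nonneg n)]

variable {f : ℕ → ℝ} {s : ℝ}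

lemma abs_le_one_of_mem_Icc (hf : ∀ n, f n ∈ Icc 0 1) (n : ℕ) : |f n| ≤ 1 :=
  abs_le.2 ⟨by linarith [(hf n).1], (hf n).2⟩

lemma primePart_mem_Icc (hf : ∀ n, f n ∈ Icc 0 1) (n : ℕ) : primePart f n ∈ Icc 0 1 := by
  unfold primePart
  by_cases hn : n.Prime
  · simpa [hn] using hf n
  · simp [hn]

lemma norm_eulerRemainder_le (hf : ∀ n, f n ∈ Icc 0 1) (hf1 : f 1 = 1) (hs : 1 ≤ s) (n : ℕ) :
    ‖eulerRemainder f s n‖ ≤ 2 * (n : ℝ) ^ (-2 : ℝ) := by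
  by_cases hn : n.Prime
  · have hbound := abs_log_tsum_mul_pow_sub_le (c := fun e ↦ f (n ^ e)) (fun e ↦ hf _)
      (by simpa using hf1) (prime_rpow_neg_mem_Icc hn hs)
    rw [eulerRemainder, indicator_of_mem (by exact hn), Real.norm_eq_abs]
    simp only [pow_one] at hbound
    refine hbound.trans ?_
    rw [← Real.rpow_mul_natCast (Nat.cast_nonneg n)]
    gcongr 2 * ?_
    exact Real.rpow_le_rpow_of_exponent_le (by exact_mod_cast hn.one_le) (by push_cast; linarith)
  · rw [eulerRemainder, indicator_of_notMem (by exact hn), norm_zero]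
    positivity

lemma summable_eulerRemainder (hf : ∀ n, f n ∈ Icc 0 1) (hf1 : f 1 = 1) (hs : 1 ≤ s) :
    Summable (eulerRemainder f s) :=
  .of_norm_bounded ((Real.summable_nat_rpow.2 (by norm_num)).mul_left 2)
    (norm_eulerRemainder_le hf hf1 hs)

lemma continuousWithinAt_eulerRemainder (hf : ∀ n, f n ∈ Icc 0 1) (hf1 : f 1 = 1) (n : ℕ) :
    ContinuousWithinAt (fun s ↦ eulerRemainder f s n) (Ici 1) 1 := by
  by_cases hn : n.Prime
  · have hy := prime_rpow_neg_mem_Icc hn le_rfl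
    have hpow : ContinuousWithinAt (fun s : ℝ ↦ (n : ℝ) ^ (-s)) (Ici 1) 1 :=
      (continuousAt_const.rpow continuousAt_neg
        (.inl (by exact_mod_cast hn.ne_zero))).continuousWithinAt
    have hfactor := ContinuousWithinAt.comp (f := fun s : ℝ ↦ (n : ℝ) ^ (-s))
      (continuousOn_tsum_mul_pow (fun e ↦ hf (n ^ e)) _ hy) hpow
      fun s hs ↦ prime_rpow_neg_mem_Icc hn hs
    have hpos : (∑' e, f (n ^ e) * ((n : ℝ) ^ (-(1 : ℝ))) ^ e) ≠ 0 := by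
      have hlower := (tsum_mul_pow_mem_Icc (fun e ↦ hf (n ^ e)) (by simpa using hf1) hy).1
      have := mul_nonneg (hf (n ^ 1)).1 hy.1
      linarith
    simp only [eulerRemainder, indicator_of_mem (show n ∈ {p : ℕ | p.Prime} from hn)]
    exact (hfactor.log hpos).sub (hpow.const_mul _)
  · simp only [eulerRemainder, indicator_of_notMem (show n ∉ {p : ℕ | p.Prime} from hn)]
    exact continuousWithinAt_const

lemma continuousWithinAt_tsum_eulerRemainder (hf : ∀ n, f n ∈ Icc 0 1) (hf1 : f 1 = 1) :
    ContinuousWithinAt (fun s ↦ ∑' n, eulerRemainder f s n) (Ici 1) 1 :=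
  tendsto_tsum_of_dominated_convergence ((Real.summable_nat_rpow.2 (by norm_num)).mul_left 2)
    (continuousWithinAt_eulerRemainder hf hf1)
    (eventually_mem_nhdsWithin.mono fun _ hs ↦ norm_eulerRemainder_le hf hf1 hs)

lemma exp_primePart_add_eulerRemainder (hf : ∀ n, f n ∈ Icc 0 1) (hf1 : f 1 = 1) (hs : 1 ≤ s)
    {p : ℕ} (hp : p.Prime) :
    Real.exp (primePart f p * (p : ℝ) ^ (-s) + eulerRemainder f s p) =
      ∑' e, f (p ^ e) * ((p ^ e : ℕ) : ℝ) ^ (-s) := by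
  have hy := prime_rpow_neg_mem_Icc hp hs
  have hlower := (tsum_mul_pow_mem_Icc (fun e ↦ hf (p ^ e)) (by simpa using hf1) hy).1
  have := mul_nonneg (hf (p ^ 1)).1 hy.1
  simp_rw [primePart, eulerRemainder, natCast_pow_rpow,
    indicator_of_mem (show p ∈ {p : ℕ | p.Prime} from hp), add_sub_cancel]
  exact Real.exp_log (by linarith)

end EulerProduct

section Multiplicative

variable {f : ArithmeticFunction ℝ} {s : ℝ}

lemma mul_natCast_rpow_mul_of_coprime (hf : f.IsMultiplicative) {m n : ℕ} (hmn : m.Coprime n) :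
    f (m * n) * ((m * n : ℕ) : ℝ) ^ (-s) = f m * (m : ℝ) ^ (-s) * (f n * (n : ℝ) ^ (-s)) := by
  rw [hf.map_mul_of_coprime hmn, Nat.cast_mul,
    Real.mul_rpow (Nat.cast_nonneg m) (Nat.cast_nonneg n)]
  ring

lemma dirichletSeries_eq_exp (hf : f.IsMultiplicative) (hf01 : ∀ n, f n ∈ Icc 0 1) (hs : 1 < s) :
    dirichletSeries f s =
      Real.exp (dirichletSeries (primePart f) s + ∑' n, eulerRemainder f s n) := by
  have hprod := EulerProduct.eulerProduct_hasProd_mulIndicator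
    (f := fun n : ℕ ↦ f n * (n : ℝ) ^ (-s)) (by simp [hf.map_one])
    (mul_natCast_rpow_mul_of_coprime hf)
    (summable_mul_rpow_neg (abs_le_one_of_mem_Icc hf01) hs).norm (by simp)
  refine hprod.unique ?_
  have hsum := (summable_mul_rpow_neg (abs_le_one_of_mem_Icc (primePart_mem_Icc hf01))
    hs).hasSum.add (summable_eulerRemainder hf01 hf.map_one hs.le).hasSum
  convert! hsum.rexp using 1
  ext n
  by_cases hn : n.Prime
  · simp only [mulIndicator_of_mem (show n ∈ {p : ℕ | p.Prime} from hn), Function.comp_apply,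
      exp_primePart_add_eulerRemainder hf01 hf.map_one hs.le hn]
  · simp [primePart, eulerRemainder, hn]

lemma tsum_smoothNumbers_eq_exp (hf : f.IsMultiplicative) (hf01 : ∀ n, f n ∈ Icc 0 1) (N : ℕ) :
    ∑' n : Nat.smoothNumbers N, f n / (n : ℕ) =
      Real.exp (∑ n ∈ Finset.range N, primePart f n / n +
        ∑ n ∈ Finset.range N, eulerRemainder f 1 n) := by
  have hprod := (EulerProduct.summable_and_hasSum_smoothNumbers_prod_primesBelow_tsum
    (f := fun n : ℕ ↦ f n * (n : ℝ) ^ (-1 : ℝ)) (by simp [hf.map_one])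
    (mul_natCast_rpow_mul_of_coprime hf) (fun {p} hp ↦ ?_) N).2.tsum_eq
  · simp only [Real.rpow_neg_one, ← div_eq_mul_inv] at hprod
    rw [hprod, ← Finset.sum_add_distrib, Real.exp_sum, Nat.primesBelow, Finset.prod_filter]
    refine Finset.prod_congr rfl fun p _ ↦ ?_
    split_ifs with hp
    · have := exp_primePart_add_eulerRemainder hf01 hf.map_one le_rfl hp
      simp only [Real.rpow_neg_one, ← div_eq_mul_inv] at this
      exact this.symm
    · simp [primePart, eulerRemainder, hp]
  · simp_rw [natCast_pow_rpow]
    exact (summable_mul_pow (fun e ↦ hf01 (p ^ e)) (prime_rpow_neg_mem_Icc hp le_rfl)).norm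

end Multiplicative

section PartialSummation

open Asymptotics

lemma sum_sub_mul_le_tsum_mul {b w : ℕ → ℝ} {N₀ : ℕ}
    (hb : ∀ N ≥ N₀, 0 ≤ ∑ n ∈ Finset.range N, b n) (hw0 : ∀ n ≥ N₀, 0 ≤ w n)
    (hw : AntitoneOn w (Ici N₀)) (hsum : Summable fun n ↦ b n * w n) :
    ∑ n ∈ Finset.range N₀, b n * w n - (∑ n ∈ Finset.range N₀, b n) * w N₀ ≤
      ∑' n, b n * w n := by
  have hpartial (M : ℕ) (hM : N₀ ≤ M) :
      ∑ n ∈ Finset.range N₀, b n * w n - (∑ n ∈ Finset.range N₀, b n) * w N₀ +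
        (∑ n ∈ Finset.range M, b n) * w M ≤ ∑ n ∈ Finset.range M, b n * w n := by
    induction M, hM using Nat.le_induction with
    | base => simp
    | succ M hM ih =>
      have hstep := mul_le_mul_of_nonneg_left (hw (mem_Ici.2 hM) (mem_Ici.2 (hM.trans M.le_succ))
        M.le_succ) (hb (M + 1) (hM.trans M.le_succ))
      rw [Finset.sum_range_succ] at hstep ⊢
      rw [Finset.sum_range_succ]
      linarith
  refine ge_of_tendsto hsum.hasSum.tendsto_sum_nat ?_
  filter_upwards [eventually_ge_atTop N₀] with M hM
  linarith [hpartial M hM, mul_nonneg (hb M hM) (hw0 M hM)]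

variable {ι : Type*} {l : Filter ι} {w : ι → ℕ → ℝ} {m : ℕ}

lemma eventually_lt_tsum_mul {b : ℕ → ℝ} (hb : ∀ᶠ N in atTop, 0 ≤ ∑ n ∈ Finset.range N, b n)
    (hw0 : ∀ᶠ i in l, ∀ n ≥ m, 0 ≤ w i n) (hw : ∀ᶠ i in l, AntitoneOn (w i) (Ici m))
    (hlim : ∀ n, Tendsto (w · n) l (𝓝 0)) (hsum : ∀ᶠ i in l, Summable fun n ↦ b n * w i n)
    {δ : ℝ} (hδ : δ < 0) : ∀ᶠ i in l, δ < ∑' n, b n * w i n := by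
  obtain ⟨N₁, hN₁⟩ := eventually_atTop.1 hb
  set N₀ := max N₁ m
  have hhead := (tendsto_finsetSum (Finset.range N₀) fun n _ ↦ (hlim n).const_mul (b n)).sub
    ((hlim N₀).const_mul (∑ n ∈ Finset.range N₀, b n))
  simp only [mul_zero, Finset.sum_const_zero, sub_zero] at hhead
  filter_upwards [hhead.eventually_const_lt hδ, hw0, hw, hsum] with i hi hw0 hw hsum
  exact hi.trans_le (sum_sub_mul_le_tsum_mul (fun N hN ↦ hN₁ N ((le_max_left _ _).trans hN))
    (fun n hn ↦ hw0 n ((le_max_right _ _).trans hn))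
    (hw.mono (Ici_subset_Ici.2 (le_max_right _ _))) hsum)

theorem tendsto_tsum_mul_of_isLittleO {c d : ℕ → ℝ} (hc : 0 ≤ c)
    (hcd : (fun N ↦ ∑ n ∈ Finset.range N, d n) =o[atTop] fun N ↦ ∑ n ∈ Finset.range N, c n)
    (hw0 : ∀ᶠ i in l, ∀ n ≥ m, 0 ≤ w i n) (hw : ∀ᶠ i in l, AntitoneOn (w i) (Ici m))
    (hlim : ∀ n, Tendsto (w · n) l (𝓝 0)) (hsumc : ∀ᶠ i in l, Summable fun n ↦ c n * w i n)
    (hsumd : ∀ᶠ i in l, Summable fun n ↦ d n * w i n) {L : ℝ}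
    (hL : Tendsto (fun i ↦ ∑' n, c n * w i n) l (𝓝 L)) :
    Tendsto (fun i ↦ ∑' n, d n * w i n) l (𝓝 0) := by
  have hlower (u : ℝ) (hu : |u| = 1) (ε : ℝ) (hε : 0 < ε) :
      ∀ᶠ i in l, -ε < ε * ∑' n, c n * w i n + u * ∑' n, d n * w i n := by
    have hpos : ∀ᶠ N in atTop, 0 ≤ ∑ n ∈ Finset.range N, (ε * c n + u * d n) := by
      filter_upwards [hcd.bound hε] with N hN
      rw [Real.norm_eq_abs, Real.norm_of_nonneg (Finset.sum_nonneg fun n _ ↦ hc n)] at hN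
      rw [Finset.sum_add_distrib, ← Finset.mul_sum, ← Finset.mul_sum]
      have := neg_abs_le (u * ∑ n ∈ Finset.range N, d n)
      rw [abs_mul, hu, one_mul] at this
      linarith
    have hsplit {i : ι} (hc : Summable fun n ↦ c n * w i n) (hd : Summable fun n ↦ d n * w i n) :
        HasSum (fun n ↦ (ε * c n + u * d n) * w i n)
          (ε * ∑' n, c n * w i n + u * ∑' n, d n * w i n) := by
      simpa only [add_mul, mul_assoc] using (hc.hasSum.mul_left ε).add (hd.hasSum.mul_left u)
    filter_upwards [eventually_lt_tsum_mul hpos hw0 hw hlim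
      (by filter_upwards [hsumc, hsumd] with i hc hd using (hsplit hc hd).summable)
      (neg_lt_zero.2 hε), hsumc, hsumd] with i hi hc hd
    rwa [(hsplit hc hd).tsum_eq] at hi
  refine Metric.tendsto_nhds.2 fun δ hδ ↦ ?_
  set ε := δ / (|L| + 2)
  have hε : ε * (|L| + 2) = δ := div_mul_cancel₀ _ (by positivity)
  have hε0 : 0 < ε := by positivity
  filter_upwards [hlower 1 (by simp) ε hε0, hlower (-1) (by simp) ε hε0,
    hL.eventually_lt_const ((le_abs_self L).trans_lt (lt_add_one _))] with i hpos hneg hi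
  have := mul_lt_mul_of_pos_left hi hε0
  rw [dist_zero_right, Real.norm_eq_abs, abs_lt]
  constructor <;> linarith

end PartialSummation

section PrimeSeries

open Asymptotics

lemma intervalIntegrable_log_div_rpow {x : ℝ} (hx : 0 < x) (s t : ℝ) :
    IntervalIntegrable (fun u ↦ Real.log x / x ^ u) volume s t :=
  ContinuousOn.intervalIntegrable fun u _ ↦ (continuousAt_const.div
    (Real.continuousAt_const_rpow hx.ne') (Real.rpow_pos_of_pos hx u).ne').continuousWithinAt

lemma integral_log_div_rpow {x : ℝ} (hx : 0 < x) (s t : ℝ) :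
    ∫ u in s..t, Real.log x / x ^ u = x ^ (-s) - x ^ (-t) := by
  have hderiv (u : ℝ) : HasDerivAt (fun u ↦ -x ^ (-u)) (Real.log x / x ^ u) u := by
    convert! ((hasDerivAt_neg u).const_rpow hx).neg using 1
    rw [Real.rpow_neg hx.le]
    ring
  rw [intervalIntegral.integral_eq_sub_of_hasDerivAt (fun u _ ↦ hderiv u)
    (intervalIntegrable_log_div_rpow hx s t)]
  ring

lemma antitoneOn_rpow_neg_sub_rpow_neg {s t : ℝ} (hs : 1 ≤ s) (hst : s ≤ t) :
    AntitoneOn (fun x : ℝ ↦ x ^ (-s) - x ^ (-t)) (Ici (Real.exp 1)) := by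
  intro x hx y hy hxy
  have hx0 : 0 < x := (Real.exp_pos 1).trans_le hx
  have hy0 : 0 < y := (Real.exp_pos 1).trans_le hy
  simp only [← integral_log_div_rpow hx0, ← integral_log_div_rpow hy0]
  refine intervalIntegral.integral_mono_on hst (intervalIntegrable_log_div_rpow hy0 s t)
    (intervalIntegrable_log_div_rpow hx0 s t) fun u hu ↦ ?_
  have hu1 : 1 ≤ u := hs.trans hu.1
  have hexp : Real.exp u⁻¹ ≤ Real.exp 1 := Real.exp_le_exp.2 (inv_le_one_of_one_le₀ hu1)
  exact Real.log_div_self_rpow_antitoneOn (by linarith) (hexp.trans hx) (hexp.trans hy) hxy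

lemma antitoneOn_natCast_rpow_neg_sub_rpow_neg {s t : ℝ} (hs : 1 ≤ s) (hst : s ≤ t) :
    AntitoneOn (fun n : ℕ ↦ (n : ℝ) ^ (-s) - (n : ℝ) ^ (-t)) (Ici 3) := by
  have hmem {n : ℕ} (hn : n ∈ Ici 3) : (n : ℝ) ∈ Ici (Real.exp 1) := by
    have : (3 : ℝ) ≤ n := by exact_mod_cast mem_Ici.1 hn
    exact mem_Ici.2 (by linarith [Real.exp_one_lt_d9])
  exact fun m hm n hn hmn ↦
    antitoneOn_rpow_neg_sub_rpow_neg hs hst (hmem hm) (hmem hn) (by exact_mod_cast hmn)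

lemma tendsto_one_add_mul {a : ℝ} (ha : 0 < a) :
    Tendsto (fun σ ↦ 1 + a * σ) (𝓝[>] 0) (𝓝[>] 1) := by
  refine tendsto_nhdsWithin_iff.2 ⟨?_, eventually_mem_nhdsWithin.mono fun σ hσ ↦ ?_⟩
  · exact ((by fun_prop : Continuous fun σ ↦ 1 + a * σ).tendsto' 0 1 (by ring)).mono_left
      nhdsWithin_le_nhds
  · exact lt_add_of_pos_right 1 (mul_pos ha hσ)

lemma tendsto_tsum_eulerRemainder {f : ℕ → ℝ} (hf : ∀ n, f n ∈ Icc 0 1) (hf1 : f 1 = 1) :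
    Tendsto (fun s ↦ ∑' n, eulerRemainder f s n) (𝓝[>] 1) (𝓝 (∑' n, eulerRemainder f 1 n)) :=
  (continuousWithinAt_tsum_eulerRemainder hf hf1).tendsto.mono_left
    (nhdsWithin_mono 1 Ioi_subset_Ici_self)

lemma tendsto_log_add_dirichletSeries_primePart_one :
    ∃ c, Tendsto (fun s ↦ Real.log (s - 1) + dirichletSeries (primePart 1) s) (𝓝[>] 1) (𝓝 c) := by
  set ζ : ArithmeticFunction ℝ := (ArithmeticFunction.zeta : ArithmeticFunction ℝ)
  have hζ : ζ.IsMultiplicative := ArithmeticFunction.isMultiplicative_zeta.natCast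
  have hζ_apply (n : ℕ) : ζ n = if n = 0 then 0 else 1 := by
    simp [ζ, ArithmeticFunction.zeta_apply]
  have hζ01 (n : ℕ) : ζ n ∈ Icc 0 1 := by
    rw [hζ_apply]
    split_ifs <;> simp
  have hprime : primePart ζ = primePart 1 :=
    indicator_congr fun p hp ↦ by simp [hζ_apply, Nat.Prime.ne_zero hp]
  refine ⟨_, ((tendsto_sub_mul_tsum_nat_rpow.log one_ne_zero).sub
    (tendsto_tsum_eulerRemainder hζ01 hζ.map_one)).congr' ?_⟩
  filter_upwards [self_mem_nhdsWithin] with s hs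
  have hseries : ∑' n : ℕ, 1 / (n : ℝ) ^ s = dirichletSeries ζ s := by
    refine tsum_congr fun n ↦ ?_
    rw [hζ_apply, Real.rpow_neg n.cast_nonneg]
    split_ifs with hn
    · simp [hn, Real.zero_rpow (zero_lt_one.trans hs).ne']
    · simp
  rw [hseries, dirichletSeries_eq_exp hζ hζ01 hs, Real.log_mul (sub_pos.2 hs).ne'
    (Real.exp_ne_zero _), Real.log_exp, hprime]
  ring

lemma tendsto_dirichletSeries_primePart_one_sub {a b : ℝ} (ha : 0 < a) (hb : 0 < b) :
    Tendsto (fun σ ↦ dirichletSeries (primePart 1) (1 + a * σ) -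
      dirichletSeries (primePart 1) (1 + b * σ)) (𝓝[>] 0) (𝓝 (Real.log (b / a))) := by
  obtain ⟨c, hc⟩ := tendsto_log_add_dirichletSeries_primePart_one
  have hlim := ((hc.comp (tendsto_one_add_mul ha)).sub
    (hc.comp (tendsto_one_add_mul hb))).add_const (Real.log (b / a))
  rw [sub_self, zero_add] at hlim
  refine hlim.congr' (eventually_mem_nhdsWithin.mono fun σ hσ ↦ ?_)
  have hσ0 : σ ≠ 0 := (mem_Ioi.1 hσ).ne'
  simp only [Function.comp_apply, add_sub_cancel_left, Real.log_mul ha.ne' hσ0,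
    Real.log_mul hb.ne' hσ0, Real.log_div hb.ne' ha.ne']
  ring

lemma hasSum_mul_rpow_neg_sub {c : ℕ → ℝ} {K : ℝ} (hc : ∀ n, |c n| ≤ K) {s t : ℝ} (hs : 1 < s)
    (ht : 1 < t) : HasSum (fun n : ℕ ↦ c n * ((n : ℝ) ^ (-s) - (n : ℝ) ^ (-t)))
      (dirichletSeries c s - dirichletSeries c t) := by
  simp only [mul_sub]
  exact (summable_mul_rpow_neg hc hs).hasSum.sub (summable_mul_rpow_neg hc ht).hasSum

lemma sum_range_succ_primePart (f : ℕ → ℝ) (N : ℕ) :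
    ∑ n ∈ Finset.range (N + 1), primePart f n = ∑ p ∈ Nat.primesLE N, f p := by
  rw [Nat.primesLE_eq_filter_range, Finset.sum_filter]
  simp [primePart, indicator_apply]

variable {f : ℕ → ℝ} {θ : ℝ}

lemma isLittleO_sum_primePart_sub (hθ : Tendsto (fun N ↦ (∑ p ∈ Nat.primesLE N, f p) /
      (Nat.primesLE N).card) atTop (𝓝 θ)) :
    (fun N ↦ ∑ n ∈ Finset.range N, (primePart f n - θ * primePart 1 n)) =o[atTop]
      fun N ↦ ∑ n ∈ Finset.range N, primePart 1 n := by
  have hpos : ∀ᶠ N in atTop, ((Nat.primesLE N).card : ℝ) ≠ 0 := by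
    filter_upwards [eventually_ge_atTop 2] with N hN
    exact_mod_cast (Finset.card_pos.2 ⟨2, Nat.mem_primesLE.2 ⟨hN, Nat.prime_two⟩⟩).ne'
  have hcard (N : ℕ) :
      ∑ n ∈ Finset.range (N + 1), primePart 1 n = ((Nat.primesLE N).card : ℝ) := by
    simp [sum_range_succ_primePart]
  refine isLittleO_of_tendsto' ?_ ((tendsto_add_atTop_iff_nat 1).1 ?_)
  · filter_upwards [(tendsto_sub_atTop_nat 1).eventually hpos, eventually_ge_atTop 1]
      with N hN h1 h0
    rw [← Nat.sub_add_cancel h1, hcard] at h0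
    exact absurd h0 hN
  · rw [← sub_self θ]
    refine (hθ.sub_const θ).congr' (hpos.mono fun N hN ↦ ?_)
    simp only [Finset.sum_sub_distrib, ← Finset.mul_sum, hcard, sum_range_succ_primePart]
    field_simp

lemma tendsto_rpow_neg_one_add_mul_sub {a b : ℝ} (ha : 0 < a) (hb : 0 < b) (n : ℕ) :
    Tendsto (fun σ ↦ (n : ℝ) ^ (-(1 + a * σ)) - (n : ℝ) ^ (-(1 + b * σ))) (𝓝[>] 0) (𝓝 0) := by
  have hlim {c : ℝ} (hc : 0 < c) : Tendsto (fun σ ↦ (n : ℝ) ^ (-(1 + c * σ))) (𝓝[>] 0)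
      (𝓝 ((n : ℝ) ^ (-1 : ℝ))) :=
    (Real.continuousAt_const_rpow' (by norm_num)).tendsto.comp
      ((tendsto_one_add_mul hc).mono_right nhdsWithin_le_nhds).neg
  simpa using (hlim ha).sub (hlim hb)

lemma tendsto_dirichletSeries_sub_of_isLittleO {c d : ℕ → ℝ} {K K' L : ℝ} (hc0 : 0 ≤ c)
    (hc : ∀ n, |c n| ≤ K) (hd : ∀ n, |d n| ≤ K')
    (hcd : (fun N ↦ ∑ n ∈ Finset.range N, d n) =o[atTop] fun N ↦ ∑ n ∈ Finset.range N, c n)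
    {a b : ℝ} (ha : 0 < a) (hab : a < b)
    (hL : Tendsto (fun σ ↦ dirichletSeries c (1 + a * σ) - dirichletSeries c (1 + b * σ)) (𝓝[>] 0)
      (𝓝 L)) :
    Tendsto (fun σ ↦ dirichletSeries d (1 + a * σ) - dirichletSeries d (1 + b * σ)) (𝓝[>] 0)
      (𝓝 0) := by
  have hb : 0 < b := ha.trans hab
  have hsum {g : ℕ → ℝ} {K : ℝ} (hg : ∀ n, |g n| ≤ K) : ∀ᶠ σ in 𝓝[>] 0,
      HasSum (fun n : ℕ ↦ g n * ((n : ℝ) ^ (-(1 + a * σ)) - (n : ℝ) ^ (-(1 + b * σ))))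
        (dirichletSeries g (1 + a * σ) - dirichletSeries g (1 + b * σ)) := by
    filter_upwards [(tendsto_one_add_mul ha).eventually_mem self_mem_nhdsWithin,
      (tendsto_one_add_mul hb).eventually_mem self_mem_nhdsWithin] with σ hs ht
    exact hasSum_mul_rpow_neg_sub hg hs ht
  have hanti : ∀ᶠ σ in 𝓝[>] 0, AntitoneOn
      (fun n : ℕ ↦ (n : ℝ) ^ (-(1 + a * σ)) - (n : ℝ) ^ (-(1 + b * σ))) (Ici 3) := by
    filter_upwards [self_mem_nhdsWithin] with σ hσ
    have hσ0 := mul_pos ha (mem_Ioi.1 hσ)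
    have hσab := mul_lt_mul_of_pos_right hab (mem_Ioi.1 hσ)
    exact antitoneOn_natCast_rpow_neg_sub_rpow_neg (by linarith) (by linarith)
  refine (tendsto_tsum_mul_of_isLittleO hc0 hcd ?_ hanti
    (tendsto_rpow_neg_one_add_mul_sub ha hb) ((hsum hc).mono fun _ h ↦ h.summable)
    ((hsum hd).mono fun _ h ↦ h.summable)
    (hL.congr' ((hsum hc).mono fun _ h ↦ h.tsum_eq.symm))).congr'
    ((hsum hd).mono fun _ h ↦ h.tsum_eq)
  filter_upwards [self_mem_nhdsWithin] with σ hσ n hn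
  exact sub_nonneg.2 (Real.rpow_le_rpow_of_exponent_le (by exact_mod_cast (by omega : 1 ≤ n))
    (by nlinarith [mem_Ioi.1 hσ]))

lemma tendsto_dirichletSeries_primePart_sub_of_lt (hf : ∀ n, f n ∈ Icc 0 1)
    (hθ : Tendsto (fun N ↦ (∑ p ∈ Nat.primesLE N, f p) / (Nat.primesLE N).card) atTop (𝓝 θ))
    {a b : ℝ} (ha : 0 < a) (hab : a < b) :
    Tendsto (fun σ ↦ dirichletSeries (primePart f) (1 + a * σ) -
      dirichletSeries (primePart f) (1 + b * σ)) (𝓝[>] 0) (𝓝 (θ * Real.log (b / a))) := by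
  have hb : 0 < b := ha.trans hab
  have habs {g : ℕ → ℝ} (hg : ∀ n, g n ∈ Icc 0 1) (n : ℕ) : |primePart g n| ≤ 1 :=
    abs_le_one_of_mem_Icc (primePart_mem_Icc hg) n
  have hone : ∀ n, (1 : ℕ → ℝ) n ∈ Icc 0 1 := by simp
  have hdiff (n : ℕ) : |primePart f n - θ * primePart 1 n| ≤ 1 + |θ| := by
    refine (abs_sub _ _).trans (add_le_add (habs hf n) ?_)
    rw [abs_mul]
    exact mul_le_of_le_one_right (abs_nonneg θ) (habs hone n)
  have hsplit {s : ℝ} (hs : 1 < s) : dirichletSeries (primePart f) s =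
      dirichletSeries (fun n ↦ primePart f n - θ * primePart 1 n) s +
        θ * dirichletSeries (primePart 1) s := by
    simp only [dirichletSeries, ← tsum_mul_left]
    rw [← (summable_mul_rpow_neg hdiff hs).tsum_add
      ((summable_mul_rpow_neg (habs hone) hs).mul_left θ)]
    exact tsum_congr fun n ↦ by ring
  have hlim := tendsto_dirichletSeries_primePart_one_sub ha hb
  rw [← zero_add (θ * _)]
  refine ((tendsto_dirichletSeries_sub_of_isLittleO (fun n ↦ (primePart_mem_Icc hone n).1)
    (habs hone) hdiff (isLittleO_sum_primePart_sub hθ) ha hab hlim).add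
    (hlim.const_mul θ)).congr' ?_
  filter_upwards [(tendsto_one_add_mul ha).eventually_mem self_mem_nhdsWithin,
    (tendsto_one_add_mul hb).eventually_mem self_mem_nhdsWithin] with σ hs ht
  rw [hsplit hs, hsplit ht]
  ring

lemma tendsto_dirichletSeries_primePart_sub (hf : ∀ n, f n ∈ Icc 0 1)
    (hθ : Tendsto (fun N ↦ (∑ p ∈ Nat.primesLE N, f p) / (Nat.primesLE N).card) atTop (𝓝 θ))
    {a b : ℝ} (ha : 0 < a) (hb : 0 < b) :
    Tendsto (fun σ ↦ dirichletSeries (primePart f) (1 + a * σ) -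
      dirichletSeries (primePart f) (1 + b * σ)) (𝓝[>] 0) (𝓝 (θ * Real.log (b / a))) := by
  rcases lt_trichotomy a b with hab | rfl | hab
  · exact tendsto_dirichletSeries_primePart_sub_of_lt hf hθ ha hab
  · simp [ha.ne']
  · have hswap := (tendsto_dirichletSeries_primePart_sub_of_lt hf hθ hb hab).neg
    rw [← mul_neg, ← Real.log_inv, inv_div] at hswap
    simpa using hswap

end PrimeSeries

section LogarithmicWeight

open ProbabilityTheory

/-- The measure on `ℕ` with mass `a n / n` at `n`. The moment generating function of `log` under
it is the Dirichlet series of `a`, shifted by `1`. -/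
noncomputable def logWeight (a : ℕ → ℝ) : Measure ℕ :=
  Measure.count.withDensity fun n ↦ ENNReal.ofReal (a n / n)

variable {a : ℕ → ℝ} {φ : ℕ → ℝ}

lemma integrable_logWeight_iff (ha : 0 ≤ a) :
    Integrable φ (logWeight a) ↔ Summable fun n ↦ a n / n * φ n := by
  have hweight (n : ℕ) : 0 ≤ a n / n := div_nonneg (ha n) n.cast_nonneg
  rw [logWeight, integrable_withDensity_iff_integrable_smul' (by fun_prop) (by simp),
    integrable_count_iff, summable_norm_iff]
  simp only [ENNReal.toReal_ofReal (hweight _), smul_eq_mul]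

lemma integral_logWeight (ha : 0 ≤ a) (hφ : Summable fun n ↦ a n / n * φ n) :
    ∫ n, φ n ∂logWeight a = ∑' n, a n / n * φ n := by
  have hweight (n : ℕ) : 0 ≤ a n / n := div_nonneg (ha n) n.cast_nonneg
  rw [logWeight, integral_withDensity_eq_integral_toReal_smul (by fun_prop) (by simp)]
  simp only [ENNReal.toReal_ofReal (hweight _), smul_eq_mul]
  rw [integral_countable (integrable_count_iff.2 hφ.norm)]
  simp

lemma div_natCast_mul_exp_neg_mul_log (a : ℕ → ℝ) (n : ℕ) {s : ℝ} (hs : 0 < s) :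
    a n / n * Real.exp (-s * Real.log n) = a n * (n : ℝ) ^ (-(1 + s)) := by
  rcases eq_or_ne n 0 with rfl | hn
  · rw [Nat.cast_zero, div_zero, zero_mul, Real.zero_rpow (by linarith), mul_zero]
  · have hn0 : (0 : ℝ) < n := by positivity
    rw [mul_comm (-s), ← Real.rpow_def_of_pos hn0, neg_add, Real.rpow_add hn0, Real.rpow_neg_one]
    ring

lemma integrable_exp_neg_mul_log (ha : 0 ≤ a) {K : ℝ} (haK : ∀ n, |a n| ≤ K) {s : ℝ} (hs : 0 < s) :
    Integrable (fun n : ℕ ↦ Real.exp (-s * Real.log n)) (logWeight a) := by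
  simp only [integrable_logWeight_iff ha, div_natCast_mul_exp_neg_mul_log a _ hs]
  exact summable_mul_rpow_neg haK (by linarith)

lemma mgf_log_logWeight (ha : 0 ≤ a) {K : ℝ} (haK : ∀ n, |a n| ≤ K) {s : ℝ} (hs : 0 < s) :
    mgf (fun n : ℕ ↦ Real.log n) (logWeight a) (-s) = dirichletSeries a (1 + s) := by
  rw [mgf, integral_logWeight ha ((integrable_logWeight_iff ha).1
    (integrable_exp_neg_mul_log ha haK hs))]
  exact tsum_congr fun n ↦ div_natCast_mul_exp_neg_mul_log a n hs

lemma measureReal_log_le_logWeight (ha : 0 ≤ a) {N : ℕ} (hN : N ≠ 0) :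
    (logWeight a).real {n : ℕ | Real.log n ≤ Real.log N} =
      ∑ n ∈ Finset.range (N + 1), a n / n := by
  have hset : {n : ℕ | Real.log n ≤ Real.log N} = Finset.range (N + 1) := by
    ext n
    rcases eq_or_ne n 0 with rfl | hn
    · simp [Real.log_natCast_nonneg]
    · simp [Real.log_le_log_iff (show (0 : ℝ) < n by positivity) (show (0 : ℝ) < N by positivity)]
  rw [hset, ← integral_indicator_one (Finset.measurableSet _), integral_logWeight ha]
  · rw [tsum_eq_sum (s := Finset.range (N + 1)) fun n hn ↦ by simp_all]
    exact Finset.sum_congr rfl fun n hn ↦ by simp_all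
  · exact summable_of_ne_finset_zero (s := Finset.range (N + 1)) fun n hn ↦ by simp_all

lemma tendsto_one_div_log : Tendsto (fun N : ℕ ↦ 1 / Real.log N) atTop (𝓝[>] 0) := by
  simp only [one_div]
  exact tendsto_inv_atTop_nhdsGT_zero.comp (Real.tendsto_log_atTop.comp tendsto_natCast_atTop_atTop)

variable {K θ : ℝ}

theorem tendsto_sum_div_dirichletSeries (hθ : 0 ≤ θ) (ha : 0 ≤ a) (haK : ∀ n, |a n| ≤ K)
    (hratio : ∀ c > 0, Tendsto (fun s ↦ dirichletSeries a (1 + c * s) / dirichletSeries a (1 + s))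
      (𝓝[>] 0) (𝓝 (c ^ (-θ)))) :
    Tendsto (fun N : ℕ ↦ (∑ n ∈ Finset.range (N + 1), a n / n) /
      dirichletSeries a (1 + 1 / Real.log N)) atTop (𝓝 (1 / Real.Gamma (θ + 1))) := by
  have hmgf : ∀ c > 0, Tendsto (fun s ↦ mgf (fun n : ℕ ↦ Real.log n) (logWeight a) (-(c * s)) /
      mgf (fun n : ℕ ↦ Real.log n) (logWeight a) (-s)) (𝓝[>] 0) (𝓝 (c ^ (-θ))) := fun c hc ↦
    (hratio c hc).congr' (eventually_mem_nhdsWithin.mono fun s hs ↦ by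
      simp only [mgf_log_logWeight ha haK (mul_pos hc hs), mgf_log_logWeight ha haK hs])
  have hlim := (tendsto_measureReal_div_mgf hθ (by fun_prop) (.of_forall Real.log_natCast_nonneg)
    (fun _ ↦ integrable_exp_neg_mul_log ha haK) hmgf).comp tendsto_one_div_log
  refine hlim.congr' ?_
  filter_upwards [eventually_ne_atTop 0, tendsto_one_div_log.eventually_mem self_mem_nhdsWithin]
    with N hN hlog
  rw [Function.comp_apply, one_div_one_div, mgf_log_logWeight ha haK hlog,
    measureReal_log_le_logWeight ha hN]

theorem tendsto_sum_sub_dirichletSeries (hθ : 0 ≤ θ) (ha : 0 ≤ a) (haK : ∀ n, |a n| ≤ K)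
    (hdiff : ∀ b > 0, ∀ c > 0, Tendsto (fun s ↦ dirichletSeries a (1 + b * s) -
      dirichletSeries a (1 + c * s)) (𝓝[>] 0) (𝓝 (θ * Real.log (c / b)))) :
    Tendsto (fun N : ℕ ↦ ∑ n ∈ Finset.range (N + 1), a n / n -
      dirichletSeries a (1 + 1 / Real.log N)) atTop (𝓝 (θ * Real.eulerMascheroniConstant)) := by
  have hmgf : ∀ b > 0, ∀ c > 0, Tendsto (fun s ↦ mgf (fun n : ℕ ↦ Real.log n) (logWeight a)
      (-(b * s)) - mgf (fun n : ℕ ↦ Real.log n) (logWeight a) (-(c * s))) (𝓝[>] 0)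
        (𝓝 (θ * Real.log (c / b))) := fun b hb c hc ↦
    (hdiff b hb c hc).congr' (eventually_mem_nhdsWithin.mono fun s hs ↦ by
      simp only [mgf_log_logWeight ha haK (mul_pos hb hs),
        mgf_log_logWeight ha haK (mul_pos hc hs)])
  have hlim := (tendsto_measureReal_sub_mgf hθ (by fun_prop) (.of_forall Real.log_natCast_nonneg)
    (fun _ ↦ integrable_exp_neg_mul_log ha haK) hmgf).comp tendsto_one_div_log
  refine hlim.congr' ?_
  filter_upwards [eventually_ne_atTop 0, tendsto_one_div_log.eventually_mem self_mem_nhdsWithin]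
    with N hN hlog
  rw [Function.comp_apply, one_div_one_div, mgf_log_logWeight ha haK hlog,
    measureReal_log_le_logWeight ha hN]

end LogarithmicWeight

section MertensQuotient

variable {f : ArithmeticFunction ℝ} {θ : ℝ}

lemma nonneg_of_tendsto_sum_primesLE {f : ℕ → ℝ} (hf : ∀ n, f n ∈ Icc 0 1)
    (hθ : Tendsto (fun N ↦ (∑ p ∈ Nat.primesLE N, f p) / (Nat.primesLE N).card) atTop (𝓝 θ)) :
    0 ≤ θ :=
  ge_of_tendsto' hθ fun _ ↦ div_nonneg (Finset.sum_nonneg fun p _ ↦ (hf p).1) (Nat.cast_nonneg _)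

theorem tendsto_sum_primesLE_sub_dirichletSeries {f : ℕ → ℝ} (hf : ∀ n, f n ∈ Icc 0 1)
    (hθ : Tendsto (fun N ↦ (∑ p ∈ Nat.primesLE N, f p) / (Nat.primesLE N).card) atTop (𝓝 θ)) :
    Tendsto (fun N : ℕ ↦ ∑ n ∈ Finset.range (N + 1), primePart f n / n -
      dirichletSeries (primePart f) (1 + 1 / Real.log N)) atTop
        (𝓝 (θ * Real.eulerMascheroniConstant)) :=
  tendsto_sum_sub_dirichletSeries (nonneg_of_tendsto_sum_primesLE hf hθ)
    (fun n ↦ (primePart_mem_Icc hf n).1) (abs_le_one_of_mem_Icc (primePart_mem_Icc hf))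
    fun _ hb _ hc ↦ tendsto_dirichletSeries_primePart_sub hf hθ hb hc

theorem tendsto_sum_div_dirichletSeries_of_isMultiplicative (hf : f.IsMultiplicative)
    (hf01 : ∀ n, f n ∈ Icc 0 1)
    (hθ : Tendsto (fun N ↦ (∑ p ∈ Nat.primesLE N, f p) / (Nat.primesLE N).card) atTop (𝓝 θ)) :
    Tendsto (fun N : ℕ ↦ (∑ n ∈ Finset.range (N + 1), f n / n) /
      dirichletSeries f (1 + 1 / Real.log N)) atTop (𝓝 (1 / Real.Gamma (θ + 1))) := by
  refine tendsto_sum_div_dirichletSeries (nonneg_of_tendsto_sum_primesLE hf01 hθ)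
    (fun n ↦ (hf01 n).1) (abs_le_one_of_mem_Icc hf01) fun c hc ↦ ?_
  have hrem {b : ℝ} (hb : 0 < b) := (tendsto_tsum_eulerRemainder hf01 hf.map_one).comp
    (tendsto_one_add_mul hb)
  have hlim := ((tendsto_dirichletSeries_primePart_sub hf01 hθ hc one_pos).add
    ((hrem hc).sub (hrem one_pos))).rexp
  have hvalue : Real.exp (θ * Real.log (1 / c) + (∑' n, eulerRemainder f 1 n -
      ∑' n, eulerRemainder f 1 n)) = c ^ (-θ) := by
    rw [sub_self, add_zero, one_div, Real.log_inv, Real.rpow_def_of_pos hc]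
    ring_nf
  rw [hvalue] at hlim
  refine hlim.congr' ?_
  filter_upwards [(tendsto_one_add_mul hc).eventually_mem self_mem_nhdsWithin,
    (tendsto_one_add_mul one_pos).eventually_mem self_mem_nhdsWithin] with s hs hs1
  rw [one_mul] at hs1
  simp only [dirichletSeries_eq_exp hf hf01 hs, dirichletSeries_eq_exp hf hf01 hs1, one_mul,
    ← Real.exp_sub, Function.comp_apply]
  ring_nf

theorem tendsto_tsum_smoothNumbers_div_dirichletSeries (hf : f.IsMultiplicative)
    (hf01 : ∀ n, f n ∈ Icc 0 1)
    (hθ : Tendsto (fun N ↦ (∑ p ∈ Nat.primesLE N, f p) / (Nat.primesLE N).card) atTop (𝓝 θ)) :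
    Tendsto (fun N : ℕ ↦ (∑' n : Nat.smoothNumbers (N + 1), f n / (n : ℕ)) /
      dirichletSeries f (1 + 1 / Real.log N)) atTop
        (𝓝 (Real.exp (Real.eulerMascheroniConstant * θ))) := by
  have hlog : Tendsto (fun N : ℕ ↦ 1 + 1 / Real.log N) atTop (𝓝[>] 1) := by
    simpa only [one_mul, Function.comp_def] using
      (tendsto_one_add_mul one_pos).comp tendsto_one_div_log
  have hpartial := (tendsto_add_atTop_iff_nat 1).2
    (summable_eulerRemainder hf01 hf.map_one le_rfl).hasSum.tendsto_sum_nat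
  have hlim := ((tendsto_sum_primesLE_sub_dirichletSeries hf01 hθ).add
    (hpartial.sub ((tendsto_tsum_eulerRemainder hf01 hf.map_one).comp hlog))).rexp
  rw [sub_self, add_zero, mul_comm] at hlim
  refine hlim.congr' ?_
  filter_upwards [hlog.eventually_mem self_mem_nhdsWithin] with N hN
  rw [tsum_smoothNumbers_eq_exp hf hf01, dirichletSeries_eq_exp hf hf01 hN, ← Real.exp_sub,
    Function.comp_apply]
  ring_nf

theorem generalized_mertens_ii_general (hf : f.IsMultiplicative) (hf01 : ∀ n, f n ∈ Icc 0 1)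
    (hθ : Tendsto (fun N ↦ (∑ p ∈ Nat.primesLE N, f p) / (Nat.primesLE N).card) atTop (𝓝 θ)) :
    Tendsto (fun N : ℕ ↦ (∑' n : Nat.smoothNumbers (N + 1), f n / (n : ℕ)) /
      ∑ n ∈ Finset.Icc 1 N, f n / n) atTop
        (𝓝 (Real.exp (Real.eulerMascheroniConstant * θ) * Real.Gamma (θ + 1))) := by
  have hΓ : 1 / Real.Gamma (θ + 1) ≠ 0 := one_div_ne_zero
    (Real.Gamma_pos_of_pos (by linarith [nonneg_of_tendsto_sum_primesLE hf01 hθ])).ne'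
  have hlim := (tendsto_tsum_smoothNumbers_div_dirichletSeries hf hf01 hθ).div
    (tendsto_sum_div_dirichletSeries_of_isMultiplicative hf hf01 hθ) hΓ
  rw [div_div_eq_mul_div, div_one] at hlim
  refine hlim.congr' ?_
  filter_upwards [tendsto_one_div_log.eventually_mem self_mem_nhdsWithin] with N hN
  have hF : dirichletSeries f (1 + 1 / Real.log N) ≠ 0 := by
    rw [dirichletSeries_eq_exp hf hf01 (lt_add_of_pos_right 1 hN)]
    exact Real.exp_ne_zero _
  have hsum : ∑ n ∈ Finset.range (N + 1), f n / n = ∑ n ∈ Finset.Icc 1 N, f n / n := by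
    rw [Finset.range_eq_Ico, Finset.sum_eq_sum_Ico_succ_bot (Nat.succ_pos N), f.map_zero, zero_div,
      zero_add, zero_add, Nat.succ_eq_add_one, Finset.Ico_add_one_right_eq_Icc]
  rw [Pi.div_apply, div_div_div_cancel_right₀ hF, hsum]

end MertensQuotient

section KFree

variable {k : ℕ} {A : Set ℕ}

lemma kfree_mul_iff {m n : ℕ} (hmn : m.Coprime n) : KFree k (m * n) ↔ KFree k m ∧ KFree k n := by
  refine ⟨fun h ↦ ⟨fun p hp hd ↦ h p hp (hd.mul_right _), fun p hp hd ↦ h p hp (hd.mul_left _)⟩,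
    fun ⟨hm, hn⟩ p hp hd ↦ ?_⟩
  have hk : k ≠ 0 := by
    rintro rfl
    exact hm p hp (by simp)
  exact ((Nat.Coprime.isPrimePow_dvd_mul hmn (hp.prime.isPrimePow.pow hk)).1 hd).elim
    (hm p hp) (hn p hp)

/-- The indicator function of the positive `k`-free integers whose prime factors all lie in `A`. -/
noncomputable def kfreeIndicator (k : ℕ) (A : Set ℕ) : ArithmeticFunction ℝ where
  toFun n := if 0 < n ∧ (∀ p : ℕ, p.Prime → p ∣ n → p ∈ A) ∧ KFree k n then 1 else 0
  map_zero' := by simp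

lemma kfreeIndicator_apply (n : ℕ) : kfreeIndicator k A n =
    if 0 < n ∧ (∀ p : ℕ, p.Prime → p ∣ n → p ∈ A) ∧ KFree k n then 1 else 0 :=
  rfl

lemma kfreeIndicator_mem_Icc (n : ℕ) : kfreeIndicator k A n ∈ Icc 0 1 := by
  rw [kfreeIndicator_apply]
  split_ifs <;> simp

lemma isMultiplicative_kfreeIndicator (hk : k ≠ 0) : (kfreeIndicator k A).IsMultiplicative := by
  constructor
  · rw [kfreeIndicator_apply, if_pos]
    refine ⟨one_pos, fun p hp hd ↦ absurd hd hp.not_dvd_one, fun p hp hd ↦ ?_⟩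
    exact hp.not_dvd_one ((dvd_pow_self p hk).trans hd)
  · intro m n hmn
    have hfactors : (∀ p : ℕ, p.Prime → p ∣ m * n → p ∈ A) ↔
        (∀ p : ℕ, p.Prime → p ∣ m → p ∈ A) ∧ ∀ p : ℕ, p.Prime → p ∣ n → p ∈ A := by
      refine ⟨fun h ↦ ⟨fun p hp hd ↦ h p hp (hd.mul_right _), fun p hp hd ↦ h p hp (hd.mul_left _)⟩,
        fun h p hp hd ↦ ?_⟩
      exact (hp.dvd_mul.1 hd).elim (h.1 p hp) (h.2 p hp)
    simp only [kfreeIndicator_apply, kfree_mul_iff hmn, hfactors, CanonicallyOrderedAdd.mul_pos,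
      ite_zero_mul_ite_zero, mul_one]
    congr 1
    rw [eq_iff_iff]
    tauto

lemma kfreeIndicator_prime (hk : 2 ≤ k) {p : ℕ} (hp : p.Prime) :
    kfreeIndicator k A p = if p ∈ A then 1 else 0 := by
  have hfree : KFree k p := fun q hq hd ↦ by
    obtain rfl := (Nat.prime_dvd_prime_iff_eq hq hp).1 ((dvd_pow_self q (by omega)).trans hd)
    have := (Nat.pow_dvd_pow_iff_le_right hq.one_lt).1 (hd.trans (pow_one q).symm.dvd)
    omega
  have hfactors : (∀ q : ℕ, q.Prime → q ∣ p → q ∈ A) ↔ p ∈ A :=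
    ⟨fun h ↦ h p hp dvd_rfl, fun h q hq hd ↦ (Nat.prime_dvd_prime_iff_eq hq hp).1 hd ▸ h⟩
  simp only [kfreeIndicator_apply, hp.pos, hfactors, hfree, true_and, and_true]

lemma kfreeHarmSum_eq_tsum_smoothNumbers (N : ℕ) :
    kfreeHarmSum k (fun p ↦ p ≤ N ∧ p ∈ A) =
      ∑' n : Nat.smoothNumbers (N + 1), kfreeIndicator k A n / (n : ℕ) := by
  rw [tsum_subtype (Nat.smoothNumbers (N + 1)) fun n ↦ kfreeIndicator k A n / (n : ℕ)]
  refine (tsum_subtype {n : ℕ | 0 < n ∧ (∀ p : ℕ, p.Prime → p ∣ n → p ≤ N ∧ p ∈ A) ∧ KFree k n}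
    fun n ↦ 1 / (n : ℝ)).trans (tsum_congr fun n ↦ ?_)
  simp only [indicator_apply, kfreeIndicator_apply, Nat.mem_smoothNumbers', mem_ofPred_eq,
    ite_div, zero_div, Nat.lt_succ_iff, forall_and]
  split_ifs <;> simp_all

lemma sum_Icc_kfreeIndicator_div (N : ℕ) :
    ∑ n ∈ Finset.Icc 1 N, kfreeIndicator k A n / n = ∑ n ∈ Finset.Icc 1 N,
      if (∀ p : ℕ, p.Prime → p ∣ n → p ∈ A) ∧ KFree k n then 1 / (n : ℝ) else 0 := by
  refine Finset.sum_congr rfl fun n hn ↦ ?_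
  have hn0 : 0 < n := (Finset.mem_Icc.1 hn).1
  simp only [kfreeIndicator_apply, hn0, true_and, ite_div, zero_div]

lemma tendsto_sum_primesLE_kfreeIndicator {θ : ℝ} (hk : 2 ≤ k) (hA : ∀ p ∈ A, p.Prime)
    (hdens : Tendsto (fun N : ℕ ↦ ((A ∩ Icc 1 N).ncard : ℝ) / ({p | p.Prime} ∩ Icc 1 N).ncard)
      atTop (𝓝 θ)) :
    Tendsto (fun N ↦ (∑ p ∈ Nat.primesLE N, kfreeIndicator k A p) / (Nat.primesLE N).card)
      atTop (𝓝 θ) := by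
  refine hdens.congr fun N ↦ ?_
  have hprimes : {p | p.Prime} ∩ Icc 1 N = (Nat.primesLE N : Set ℕ) := by
    ext p
    simp [Nat.primesLE_eq_filter_Icc_one, and_comm]
  have hcount : A ∩ Icc 1 N = ((Nat.primesLE N).filter (· ∈ A) : Set ℕ) := by
    rw [Finset.coe_filter]
    ext p
    have hAp := hA p
    simp only [mem_inter_iff, Nat.primesLE_eq_filter_Icc_one, Finset.mem_filter, mem_ofPred_eq,
      Finset.mem_Icc, mem_Icc]
    tauto
  have hsum : ∑ p ∈ Nat.primesLE N, kfreeIndicator k A p =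
      ((Nat.primesLE N).filter (· ∈ A)).card := by
    rw [Finset.card_filter, Nat.cast_sum]
    refine Finset.sum_congr rfl fun p hp ↦ ?_
    rw [kfreeIndicator_prime hk (Nat.prime_of_mem_primesLE hp), Nat.cast_ite]
    norm_cast
  rw [hprimes, hcount, Set.ncard_coe_finset, Set.ncard_coe_finset, hsum]

end KFree

end

/-- **Generalized Mertens formula (Theorem 1, part (ii)).**
If `k ≥ 2` and `A` is a set of primes with natural density `θ ∈ (0,1]` within the primes,
then the ratio of the harmonic sum over `k`-free integers whose prime factors are `≤ N` and
lie in `A` to the harmonic sum over `k`-free integers `n ≤ N` whose prime factors lie in `A`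
tends to `e^{γθ} Γ(θ+1)`. -/
theorem generalized_mertens_ii
    (k : ℕ) (hk : 2 ≤ k)
    (A : Set ℕ) (hA : ∀ p ∈ A, Nat.Prime p)
    (θ : ℝ) (hθ : θ ∈ Set.Ioc (0 : ℝ) 1)
    (hdens : Tendsto
      (fun N : ℕ => ((A ∩ Set.Icc 1 N).ncard : ℝ) / (({p : ℕ | Nat.Prime p} ∩ Set.Icc 1 N).ncard : ℝ))
      atTop (nhds θ)) :
    Tendsto
      (fun N : ℕ =>
        kfreeHarmSum k (fun p => p ≤ N ∧ p ∈ A) /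
        ∑ n ∈ Finset.Icc 1 N,
          if (∀ p : ℕ, p.Prime → p ∣ n → p ∈ A) ∧ KFree k n then (1 : ℝ) / (n : ℝ) else 0)
      atTop
      (nhds (Real.exp (Real.eulerMascheroniConstant * θ) * Real.Gamma (θ + 1))) := by
  simpa only [kfreeHarmSum_eq_tsum_smoothNumbers, sum_Icc_kfreeIndicator_div] using
    generalized_mertens_ii_general (isMultiplicative_kfreeIndicator (by omega))
      kfreeIndicator_mem_Icc (tendsto_sum_primesLE_kfreeIndicator hk hA hdens)
end
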